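/- arXiv:1805.00340 — 7 statements merged into one kernel-verified Lean document; each statement's English description precedes it below -/
import Mathlib

section
/- For every integer r ≥ 3, every 3-valid pair (𝒜, ℬ) with |ℬ| = b ≥ 1 and |𝒜| = a satisfies a ≤ b·(−3 + √(8b+1))/6. -/
/-- A pair `(𝒜, ℬ)` of families, where `𝒜` consists of `r`-element subsets of `ℕ` and
`ℬ` of `(r-1)`-element subsets of `ℕ`, is `k`-valid if every `A ∈ 𝒜` has at least `k`
subsets of cardinality `r - 1` belonging to `ℬ`. -/
def ValidPair (r k : ℕ) (𝒜 ℬ : Finset (Finset ℕ)) : Prop :=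
  (∀ A ∈ 𝒜, A.card = r) ∧ (∀ B ∈ ℬ, B.card = r - 1) ∧
    ∀ A ∈ 𝒜, k ≤ (ℬ.filter (fun B => B ⊆ A)).card

/-- `f r k b` is the maximum of `|𝒜|` over all `k`-valid pairs `(𝒜, ℬ)` with `|ℬ| = b`. -/
noncomputable def f (r k b : ℕ) : ℕ :=
  sSup {a : ℕ | ∃ 𝒜 ℬ : Finset (Finset ℕ), ValidPair r k 𝒜 ℬ ∧ ℬ.card = b ∧ 𝒜.card = a}

lemma aux_insert {r : ℕ} (hr : 3 ≤ r) {A B : Finset ℕ} (hA : A.card = r) (hB : B.card = r - 1)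
    (h : B ⊆ A) : ∃ w, w ∉ B ∧ w ∈ A ∧ A = insert w B ∧ B = A.erase w := by
  have h1 : (A \ B).card = 1 := by
    rw [Finset.card_sdiff_of_subset h]; omega
  obtain ⟨w, hw⟩ := Finset.card_eq_one.1 h1
  have hw' : w ∈ A \ B := by rw [hw]; simp
  rw [Finset.mem_sdiff] at hw'
  have key : ∀ z, z ∈ A → z ∉ B → z = w := by
    intro z hz hz'
    have : z ∈ A \ B := Finset.mem_sdiff.2 ⟨hz, hz'⟩
    rw [hw] at this; simpa using this
  refine ⟨w, hw'.2, hw'.1, ?_, ?_⟩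
  · ext z
    have := key z
    have := @h z
    simp only [Finset.mem_insert]
    grind
  · ext z
    have := key z
    have := @h z
    simp only [Finset.mem_erase]
    grind

/-- Existence and structure of the endpoint of a two-step path. -/
lemma aux_step {r : ℕ} (hr : 3 ≤ r) {A A' B B1 : Finset ℕ} {S : Finset (Finset ℕ)}
    (hA : A.card = r) (hA' : A'.card = r) (hB : B.card = r - 1) (hB1 : B1.card = r - 1)
    (hBA : B ⊆ A) (hB1A : B1 ⊆ A) (hne : B1 ≠ B) (hB1A' : B1 ⊆ A') (hAA : A ≠ A')
    (hS : S.card = 3) (hSs : ∀ X ∈ S, X.card = r - 1 ∧ X ⊆ A') :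
    ∃ B' ∈ S, (B' \ B).card = 2 ∧ ∃ w ∈ B' \ B, ∃ y ∈ B \ B',
      A = insert w B ∧ B1 = (insert w B).erase y ∧ A' = (insert w B).erase y ∪ B' := by
  obtain ⟨w, hwB, hwA, hAw, hBw⟩ := aux_insert hr hA hB hBA
  obtain ⟨y, hyB, hyA, hAy, hBy⟩ := aux_insert hr hA hB1 hB1A
  obtain ⟨w', hwB', hwA', hAw', hBw'⟩ := aux_insert hr hA' hB1 hB1A'
  have hE : 0 < ((S.erase B1).erase (A'.erase w)).card := by
    have h1 := Finset.pred_card_le_card_erase (s := S) (a := B1)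
    have h2 := Finset.pred_card_le_card_erase (s := S.erase B1) (a := A'.erase w)
    omega
  obtain ⟨B', hB'⟩ := Finset.card_pos.1 hE
  simp only [Finset.mem_erase] at hB'
  obtain ⟨hB'1, hB'2, hB'S⟩ := hB'
  obtain ⟨hc, hs⟩ := hSs B' hB'S
  obtain ⟨y', hyB', hyA', hAy', hBy'⟩ := aux_insert hr hA' hc hs
  have n1 : y ≠ w := by rintro rfl; exact hne (hBy.trans hBw.symm)
  have n2 : w' ≠ y := by rintro rfl; exact hAA (hAy.trans hAw'.symm)
  have n3 : y' ≠ w' := by rintro rfl; exact hB'2 (hBy'.trans hBw'.symm)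
  have n4 : y' ≠ w := by rintro rfl; exact hB'1 hBy'
  have hyB0 : y ∈ B := by rw [hBw]; simp [n1, hyA]
  have hw'A : w' ∉ A := by rw [hAy]; simp [n2, hwB']
  have hw'B : w' ∉ B := fun h => hw'A (hBA h)
  have hwB1 : w ∈ B1 := by rw [hBy]; simp [n1.symm, hwA]
  have hwB'' : w ∈ B' := by rw [hBy']; simp [n4.symm, hB1A' hwB1]
  have hw'B'' : w' ∈ B' := by rw [hBy']; simp [n3.symm, hwA']
  have hyA2 : y ∉ A' := by rw [hAw']; simp [n2.symm, hyB]
  refine ⟨B', hB'S, ?_, w, by simp [hwB'', hwB], y, ?_, hAw, ?_, ?_⟩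
  · have : B' \ B = {w, w'} := by
      ext z
      have m1 : z ∈ A' ↔ z = w' ∨ z ∈ B1 := by
        conv_lhs => rw [hAw']
        simp
      have m2 : z ∈ A ↔ z = w ∨ z ∈ B := by
        conv_lhs => rw [hAw]
        simp
      have m3 := @hs z
      have m4 := @hB1A z
      simp only [Finset.mem_sdiff, Finset.mem_insert, Finset.mem_singleton]
      grind
    rw [this, Finset.card_pair]
    rintro rfl; exact hw'A hwA
  · simp only [Finset.mem_sdiff]; exact ⟨hyB0, fun h => hyA2 (hs h)⟩
  · rw [← hAw]; exact hBy
  · rw [← hAw, ← hBy]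
    apply Finset.Subset.antisymm
    · rw [hAw']
      intro z hz
      simp only [Finset.mem_insert] at hz
      rcases hz with rfl | hz
      · exact Finset.mem_union_right _ hw'B''
      · exact Finset.mem_union_left _ hz
    · exact Finset.union_subset hB1A' hs

lemma aux_main (r : ℕ) (hr : 3 ≤ r) (𝒜 ℬ : Finset (Finset ℕ)) (T : Finset ℕ → Finset (Finset ℕ))
    (hA : ∀ A ∈ 𝒜, A.card = r) (hB : ∀ B ∈ ℬ, B.card = r - 1)
    (hT : ∀ A ∈ 𝒜, (T A).card = 3) (hTB : ∀ A ∈ 𝒜, T A ⊆ ℬ)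
    (hTs : ∀ A ∈ 𝒜, ∀ B ∈ T A, B ⊆ A) :
    2 * ℬ.card ^ 2 + 9 * 𝒜.card * ℬ.card + 9 * 𝒜.card ^ 2 ≤ 2 * ℬ.card ^ 3 ∨ ℬ.card = 0 := by
  classical
  let D : Finset ℕ → Finset (Finset ℕ) := fun B => 𝒜.filter (fun A => B ∈ T A)
  let Q : Finset (Finset ℕ × Finset ℕ × Finset ℕ) :=
    (ℬ ×ˢ 𝒜 ×ˢ 𝒜).filter (fun q => q.1 ∈ T q.2.1 ∧ q.1 ∈ T q.2.2 ∧ q.2.1 ≠ q.2.2)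
  let P : Finset ℕ → Finset (Finset ℕ × Finset ℕ × Finset ℕ) :=
    fun B => Q.filter (fun q => B ∈ T q.2.1 ∧ B ≠ q.1)
  -- total degree
  have hsumd : ∑ B ∈ ℬ, (D B).card = 3 * 𝒜.card := by
    have := Finset.sum_card_bipartiteAbove_eq_sum_card_bipartiteBelow
      (s := ℬ) (t := 𝒜) (fun B A => B ∈ T A)
    simp only [Finset.bipartiteAbove, Finset.bipartiteBelow] at this
    rw [this, mul_comm, Finset.sum_const_nat]
    intro A hA1
    rw [← hT A hA1]
    congr 1
    ext B
    simp only [Finset.mem_filter]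
    exact ⟨fun h => h.2, fun h => ⟨hTB A hA1 h, h⟩⟩
  have hsumP : ∑ B ∈ ℬ, (P B).card = 2 * Q.card := by
    have := Finset.sum_card_bipartiteAbove_eq_sum_card_bipartiteBelow
      (s := ℬ) (t := Q) (fun B q => B ∈ T q.2.1 ∧ B ≠ q.1)
    simp only [Finset.bipartiteAbove, Finset.bipartiteBelow] at this
    rw [this, mul_comm, Finset.sum_const_nat]
    rintro ⟨B1, A, A'⟩ hq
    simp only [Q, Finset.mem_filter, Finset.mem_product] at hq
    obtain ⟨⟨h1, h2, h3⟩, h4, h5, h6⟩ := hq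
    have : (Finset.filter (fun B => B ∈ T A ∧ B ≠ B1) ℬ) = (T A).erase B1 := by
      ext B
      simp only [Finset.mem_filter, Finset.mem_erase]
      exact ⟨fun h => ⟨h.2.2, h.2.1⟩, fun h => ⟨hTB A h2 h.2, h.2, h.1⟩⟩
    simp only [this]
    rw [Finset.card_erase_of_mem h4, hT A h2]
  have hQ : Q.card + ∑ B ∈ ℬ, (D B).card = ∑ B ∈ ℬ, (D B).card ^ 2 := by
    have h1 : Q.card = ∑ B ∈ ℬ, (D B).offDiag.card := by
      rw [← Finset.card_sigma]
      apply Finset.card_bij (fun q _ => (⟨q.1, q.2⟩ : (_ : Finset ℕ) × (Finset ℕ × Finset ℕ)))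
      · rintro ⟨B1, A, A'⟩ hq
        simp only [Q, Finset.mem_filter, Finset.mem_product] at hq
        simp only [D, Finset.mem_sigma, Finset.mem_offDiag, Finset.mem_filter]
        tauto
      · rintro ⟨B1, A, A'⟩ hq ⟨B2, A2, A2'⟩ hq' h
        simpa using h
      · rintro ⟨B1, A, A'⟩ hq
        simp only [D, Finset.mem_sigma, Finset.mem_offDiag, Finset.mem_filter] at hq
        refine ⟨(B1, A, A'), ?_, rfl⟩
        simp only [Q, Finset.mem_filter, Finset.mem_product]
        tauto
    rw [h1, ← Finset.sum_add_distrib]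
    apply Finset.sum_congr rfl
    intro B _
    rw [Finset.offDiag_card]
    have : (D B).card ≤ (D B).card * (D B).card := Nat.le_mul_self _
    rw [pow_two]; omega
  -- the local inequality
  have hloc : ∀ B ∈ ℬ, 4 + 8 * (D B).card + (P B).card ≤ 4 * ℬ.card := by
    intro B hBB
    let N1 := (D B).biUnion (fun A => (T A).erase B)
    let N2 := ℬ.filter (fun B' => (B' \ B).card = 2)
    have hN1 : N1.card = 2 * (D B).card := by
      rw [Finset.card_biUnion, mul_comm, Finset.sum_const_nat]
      · intro A hAD
        simp only [D, Finset.mem_filter] at hAD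
        rw [Finset.card_erase_of_mem hAD.2, hT A hAD.1]
      · intro A hAD A' hAD' hne
        simp only [D, Finset.mem_filter, Finset.mem_coe] at hAD hAD'
        change Disjoint _ _
        rw [Finset.disjoint_left]
        intro X hX hX'
        simp only [Finset.mem_erase] at hX hX'
        obtain ⟨w, hw1, hw2, hw3, hw4⟩ := aux_insert hr (hA A hAD.1) (hB B hBB) (hTs A hAD.1 B hAD.2)
        obtain ⟨v, hv1, hv2, hv3, hv4⟩ :=
          aux_insert hr (hA A' hAD'.1) (hB B hBB) (hTs A' hAD'.1 B hAD'.2)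
        have hXs := hTs A hAD.1 X hX.2
        have hXs' := hTs A' hAD'.1 X hX'.2
        have hwv : w ≠ v := by rintro rfl; exact hne (hw3.trans hv3.symm)
        have hXB : X ⊆ B := by
          intro z hz
          have m1 := hXs hz
          have m2 := hXs' hz
          rw [hw3] at m1
          rw [hv3] at m2
          simp only [Finset.mem_insert] at m1 m2
          grind
        exact hX.1 (Finset.eq_of_subset_of_card_le hXB
          (by rw [hB B hBB, hB X (hTB A hAD.1 hX.2)]))
    have hN1c : ∀ X ∈ N1, X ∈ ℬ ∧ X ≠ B ∧ (X \ B).card ≤ 1 := by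
      intro X hX
      simp only [N1, D, Finset.mem_biUnion, Finset.mem_filter, Finset.mem_erase] at hX
      obtain ⟨A, ⟨hA1, hA2⟩, hX1, hX2⟩ := hX
      refine ⟨hTB A hA1 hX2, hX1, ?_⟩
      have : X \ B ⊆ A \ B := Finset.sdiff_subset_sdiff (hTs A hA1 X hX2) (le_refl _)
      refine (Finset.card_le_card this).trans ?_
      rw [Finset.card_sdiff_of_subset (hTs A hA1 B hA2), hA A hA1, hB B hBB]
      omega
    have hN2 : (P B).card ≤ 4 * N2.card := by
      have hex : ∀ q ∈ P B, ∃ B' ∈ N2, ∃ w ∈ B' \ B, ∃ y ∈ B \ B',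
          q.2.1 = insert w B ∧ q.1 = (insert w B).erase y ∧
            q.2.2 = (insert w B).erase y ∪ B' := by
        rintro ⟨B1, A, A'⟩ hq
        simp only [P, Q, Finset.mem_filter, Finset.mem_product] at hq
        obtain ⟨⟨⟨h1, h2, h3⟩, h4, h5, h6⟩, h7, h8⟩ := hq
        obtain ⟨B', hB'S, hc, hrest⟩ := aux_step hr (hA A h2) (hA A' h3) (hB B hBB) (hB B1 h1)
          (hTs A h2 B h7) (hTs A h2 B1 h4) h8.symm (hTs A' h3 B1 h5) h6 (hT A' h3)
          (fun X hX => ⟨hB X (hTB A' h3 hX), hTs A' h3 X hX⟩)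
        exact ⟨B', Finset.mem_filter.2 ⟨hTB A' h3 hB'S, hc⟩, hrest⟩
      choose! g hg1 hg2 using hex
      apply Finset.card_le_mul_card_image_of_maps_to hg1
      intro B' hB'
      simp only [N2, Finset.mem_filter] at hB'
      have hsub : (P B).filter (fun q => g q = B') ⊆
          ((B' \ B) ×ˢ (B \ B')).image (fun p => ((insert p.1 B).erase p.2, insert p.1 B,
            (insert p.1 B).erase p.2 ∪ B')) := by
        intro q hq
        simp only [Finset.mem_filter] at hq
        obtain ⟨hq1, hq2⟩ := hq
        obtain ⟨w, hw, y, hy, e1, e2, e3⟩ := hg2 q hq1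
        rw [hq2] at hw hy e3
        rw [Finset.mem_image]
        refine ⟨(w, y), Finset.mem_product.2 ⟨hw, hy⟩, ?_⟩
        simp only [← e3]
        simp only [← e2]
        simp only [← e1]
      refine (Finset.card_le_card hsub).trans (Finset.card_image_le.trans ?_)
      rw [Finset.card_product]
      have : (B \ B').card = (B' \ B).card :=
        Finset.card_sdiff_comm (by rw [hB B hBB, hB B' hB'.1])
      rw [this, hB'.2]
    have hd : 1 + N1.card + N2.card ≤ ℬ.card := by
      have d1 : B ∉ N1 := fun h => (hN1c B h).2.1 rfl
      have d2 : Disjoint (insert B N1) N2 := by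
        rw [Finset.disjoint_left]
        intro X hX hX2
        simp only [N2, Finset.mem_filter] at hX2
        rcases Finset.mem_insert.1 hX with rfl | hX
        · simp at hX2
        · have := (hN1c X hX).2.2
          omega
      have hsub : insert B N1 ∪ N2 ⊆ ℬ := by
        apply Finset.union_subset
        · intro X hX
          rcases Finset.mem_insert.1 hX with rfl | hX
          · exact hBB
          · exact (hN1c X hX).1
        · exact Finset.filter_subset _ _
      have := Finset.card_le_card hsub
      rw [Finset.card_union_of_disjoint d2, Finset.card_insert_of_notMem d1] at this
      omega
    omega
  have hsum := Finset.sum_le_sum hloc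
  simp only [Finset.sum_add_distrib, ← Finset.mul_sum, Finset.sum_const, smul_eq_mul] at hsum
  have hcs : (∑ B ∈ ℬ, (D B).card) ^ 2 ≤ ℬ.card * ∑ B ∈ ℬ, (D B).card ^ 2 :=
    sq_sum_le_card_mul_sum_sq
  rw [hsumP] at hsum
  rw [← hQ] at hcs
  rw [hsumd] at hsum hcs
  left
  nlinarith [Nat.mul_le_mul_left ℬ.card hsum]

theorem stmt_6 (r : ℕ) (hr : 3 ≤ r) (𝒜 ℬ : Finset (Finset ℕ))
    (hvalid : ValidPair r 3 𝒜 ℬ) (hb : 1 ≤ ℬ.card) :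
    (𝒜.card : ℝ) ≤ (ℬ.card : ℝ) * (-3 + Real.sqrt (8 * ℬ.card + 1)) / 6 := by
  obtain ⟨hA, hB, h3⟩ := hvalid
  have hex : ∀ A ∈ 𝒜, ∃ S ⊆ ℬ.filter (fun B => B ⊆ A), S.card = 3 :=
    fun A h => Finset.exists_subset_card_eq (h3 A h)
  choose! T hT1 hT2 using hex
  have key := aux_main r hr 𝒜 ℬ T hA hB hT2
    (fun A h B hBT => (Finset.mem_filter.1 (hT1 A h hBT)).1)
    (fun A h B hBT => (Finset.mem_filter.1 (hT1 A h hBT)).2)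
  have key' : 2 * ℬ.card ^ 2 + 9 * 𝒜.card * ℬ.card + 9 * 𝒜.card ^ 2 ≤ 2 * ℬ.card ^ 3 := by
    rcases key with h | h
    · exact h
    · omega
  have hk : (2 * (ℬ.card : ℝ) ^ 2 + 9 * 𝒜.card * ℬ.card + 9 * (𝒜.card : ℝ) ^ 2)
      ≤ 2 * (ℬ.card : ℝ) ^ 3 := by exact_mod_cast key'
  have hbp : (0 : ℝ) < ℬ.card := by exact_mod_cast hb
  have hle : 6 * (𝒜.card : ℝ) / ℬ.card + 3 ≤ Real.sqrt (8 * ℬ.card + 1) := by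
    apply Real.le_sqrt_of_sq_le
    have : 6 * (𝒜.card : ℝ) / ℬ.card + 3 = (6 * 𝒜.card + 3 * ℬ.card) / ℬ.card := by
      field_simp
    rw [this, div_pow, div_le_iff₀ (by positivity)]
    nlinarith
  have h6 : 6 * (𝒜.card : ℝ) / ℬ.card ≤ -3 + Real.sqrt (8 * ℬ.card + 1) := by linarith
  rw [div_le_iff₀ hbp] at h6
  linarith
end

section
/- Let x ≥ 2 be a real number such that x(x−1)/2 is an integer. Then for every integer r ≥ 3, every 3-valid pair (𝒜, ℬ) with |ℬ| = x(x−1)/2 satisfies |𝒜| ≤ x(x−1)(x−2)/6. (This is the weak Bollobás–Eccles conjecture f(r,3,C(x,2)) ≤ C(x,3) for real x.) -/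
/-- Two distinct facets of an `r`-set: their union is everything, they differ in one element. -/
theorem facet_aux {A B E : Finset ℕ} {r : ℕ} (hr : 3 ≤ r) (hA : A.card = r)
    (hB : B.card = r - 1) (hE : E.card = r - 1) (hBA : B ⊆ A) (hEA : E ⊆ A) (hne : B ≠ E) :
    B ∪ E = A ∧ (B \ E).card = 1 := by
  have h0 : ¬ B ⊆ E := fun h => hne (Finset.eq_of_subset_of_card_le h (by omega))
  have h1 : 0 < (B \ E).card := by
    rw [Finset.card_pos, Finset.sdiff_nonempty]; exact h0
  have h2 : (B \ E).card + E.card = (B ∪ E).card := Finset.card_sdiff_add_card B E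
  have h3 : (B ∪ E).card ≤ A.card := Finset.card_le_card (Finset.union_subset hBA hEA)
  refine ⟨Finset.eq_of_subset_of_card_le (Finset.union_subset hBA hEA) (by omega), by omega⟩

/-- If `C` is a common facet of `A₁ ≠ A₂`, `B` a further facet of `A₁` and `E₁ ≠ E₂` further facets
of `A₂`, then one of the `Eᵢ` is at distance two from `B`. -/
theorem two_aux {A₁ A₂ B C E₁ E₂ : Finset ℕ} {r : ℕ} (hr : 3 ≤ r) (hA₁ : A₁.card = r)
    (hA₂ : A₂.card = r) (hB : B.card = r - 1) (hC : C.card = r - 1) (hE₁ : E₁.card = r - 1)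
    (hE₂ : E₂.card = r - 1) (hBA : B ⊆ A₁) (hCA₁ : C ⊆ A₁) (hCA₂ : C ⊆ A₂) (hEA₁ : E₁ ⊆ A₂)
    (hEA₂ : E₂ ⊆ A₂) (hA : A₁ ≠ A₂) (hBC : B ≠ C) (h1 : E₁ ≠ C) (h2 : E₂ ≠ C) (h12 : E₁ ≠ E₂) :
    (B \ E₁).card = 2 ∨ (B \ E₂).card = 2 := by
  obtain ⟨hu, hd⟩ := facet_aux hr hA₁ hB hC hBA hCA₁ hBC
  obtain ⟨-, hd'⟩ := facet_aux hr hA₁ hC hB hCA₁ hBA hBC.symm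
  have hU := (facet_aux hr hA₂ hE₁ hE₂ hEA₁ hEA₂ h12).1
  obtain ⟨v, hv⟩ := Finset.card_eq_one.1 hd
  have hvm : v ∈ B \ C := by rw [hv]; simp
  rw [Finset.mem_sdiff] at hvm
  have hvA : v ∉ A₂ := by
    intro hvA
    apply hA
    apply Finset.eq_of_subset_of_card_le _ (by omega)
    rw [← hu]
    intro z hz
    by_cases hzC : z ∈ C
    · exact hCA₂ hzC
    · have hzB : z ∈ B := (Finset.mem_union.1 hz).resolve_right hzC
      have : z ∈ B \ C := Finset.mem_sdiff.2 ⟨hzB, hzC⟩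
      rw [hv, Finset.mem_singleton] at this
      rwa [this]
  have key : ∀ E : Finset ℕ, E.card = r - 1 → E ⊆ A₂ → E ≠ C → (B \ E).card ≠ 2 →
      C ∩ E ⊆ B := by
    intro E hE hEA hEC hn
    have hCE := (facet_aux hr hA₂ hC hE hCA₂ hEA hEC.symm).2
    have hsub : B \ E ⊆ (B \ C) ∪ (C \ E) := by
      intro z; simp only [Finset.mem_sdiff, Finset.mem_union]; tauto
    have hle := (Finset.card_le_card hsub).trans (Finset.card_union_le _ _)
    have hlt : (B \ E).card ≤ 1 := by omega
    have hBE : ∀ z ∈ B, z ∈ C → z ∈ E := by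
      intro z hz hzC
      by_contra hzE
      have := Finset.card_le_one.1 hlt z (Finset.mem_sdiff.2 ⟨hz, hzE⟩) v
        (Finset.mem_sdiff.2 ⟨hvm.1, fun h => hvA (hEA h)⟩)
      exact hvm.2 (this ▸ hzC)
    have e1 : (C \ E).card + (C ∩ E).card = C.card := Finset.card_sdiff_add_card_inter C E
    have e2 : (C \ B).card + (C ∩ B).card = C.card := Finset.card_sdiff_add_card_inter C B
    have hs : C ∩ B ⊆ C ∩ E := by
      intro z hz
      rw [Finset.mem_inter] at hz ⊢
      exact ⟨hz.1, hBE z hz.2 hz.1⟩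
    have := Finset.eq_of_subset_of_card_le hs (by omega)
    rw [← this]
    exact Finset.inter_subset_right
  by_contra hcon
  push Not at hcon
  have k1 := key E₁ hE₁ hEA₁ h1 hcon.1
  have k2 := key E₂ hE₂ hEA₂ h2 hcon.2
  have : C ⊆ B := by
    intro z hz
    have hzA := hCA₂ hz
    rw [← hU, Finset.mem_union] at hzA
    rcases hzA with h | h
    · exact k1 (Finset.mem_inter.2 ⟨hz, h⟩)
    · exact k2 (Finset.mem_inter.2 ⟨hz, h⟩)
  exact hBC (Finset.eq_of_subset_of_card_le this (by omega)).symm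

/-- At most four sets lie between two sets at distance two. -/
theorem four_aux {B E : Finset ℕ} (S : Finset (Finset ℕ)) {r : ℕ} (hB : B.card = r)
    (hE : E.card = r) (h : (B \ E).card = 2)
    (hS : ∀ C ∈ S, C.card = r ∧ (B \ C).card = 1 ∧ (C \ E).card = 1) : S.card ≤ 4 := by
  have h' : (E \ B).card = 2 := by
    have := Finset.card_sdiff_add_card B E
    have := Finset.card_sdiff_add_card E B
    rw [Finset.union_comm] at this
    omega
  have hsub : S ⊆ ((B \ E) ×ˢ (E \ B)).image (fun p => insert p.2 (B.erase p.1)) := by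
    intro C hC
    obtain ⟨hCr, hBC, hCE⟩ := hS C hC
    have hCB : (C \ B).card = 1 := by
      have := Finset.card_sdiff_add_card B C
      have := Finset.card_sdiff_add_card C B
      rw [Finset.union_comm] at this
      omega
    obtain ⟨u, hu⟩ := Finset.card_eq_one.1 hBC
    obtain ⟨v, hv⟩ := Finset.card_eq_one.1 hCB
    have hu' : ∀ z, z ∈ B ∧ z ∉ C ↔ z = u := fun z => by
      rw [← Finset.mem_sdiff, hu, Finset.mem_singleton]
    have hv' : ∀ z, z ∈ C ∧ z ∉ B ↔ z = v := fun z => by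
      rw [← Finset.mem_sdiff, hv, Finset.mem_singleton]
    have huB := (hu' u).2 rfl
    have hvC := (hv' v).2 rfl
    have hsub1 : B \ E ⊆ (B \ C) ∪ (C \ E) := by
      intro z; simp only [Finset.mem_sdiff, Finset.mem_union]; tauto
    have huE : u ∉ E := by
      intro huE
      have hs : B \ E ⊆ C \ E := by
        intro z hz
        rcases Finset.mem_union.1 (hsub1 hz) with hz1 | hz1
        · rw [hu, Finset.mem_singleton] at hz1
          subst hz1
          exact absurd huE (Finset.mem_sdiff.1 hz).2
        · exact hz1
      have := Finset.card_le_card hs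
      omega
    have hvE : v ∈ E := by
      by_contra hvE
      have hs : B \ E ⊆ insert u ((C \ E).erase v) := by
        intro z hz
        have hzB := (Finset.mem_sdiff.1 hz).1
        rcases Finset.mem_union.1 (hsub1 hz) with hz1 | hz1
        · rw [hu] at hz1
          exact Finset.mem_insert.2 (Or.inl (Finset.mem_singleton.1 hz1))
        · refine Finset.mem_insert_of_mem (Finset.mem_erase.2 ⟨?_, hz1⟩)
          rintro rfl
          exact hvC.2 hzB
      have c1 := Finset.card_le_card hs
      have c2 := Finset.card_insert_le u ((C \ E).erase v)
      have c3 := Finset.card_erase_of_mem (Finset.mem_sdiff.2 ⟨hvC.1, hvE⟩)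
      omega
    refine Finset.mem_image.2 ⟨(u, v), ?_, ?_⟩
    · simp only [Finset.mem_product, Finset.mem_sdiff]
      exact ⟨⟨huB.1, huE⟩, hvE, hvC.2⟩
    · ext z
      simp only [Finset.mem_insert, Finset.mem_erase]
      have a1 := hu' z
      have a2 := hv' z
      tauto
  have := (Finset.card_le_card hsub).trans Finset.card_image_le
  rw [Finset.card_product, h, h'] at this
  exact this

/-- The counting inequality. -/
theorem count_aux (r : ℕ) (hr : 3 ≤ r) (𝒜 ℬ : Finset (Finset ℕ)) (hA : ∀ A ∈ 𝒜, A.card = r)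
    (hB : ∀ B ∈ ℬ, B.card = r - 1) (M : Finset ℕ → Finset (Finset ℕ))
    (hM : ∀ A ∈ 𝒜, M A ⊆ ℬ.filter (fun B => B ⊆ A)) (hM3 : ∀ A ∈ 𝒜, (M A).card = 3) :
    2 * ℬ.card + 12 * 𝒜.card + ∑ C ∈ ℬ, (𝒜.filter (fun A => C ∈ M A)).offDiag.card
      ≤ 2 * (ℬ.card * ℬ.card) := by
  classical
  have hMB : ∀ A ∈ 𝒜, ∀ B ∈ M A, B ∈ ℬ ∧ B ⊆ A := fun A h B h' =>
    Finset.mem_filter.1 (hM A h h')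
  set P1 := (ℬ ×ˢ ℬ).filter (fun p => (p.1 \ p.2).card = 1) with hP1
  set P2 := (ℬ ×ˢ ℬ).filter (fun p => (p.1 \ p.2).card = 2) with hP2
  -- all pairs
  have c1 : ℬ.card + P1.card + P2.card ≤ ℬ.card * ℬ.card := by
    have hd : Disjoint ℬ.diag P1 := by
      rw [Finset.disjoint_left]
      rintro ⟨p, q⟩ h1 h2
      simp only [Finset.mem_diag, hP1, Finset.mem_filter] at h1 h2
      obtain ⟨-, rfl⟩ := h1
      simp at h2
    have hd2 : Disjoint (ℬ.diag ∪ P1) P2 := by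
      rw [Finset.disjoint_left]
      rintro ⟨p, q⟩ h1 h2
      simp only [Finset.mem_union, Finset.mem_diag, hP1, hP2, Finset.mem_filter] at h1 h2
      rcases h1 with h1 | h1
      · obtain ⟨-, rfl⟩ := h1
        simp at h2
      · omega
    have hs : (ℬ.diag ∪ P1) ∪ P2 ⊆ ℬ ×ˢ ℬ := by
      refine Finset.union_subset (Finset.union_subset ?_ (Finset.filter_subset _ _))
        (Finset.filter_subset _ _)
      rintro ⟨p, q⟩ h1
      simp only [Finset.mem_diag] at h1
      obtain ⟨h, rfl⟩ := h1
      exact Finset.mem_product.2 ⟨h, h⟩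
    have := Finset.card_le_card hs
    rw [Finset.card_union_of_disjoint hd2, Finset.card_union_of_disjoint hd,
      Finset.card_product, Finset.diag_card] at this
    exact this
  -- pairs at distance one
  have c2 : 6 * 𝒜.card ≤ P1.card := by
    have hdis : ∀ A ∈ 𝒜, ∀ A' ∈ 𝒜, A ≠ A' → Disjoint (M A).offDiag (M A').offDiag := by
      intro A h A' h' hne
      rw [Finset.disjoint_left]
      rintro ⟨p, q⟩ h1 h2
      rw [Finset.mem_offDiag] at h1 h2
      obtain ⟨p1, q1, n1⟩ := h1
      obtain ⟨p2, q2, n2⟩ := h2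
      have e1 := (facet_aux hr (hA A h) (hB _ (hMB A h _ p1).1) (hB _ (hMB A h _ q1).1)
        (hMB A h _ p1).2 (hMB A h _ q1).2 n1).1
      have e2 := (facet_aux hr (hA A' h') (hB _ (hMB A' h' _ p2).1) (hB _ (hMB A' h' _ q2).1)
        (hMB A' h' _ p2).2 (hMB A' h' _ q2).2 n2).1
      exact hne (e1.symm.trans e2)
    have hs : 𝒜.biUnion (fun A => (M A).offDiag) ⊆ P1 := by
      intro ⟨p, q⟩ hp
      obtain ⟨A, h, h1⟩ := Finset.mem_biUnion.1 hp
      obtain ⟨p1, q1, n1⟩ := Finset.mem_offDiag.1 h1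
      exact Finset.mem_filter.2 ⟨Finset.mem_product.2 ⟨(hMB A h _ p1).1, (hMB A h _ q1).1⟩,
        (facet_aux hr (hA A h) (hB _ (hMB A h _ p1).1) (hB _ (hMB A h _ q1).1)
        (hMB A h _ p1).2 (hMB A h _ q1).2 n1).2⟩
    have := Finset.card_le_card hs
    rw [Finset.card_biUnion hdis] at this
    have e : ∑ A ∈ 𝒜, (M A).offDiag.card = ∑ A ∈ 𝒜, 6 :=
      Finset.sum_congr rfl fun A h => by rw [Finset.offDiag_card, hM3 A h]
    rw [e, Finset.sum_const, smul_eq_mul] at this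
    omega
  -- paths
  have c3 : ∑ C ∈ ℬ, 2 * (𝒜.filter (fun A => C ∈ M A)).offDiag.card ≤ 4 * P2.card := by
    have lower : ∀ C ∈ ℬ, 2 * (𝒜.filter (fun A => C ∈ M A)).offDiag.card ≤
        (P2.filter (fun p => (p.1 \ C).card = 1 ∧ (C \ p.2).card = 1)).card := by
      intro C hC
      set T := P2.filter (fun p => (p.1 \ C).card = 1 ∧ (C \ p.2).card = 1) with hT
      have fib : ∀ q ∈ (𝒜.filter (fun A => C ∈ M A)).offDiag,
          2 ≤ (T.filter (fun p => (p.1 ∪ C, C ∪ p.2) = q)).card := by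
        rintro ⟨A₁, A₂⟩ hq
        simp only [Finset.mem_offDiag, Finset.mem_filter] at hq
        obtain ⟨⟨h1, hC1⟩, ⟨h2, hC2⟩, hne⟩ := hq
        have k1 : ((M A₁).erase C).card = 2 := by
          rw [Finset.card_erase_of_mem hC1, hM3 A₁ h1]
        have k2 : ((M A₂).erase C).card = 2 := by
          rw [Finset.card_erase_of_mem hC2, hM3 A₂ h2]
        obtain ⟨E₁, E₂, h12, hE⟩ := Finset.card_eq_two.1 k2
        have hE₁ : E₁ ∈ (M A₂).erase C := by rw [hE]; simp
        have hE₂ : E₂ ∈ (M A₂).erase C := by rw [hE]; simp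
        have ex : ∀ B ∈ (M A₁).erase C, ∃ E ∈ (M A₂).erase C, (B \ E).card = 2 := by
          intro B hBm
          rw [Finset.mem_erase] at hBm
          have f1 := Finset.mem_erase.1 hE₁
          have f2 := Finset.mem_erase.1 hE₂
          rcases two_aux hr (hA A₁ h1) (hA A₂ h2) (hB _ (hMB A₁ h1 _ hBm.2).1) (hB C hC)
            (hB _ (hMB A₂ h2 _ f1.2).1) (hB _ (hMB A₂ h2 _ f2.2).1) (hMB A₁ h1 _ hBm.2).2
            (hMB A₁ h1 _ hC1).2 (hMB A₂ h2 _ hC2).2 (hMB A₂ h2 _ f1.2).2 (hMB A₂ h2 _ f2.2).2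
            hne hBm.1 f1.1 f2.1 h12 with h | h
          · exact ⟨E₁, hE₁, h⟩
          · exact ⟨E₂, hE₂, h⟩
        choose! g hg using ex
        rw [← k1, ← Finset.card_image_of_injective (f := fun B => (B, g B)) _
          (fun a b h => (Prod.mk.inj h).1)]
        apply Finset.card_le_card
        intro p hp
        obtain ⟨B, hBm, rfl⟩ := Finset.mem_image.1 hp
        obtain ⟨hgm, hg2⟩ := hg B hBm
        rw [Finset.mem_erase] at hBm hgm
        have m1 := hMB A₁ h1 _ hBm.2
        have m2 := hMB A₂ h2 _ hgm.2
        have e1 := facet_aux hr (hA A₁ h1) (hB _ m1.1) (hB C hC) m1.2 (hMB A₁ h1 _ hC1).2 hBm.1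
        have e2 := facet_aux hr (hA A₂ h2) (hB C hC) (hB _ m2.1) (hMB A₂ h2 _ hC2).2 m2.2
          hgm.1.symm
        simp only [hT, hP2, Finset.mem_filter, Finset.mem_product]
        exact ⟨⟨⟨⟨m1.1, m2.1⟩, hg2⟩, e1.2, e2.2⟩, by rw [e1.1, e2.1]⟩
      have hmul : (𝒜.filter (fun A => C ∈ M A)).offDiag.card * 2 ≤
          ∑ q ∈ (𝒜.filter (fun A => C ∈ M A)).offDiag,
            (T.filter (fun p => (p.1 ∪ C, C ∪ p.2) = q)).card := by
        have := Finset.card_nsmul_le_sum _ _ 2 fib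
        rwa [smul_eq_mul] at this
      rw [← Finset.card_biUnion] at hmul
      · rw [mul_comm]
        refine hmul.trans (Finset.card_le_card ?_)
        intro p hp
        obtain ⟨q, -, h⟩ := Finset.mem_biUnion.1 hp
        exact (Finset.mem_filter.1 h).1
      · intro q _ q' _ hqq
        rw [Function.onFun, Finset.disjoint_left]
        intro p h1 h2
        exact hqq ((Finset.mem_filter.1 h1).2.symm.trans (Finset.mem_filter.1 h2).2)
    refine (Finset.sum_le_sum lower).trans ?_
    have sw : ∑ C ∈ ℬ, (P2.filter (fun p => (p.1 \ C).card = 1 ∧ (C \ p.2).card = 1)).card =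
        ∑ p ∈ P2, (ℬ.filter (fun C => (p.1 \ C).card = 1 ∧ (C \ p.2).card = 1)).card := by
      simp only [Finset.card_filter]
      exact Finset.sum_comm
    rw [sw, mul_comm, ← smul_eq_mul]
    apply Finset.sum_le_card_nsmul
    intro p hp
    simp only [hP2, Finset.mem_filter, Finset.mem_product] at hp
    apply four_aux _ (hB _ hp.1.1) (hB _ hp.1.2) hp.2
    intro C hC
    rw [Finset.mem_filter] at hC
    exact ⟨hB C hC.1, hC.2⟩
  rw [← Finset.mul_sum] at c3
  omega

theorem stmt_7 (x : ℝ) (hx : 2 ≤ x) (r : ℕ) (hr : 3 ≤ r)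
    (𝒜 ℬ : Finset (Finset ℕ)) (hvalid : ValidPair r 3 𝒜 ℬ)
    (hb : (ℬ.card : ℝ) = x * (x - 1) / 2) :
    (𝒜.card : ℝ) ≤ x * (x - 1) * (x - 2) / 6 := by
  classical
  obtain ⟨hA, hB, hv⟩ := hvalid
  have ex : ∀ A ∈ 𝒜, ∃ S ⊆ ℬ.filter (fun B => B ⊆ A), S.card = 3 := fun A h =>
    Finset.exists_subset_card_eq (hv A h)
  choose! M hM hM3 using ex
  have hc := count_aux r hr 𝒜 ℬ hA hB M hM hM3
  set d : Finset ℕ → ℕ := fun C => (𝒜.filter (fun A => C ∈ M A)).card with hd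
  have hsum : ∑ C ∈ ℬ, d C = 3 * 𝒜.card := by
    have sw : ∑ C ∈ ℬ, d C = ∑ A ∈ 𝒜, (ℬ.filter (fun C => C ∈ M A)).card := by
      simp only [hd, Finset.card_filter]
      exact Finset.sum_comm
    have e : ∑ A ∈ 𝒜, (ℬ.filter (fun C => C ∈ M A)).card = ∑ A ∈ 𝒜, 3 := by
      refine Finset.sum_congr rfl fun A h => ?_
      rw [← hM3 A h]
      congr 1
      ext C
      rw [Finset.mem_filter]
      exact ⟨fun h => h.2, fun h' => ⟨(Finset.mem_filter.1 (hM A h h')).1, h'⟩⟩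
    rw [sw, e, Finset.sum_const, smul_eq_mul, mul_comm]
  have hoff : ∑ C ∈ ℬ, (𝒜.filter (fun A => C ∈ M A)).offDiag.card + ∑ C ∈ ℬ, d C =
      ∑ C ∈ ℬ, d C ^ 2 := by
    rw [← Finset.sum_add_distrib]
    refine Finset.sum_congr rfl fun C _ => ?_
    rw [Finset.offDiag_card]
    have : d C ≤ d C * d C := Nat.le_mul_self _
    simp only [hd] at this ⊢
    rw [sq]
    omega
  have hcs : (∑ C ∈ ℬ, d C) ^ 2 ≤ ℬ.card * ∑ C ∈ ℬ, d C ^ 2 := sq_sum_le_card_mul_sum_sq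
  rw [hsum] at hoff hcs
  generalize (∑ C ∈ ℬ, d C ^ 2) = Q at hoff hcs
  have hc' : 2 * ℬ.card + 9 * 𝒜.card + Q ≤ 2 * (ℬ.card * ℬ.card) := by omega
  have hcR : (2 : ℝ) * ℬ.card + 9 * 𝒜.card + Q ≤ 2 * (ℬ.card * ℬ.card) := by exact_mod_cast hc'
  have hcsR : ((3 : ℝ) * 𝒜.card) ^ 2 ≤ ℬ.card * Q := by exact_mod_cast hcs
  have ha : (0 : ℝ) ≤ 𝒜.card := Nat.cast_nonneg _
  generalize (𝒜.card : ℝ) = a at *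
  generalize (ℬ.card : ℝ) = b at *
  generalize (Q : ℝ) = q at *
  have hbpos : 0 < b := by rw [hb]; nlinarith
  -- with `y = 3 a / b` we have `(y + 1) (y + 2) ≤ x (x - 1)`
  obtain ⟨y, hy⟩ : ∃ y, 3 * a = y * b := ⟨3 * a / b, by field_simp⟩
  have hy0 : 0 ≤ y := by
    by_contra h
    push Not at h
    nlinarith
  have hq : y ^ 2 * b ≤ q := by
    have : b * (y ^ 2 * b) ≤ b * q := by
      rw [hy] at hcsR
      linarith [show b * (y ^ 2 * b) = (y * b) ^ 2 by ring]
    exact le_of_mul_le_mul_left this hbpos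
  have hy2 : (y + 1) * (y + 2) ≤ 2 * b := by
    have : b * ((y + 1) * (y + 2)) ≤ b * (2 * b) := by nlinarith
    exact le_of_mul_le_mul_left this hbpos
  have hyx : y ≤ x - 2 := by
    by_contra h
    push Not at h
    nlinarith
  have : y * b ≤ (x - 2) * b := mul_le_mul_of_nonneg_right hyx hbpos.le
  have e : x * (x - 1) * (x - 2) / 6 = (x - 2) * b / 3 := by rw [hb]; ring
  rw [e]
  linarith
end

section
/- For all integers r ≥ 3 and c ≥ 2, one has f(r, 3, C(c,2)) = C(c,3); that is, every 3-valid pair (𝒜, ℬ) with |ℬ| = C(c,2) satisfies |𝒜| ≤ C(c,3), and this bound is attained. -/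
lemma num_pick (b : ℕ) (hb : 1 ≤ b) :
    ∃ p : ℤ, 2 ≤ p ∧ p * (p - 1) ≤ 2 * b ∧ 2 * (b : ℤ) + 2 ≤ p * (p + 1) := by
  induction b, hb using Nat.le_induction with
  | base => exact ⟨2, by norm_num, by norm_num, by norm_num⟩
  | succ n hn ih =>
    obtain ⟨p, hp, h1, h2⟩ := ih
    by_cases h : 2 * ((n + 1 : ℕ) : ℤ) + 2 ≤ p * (p + 1)
    · exact ⟨p, hp, by push_cast; linarith, h⟩
    · obtain ⟨k, hk⟩ := Int.even_mul_succ_self p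
      have hk2 : p * (p + 1) = 2 * n + 2 := by push_cast at h; omega
      refine ⟨p + 1, by linarith, ?_, ?_⟩
      · push_cast at *; nlinarith
      · push_cast at *
        nlinarith

/-- Twelve times the supporting line. -/
def lineL (c b : ℤ) : ℤ := 6 * (c - 1) * b - (c ^ 3 - c)

lemma lineL_le (c p b : ℤ) (hc : 1 ≤ c) (hp : 1 ≤ p) (h1 : p * (p - 1) ≤ 2 * b)
    (h2 : 2 * b ≤ p * (p + 1)) : lineL c b ≤ lineL p b := by
  unfold lineL
  rcases lt_trichotomy c p with h | h | h
  · have e : 0 ≤ (p - c) * (6 * b - (p ^ 2 + p * c + c ^ 2 - 1)) := by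
      apply mul_nonneg (by linarith)
      have h3 : c ≤ p - 1 := by omega
      nlinarith
    nlinarith
  · subst h; exact le_refl _
  · have e : 0 ≤ (c - p) * ((p ^ 2 + p * c + c ^ 2 - 1) - 6 * b) := by
      apply mul_nonneg (by linarith)
      have h3 : p + 1 ≤ c := by omega
      nlinarith
    nlinarith

lemma num_main (m d t g x p q : ℤ) (hp : 2 ≤ p) (hq : 2 ≤ q)
    (hg : 0 ≤ g) (hd : 1 ≤ d)
    (m1 : p * (p - 1) ≤ 2 * m) (m2 : 2 * m + 2 ≤ p * (p + 1))
    (d1 : q * (q - 1) ≤ 2 * d) (d2 : 2 * d + 2 ≤ q * (q + 1))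
    (hx : 12 * x ≤ lineL p m) (hgd : 12 * g ≤ lineL q d) (ht : t ≤ m)
    (hc : 2 * (t + 3 * g) ≤ d * (d - 1)) :
    ∃ c : ℤ, 1 ≤ c ∧ 12 * (x + t + g) ≤ lineL c (m + d) := by
  unfold lineL at *
  by_cases c1 : d ≤ p
  · refine ⟨p, by linarith, ?_⟩
    have : d * (d - 1) ≤ d * (p - 1) := by nlinarith
    nlinarith
  by_cases c2 : d ≤ 2 * p
  · refine ⟨p + 1, by linarith, ?_⟩
    have h : 0 ≤ (2 * p - d) * (d - (p + 1)) := mul_nonneg (by linarith) (by omega)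
    nlinarith
  have c3 : 2 * p + 1 ≤ d := by omega
  by_cases c4 : p + 2 ≤ q
  · refine ⟨q, by linarith, ?_⟩
    have hm : 0 ≤ m := by nlinarith
    have h : 0 ≤ (q - (p + 2)) * m := mul_nonneg (by linarith) hm
    have h3 : 0 ≤ p ^ 3 - p := by nlinarith [mul_nonneg (by linarith : 0 ≤ p) (by nlinarith : 0 ≤ p ^ 2 - 1)]
    nlinarith
  by_cases c5 : q = p + 1
  · subst c5
    by_cases c6 : 4 ≤ p
    · refine ⟨p + 1, by linarith, ?_⟩
      have h3 : 0 ≤ (p * (p + 1)) * (p - 4) := by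
        apply mul_nonneg (by nlinarith) (by linarith)
      nlinarith
    · refine ⟨p + 2, by linarith, ?_⟩
      have : p = 2 ∨ p = 3 := by omega
      rcases this with rfl | rfl <;> nlinarith
  · have c6 : q ≤ p := by omega
    refine ⟨p + 1, by linarith, ?_⟩
    have h1 : 0 ≤ (p + 1 - q) * (d - (2 * p + 1)) := mul_nonneg (by linarith) (by linarith)
    have key : 6 * p * (p + 1) ≤ 6 * (p + 1 - q) * (2 * p + 1) + (q ^ 3 - q) + 6 := by
      obtain ⟨k, rfl⟩ : ∃ k, p = q + k := ⟨p - q, by ring⟩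
      have hk : 0 ≤ k := by linarith
      by_cases h5 : 5 ≤ q
      · have : 0 ≤ q * (q - 1) * (q - 5) := by
          apply mul_nonneg (by nlinarith) (by linarith)
        nlinarith
      · have : q = 2 ∨ q = 3 ∨ q = 4 := by omega
        rcases this with rfl | rfl | rfl <;> nlinarith
    nlinarith

/-- Elements whose removal from `A` lands in `B`. -/
def remT (B : Finset (Finset ℕ)) (A : Finset ℕ) : Finset ℕ := A.filter (fun x => A.erase x ∈ B)

lemma pairs_bound (F B : Finset (Finset ℕ)) :
    ∑ A ∈ F, (remT B A).card.choose 2 ≤ B.card.choose 2 := by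
  classical
  let P : Finset ℕ → Finset (Finset (Finset ℕ)) :=
    fun A => ((remT B A).image A.erase).powersetCard 2
  have hP : ∀ A, (P A).card = (remT B A).card.choose 2 := by
    intro A
    simp only [P, Finset.card_powersetCard]
    rw [Finset.card_image_of_injOn]
    exact (Finset.erase_injOn A).mono (by intro x hx; exact (Finset.mem_filter.1 hx).1)
  have hsup : ∀ A, ∀ s ∈ P A, s.sup id = A := by
    intro A s hs
    obtain ⟨h1, h2⟩ := Finset.mem_powersetCard.1 hs
    obtain ⟨u, v, huv, rfl⟩ := Finset.card_eq_two.1 h2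
    have hu := h1 (Finset.mem_insert_self u {v})
    have hv := h1 (Finset.mem_insert_of_mem (Finset.mem_singleton_self v))
    obtain ⟨x, hx, rfl⟩ := Finset.mem_image.1 hu
    obtain ⟨y, hy, rfl⟩ := Finset.mem_image.1 hv
    have hxA := (Finset.mem_filter.1 hx).1
    have hyA := (Finset.mem_filter.1 hy).1
    have hne : x ≠ y := by rintro rfl; exact huv rfl
    ext z
    simp
    grind
  calc ∑ A ∈ F, (remT B A).card.choose 2 = ∑ A ∈ F, (P A).card := by simp [hP]
    _ = (F.biUnion P).card := by
        rw [Finset.card_biUnion]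
        intro A _ A' _ hne
        refine Finset.disjoint_left.2 ?_
        intro s hs hs'
        exact hne ((hsup A s hs).symm.trans (hsup A' s hs'))
    _ ≤ (B.powersetCard 2).card := by
        apply Finset.card_le_card
        intro s hs
        obtain ⟨A, _, hA⟩ := Finset.mem_biUnion.1 hs
        obtain ⟨h1, h2⟩ := Finset.mem_powersetCard.1 hA
        refine Finset.mem_powersetCard.2 ⟨fun w hw => ?_, h2⟩
        obtain ⟨x, hx, rfl⟩ := Finset.mem_image.1 (h1 hw)
        exact (Finset.mem_filter.1 hx).2
    _ = _ := Finset.card_powersetCard _ _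

lemma remT_card_le (B : Finset (Finset ℕ)) (A : Finset ℕ) : (remT B A).card ≤ B.card := by
  apply Finset.card_le_card_of_injOn A.erase
  · intro x hx; exact (Finset.mem_filter.1 hx).2
  · exact (Finset.erase_injOn A).mono (by intro x hx; exact (Finset.mem_filter.1 hx).1)

lemma two_choose_two (n : ℕ) : 2 * ((n.choose 2 : ℕ) : ℤ) = n * (n - 1) := by
  induction n with
  | zero => simp
  | succ k ih =>
    rw [Nat.choose_succ_succ' k 1, Nat.choose_one_right]; push_cast; linarith

lemma six_choose_three (n : ℕ) : 6 * ((n.choose 3 : ℕ) : ℤ) = n * (n - 1) * (n - 2) := by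
  induction n with
  | zero => simp
  | succ k ih =>
    rw [Nat.choose_succ_succ' k 2]; have := two_choose_two k; push_cast; linarith

lemma main_bound (b : ℕ) : ∀ B F : Finset (Finset ℕ), B.card = b →
    (∀ A ∈ F, 3 ≤ (remT B A).card) → ∃ c : ℤ, 1 ≤ c ∧ 12 * (F.card : ℤ) ≤ lineL c b := by
  classical
  induction b using Nat.strong_induction_on with
  | _ b ih =>
  intro B F hB hF
  by_cases hb : b ≤ 1
  · have : F = ∅ := by
      rw [Finset.eq_empty_iff_forall_notMem]
      intro A hA
      have := hF A hA
      have := remT_card_le B A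
      omega
    exact ⟨1, le_refl _, by simp [this, lineL]⟩
  obtain ⟨U, hU, V, hV, hUV⟩ := Finset.one_lt_card.1 (by omega : 1 < B.card)
  have hex : ∃ v, ∃ U ∈ B, ∃ V ∈ B, v ∈ U ∧ v ∉ V := by
    by_contra! hcon
    exact hUV (Finset.Subset.antisymm (fun x hx => hcon x U hU V hV hx)
      (fun x hx => hcon x V hV U hU hx))
  clear hUV hU hV U V
  obtain ⟨v, U, hU, V, hV, hvU, hvV⟩ := hex
  set B1 := B.filter (fun W => v ∈ W) with hB1
  set B0 := B.filter (fun W => v ∉ W) with hB0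
  have hsum : B1.card + B0.card = b := by
    rw [← hB]; exact Finset.card_filter_add_card_filter_not _
  have hd : 1 ≤ B1.card := Finset.card_pos.2 ⟨U, by simp [hB1, hU, hvU]⟩
  have hm : 1 ≤ B0.card := Finset.card_pos.2 ⟨V, by simp [hB0, hV, hvV]⟩
  set F0 := F.filter (fun A => v ∉ A) with hF0
  set F1 := F.filter (fun A => v ∈ A) with hF1
  set G := F1.filter (fun A => 3 ≤ (remT B1 A).card) with hG
  set Q := F1.filter (fun A => ¬ 3 ≤ (remT B1 A).card) with hQ
  have hFs : F1.card + F0.card = F.card := Finset.card_filter_add_card_filter_not _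
  have hF1s : G.card + Q.card = F1.card := Finset.card_filter_add_card_filter_not _
  have hrem : ∀ A, v ∈ A → (remT B A).erase v ⊆ remT B1 A := by
    intro A hA x hx
    simp only [remT, Finset.mem_erase, Finset.mem_filter, hB1] at hx ⊢
    exact ⟨hx.2.1, hx.2.2, fun h => hx.1 h.symm, hA⟩
  obtain ⟨c0, hc0, h0⟩ := ih B0.card (by omega) B0 F0 rfl (by
    intro A hA
    obtain ⟨hA1, hA2⟩ := Finset.mem_filter.1 hA
    refine (hF A hA1).trans (Finset.card_le_card ?_)
    intro x hx
    simp only [remT, Finset.mem_filter, hB0, Finset.mem_erase] at hx ⊢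
    exact ⟨hx.1, hx.2, fun h => hA2 h.2⟩)
  obtain ⟨c1, hc1, h1⟩ := ih B1.card (by omega) B1 G rfl (by
    intro A hA
    exact (Finset.mem_filter.1 hA).2)
  have hQe : ∀ A ∈ Q, v ∈ A ∧ A.erase v ∈ B ∧ 2 ≤ (remT B1 A).card := by
    intro A hA
    obtain ⟨hA1, hA2⟩ := Finset.mem_filter.1 hA
    obtain ⟨hA3, hA4⟩ := Finset.mem_filter.1 hA1
    have e1 := Finset.card_le_card (hrem A hA4)
    have e2 := hF A hA3
    refine ⟨hA4, ?_, ?_⟩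
    · by_contra hcon
      have : v ∉ remT B A := fun h => hcon (Finset.mem_filter.1 h).2
      rw [Finset.erase_eq_of_notMem this] at e1
      omega
    · have := Finset.pred_card_le_card_erase (s := remT B A) (a := v)
      omega
  have hQm : Q.card ≤ B0.card := by
    apply Finset.card_le_card_of_injOn (fun A => A.erase v)
    · intro A hA
      simp [hB0, (hQe A hA).2.1]
    · intro A hA A' hA' he
      have := congrArg (insert v) he
      simpa [Finset.insert_erase (hQe A hA).1, Finset.insert_erase (hQe A' hA').1] using this
  have hpair : Q.card + 3 * G.card ≤ B1.card.choose 2 := by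
    refine le_trans ?_ (pairs_bound F1 B1)
    rw [← Finset.sum_filter_add_sum_filter_not F1 (fun A => 3 ≤ (remT B1 A).card)]
    have a1 : G.card * 3 ≤ ∑ A ∈ G, (remT B1 A).card.choose 2 := by
      rw [← smul_eq_mul]
      apply Finset.card_nsmul_le_sum
      intro A hA
      exact Nat.choose_le_choose 2 (Finset.mem_filter.1 hA).2
    have a2 : Q.card * 1 ≤ ∑ A ∈ Q, (remT B1 A).card.choose 2 := by
      rw [← smul_eq_mul]
      apply Finset.card_nsmul_le_sum
      intro A hA
      exact Nat.choose_le_choose 2 (hQe A hA).2.2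
    simp only [← hG, ← hQ]
    omega
  obtain ⟨p, hp, p1, p2⟩ := num_pick _ hm
  obtain ⟨q, hq, q1, q2⟩ := num_pick _ hd
  have h0' := h0.trans (lineL_le c0 p _ hc0 (by linarith) p1 (by linarith))
  have h1' := h1.trans (lineL_le c1 q _ hc1 (by linarith) q1 (by linarith))
  obtain ⟨c, hc, hfin⟩ := num_main B0.card B1.card Q.card G.card F0.card p q hp hq
    (by positivity) (by exact_mod_cast hd) p1 p2 q1 q2 h0' h1' (by exact_mod_cast hQm)
    (by rw [← two_choose_two]; exact_mod_cast Nat.mul_le_mul_left 2 hpair)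
  refine ⟨c, hc, ?_⟩
  have e1 : (F.card : ℤ) = F0.card + Q.card + G.card := by
    rw [← hFs, ← hF1s]; push_cast; ring
  have e2 : (b : ℤ) = B0.card + B1.card := by rw [← hsum]; push_cast; ring
  rw [e1, e2]; exact hfin

lemma upper_bound (r c : ℕ) (hr : 3 ≤ r) (hc : 2 ≤ c) (F B : Finset (Finset ℕ))
    (h : ValidPair r 3 F B) (hB : B.card = c.choose 2) : F.card ≤ c.choose 3 := by
  classical
  obtain ⟨hF, hBr, hk⟩ := h
  obtain ⟨c', hc', hb⟩ := main_bound _ B F hB (by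
    intro A hA
    refine (hk A hA).trans ?_
    refine le_trans (Finset.card_le_card (t := (remT B A).image A.erase) ?_) Finset.card_image_le
    intro W hW
    obtain ⟨hW1, hW2⟩ := Finset.mem_filter.1 hW
    have hcard : (A \ W).card = 1 := by
      rw [Finset.card_sdiff_of_subset hW2, hF A hA, hBr W hW1]; omega
    obtain ⟨x, hx⟩ := Finset.card_eq_one.1 hcard
    have hWe : A.erase x = W := by
      rw [← Finset.sdiff_singleton_eq_erase, ← hx, Finset.sdiff_sdiff_eq_self hW2]
    have hxA : x ∈ A := by
      have : x ∈ A \ W := by rw [hx]; simp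
      exact (Finset.mem_sdiff.1 this).1
    refine Finset.mem_image.2 ⟨x, Finset.mem_filter.2 ⟨hxA, ?_⟩, hWe⟩
    rw [hWe]; exact hW1)
  have e2 := two_choose_two c
  have e3 := six_choose_three c
  have hc2 : (2 : ℤ) ≤ c := by exact_mod_cast hc
  have := hb.trans (lineL_le c' c _ hc' (by linarith) (by rw [e2]) (by rw [e2]; nlinarith))
  unfold lineL at this
  have h4 : (F.card : ℤ) ≤ (c.choose 3 : ℕ) := by
    have : 6 * ((c : ℤ) - 1) * ((c.choose 2 : ℕ) : ℤ) = 3 * (c - 1) * (c * (c - 1)) := by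
      rw [← e2]; ring
    nlinarith
  exact_mod_cast h4

lemma attained (r c : ℕ) (hr : 3 ≤ r) :
    ∃ F B : Finset (Finset ℕ), ValidPair r 3 F B ∧ B.card = c.choose 2 ∧
      F.card = c.choose 3 := by
  classical
  let S : Finset ℕ := Finset.Ico c (c + (r - 3))
  have hS : S.card = r - 3 := by simp [S]
  have hdis : ∀ T ⊆ Finset.range c, Disjoint T S := by
    intro T hT
    rw [Finset.disjoint_left]
    intro x hx hxS
    have h1 := Finset.mem_range.1 (hT hx)
    have h2 := (Finset.mem_Ico.1 hxS).1
    omega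
  have hinj : ∀ T ⊆ Finset.range c, ∀ T' ⊆ Finset.range c, T ∪ S = T' ∪ S → T = T' := by
    intro T hT T' hT' he
    rw [← Finset.union_sdiff_cancel_right (hdis T hT), he,
      Finset.union_sdiff_cancel_right (hdis T' hT')]
  have hcard : ∀ k, (((Finset.range c).powersetCard k).image (· ∪ S)).card = c.choose k := by
    intro k
    rw [Finset.card_image_of_injOn]
    · simp
    · intro T hT T' hT' he
      exact hinj T (Finset.mem_powersetCard.1 hT).1 T' (Finset.mem_powersetCard.1 hT').1 he
  refine ⟨((Finset.range c).powersetCard 3).image (· ∪ S),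
    ((Finset.range c).powersetCard 2).image (· ∪ S), ⟨?_, ?_, ?_⟩, hcard 2, hcard 3⟩
  · intro A hA
    obtain ⟨T, hT, rfl⟩ := Finset.mem_image.1 hA
    obtain ⟨h1, h2⟩ := Finset.mem_powersetCard.1 hT
    rw [Finset.card_union_of_disjoint (hdis T h1), h2, hS]; omega
  · intro A hA
    obtain ⟨T, hT, rfl⟩ := Finset.mem_image.1 hA
    obtain ⟨h1, h2⟩ := Finset.mem_powersetCard.1 hT
    rw [Finset.card_union_of_disjoint (hdis T h1), h2, hS]; omega
  · intro A hA
    obtain ⟨T, hT, rfl⟩ := Finset.mem_image.1 hA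
    obtain ⟨h1, h2⟩ := Finset.mem_powersetCard.1 hT
    have h3 : ((T.powersetCard 2).image (· ∪ S)).card = 3 := by
      rw [Finset.card_image_of_injOn]
      · rw [Finset.card_powersetCard, h2]; rfl
      · intro R hR R' hR' he
        exact hinj R ((Finset.mem_powersetCard.1 hR).1.trans h1) R'
          ((Finset.mem_powersetCard.1 hR').1.trans h1) he
    rw [← h3]
    apply Finset.card_le_card
    intro W hW
    obtain ⟨R, hR, rfl⟩ := Finset.mem_image.1 hW
    obtain ⟨h4, h5⟩ := Finset.mem_powersetCard.1 hR
    refine Finset.mem_filter.2 ⟨Finset.mem_image.2 ⟨R, ?_, rfl⟩, ?_⟩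
    · exact Finset.mem_powersetCard.2 ⟨h4.trans h1, h5⟩
    · exact Finset.union_subset_union_left h4


theorem stmt_8 (r c : ℕ) (hr : 3 ≤ r) (hc : 2 ≤ c) :
    f r 3 (c.choose 2) = c.choose 3 ∧
    (∀ 𝒜 ℬ : Finset (Finset ℕ), ValidPair r 3 𝒜 ℬ → ℬ.card = c.choose 2 →
      𝒜.card ≤ c.choose 3) ∧
    (∃ 𝒜 ℬ : Finset (Finset ℕ), ValidPair r 3 𝒜 ℬ ∧ ℬ.card = c.choose 2 ∧
      𝒜.card = c.choose 3) := by
  have hub := upper_bound r c hr hc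
  have hat := attained r c hr
  refine ⟨?_, hub, hat⟩
  apply IsGreatest.csSup_eq
  refine ⟨hat, ?_⟩
  rintro a ⟨F, B, hv, hB, rfl⟩
  exact hub F B hv hB
end

section
/- Let r ≥ 3 and c ≥ 29 be integers. If (𝒜, ℬ) is a 3-valid pair with |ℬ| = C(c,2) and |𝒜| = C(c,3), then there exist an (r−3)-element set S ⊆ ℕ and c distinct elements x_1, ..., x_c of ℕ \ S such that ℬ = {S ∪ T : T a 2-element subset of {x_1,...,x_c}} and 𝒜 = {S ∪ T : T a 3-element subset of {x_1,...,x_c}}. -/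
namespace Stmt9Aux

open Finset

/-- up-degree -/
def D (𝒜 : Finset (Finset ℕ)) (B : Finset ℕ) : ℕ := (𝒜.filter (fun A => B ⊆ A)).card

/-- neighbours -/
def N (𝒜 ℬ : Finset (Finset ℕ)) (B : Finset ℕ) : Finset (Finset ℕ) :=
  ℬ.filter (fun B' => B' ≠ B ∧ B ∪ B' ∈ 𝒜)

/-- far sets -/
def F (ℬ : Finset (Finset ℕ)) (B : Finset ℕ) : Finset (Finset ℕ) :=
  ℬ.filter (fun B' => (B' \ B).card = 2)

/-- paths -/
def W (𝒜 ℬ : Finset (Finset ℕ)) (B : Finset ℕ) : Finset (Finset ℕ × Finset ℕ) :=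
  ((N 𝒜 ℬ B) ×ˢ 𝒜).filter (fun p => p.1 ⊆ p.2 ∧ ¬ B ⊆ p.2)

variable {r : ℕ} {𝒜 ℬ : Finset (Finset ℕ)}

lemma union_eq (hr : 3 ≤ r) {A B B' : Finset ℕ} (hA : A.card = r)
    (hB : B.card = r - 1) (hB' : B'.card = r - 1) (h1 : B ⊆ A) (h2 : B' ⊆ A) (hne : B' ≠ B) :
    B ∪ B' = A := by
  apply Finset.eq_of_subset_of_card_le (Finset.union_subset h1 h2)
  by_contra hlt
  push Not at hlt
  have h3 : (B ∪ B').card ≤ r - 1 := by omega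
  have h4 : B = B ∪ B' := Finset.eq_of_subset_of_card_le Finset.subset_union_left (by omega)
  have h5 : B' = B ∪ B' := Finset.eq_of_subset_of_card_le Finset.subset_union_right (by omega)
  exact hne (h5.trans h4.symm)

lemma two_D_le (hr : 3 ≤ r) (hv : ValidPair r 3 𝒜 ℬ) {B : Finset ℕ} (hB : B ∈ ℬ) :
    2 * D 𝒜 B ≤ (N 𝒜 ℬ B).card := by
  obtain ⟨hA, hBc, hk⟩ := hv
  have key : ∀ A ∈ 𝒜.filter (fun A => B ⊆ A),
      2 ≤ ((N 𝒜 ℬ B).filter (fun B' => B ∪ B' = A)).card := by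
    intro A hAm
    rw [mem_filter] at hAm
    have h3 := hk A hAm.1
    have hsub : (ℬ.filter (fun B' => B' ⊆ A)).erase B ⊆
        (N 𝒜 ℬ B).filter (fun B' => B ∪ B' = A) := by
      intro B' hB'
      simp only [mem_erase, mem_filter, N] at hB' ⊢
      have hu := union_eq hr (hA A hAm.1) (hBc B hB) (hBc B' hB'.2.1) hAm.2 hB'.2.2 hB'.1
      exact ⟨⟨hB'.2.1, hB'.1, hu ▸ hAm.1⟩, hu⟩
    have := card_le_card hsub
    rw [card_erase_of_mem (by simp [hB, hAm.2])] at this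
    omega
  have hmaps : ∀ B' ∈ N 𝒜 ℬ B, B ∪ B' ∈ 𝒜.filter (fun A => B ⊆ A) := by
    intro B' hB'
    simp only [N, mem_filter] at hB' ⊢
    exact ⟨hB'.2.2, subset_union_left⟩
  rw [card_eq_sum_card_fiberwise hmaps]
  calc 2 * D 𝒜 B = ∑ A ∈ 𝒜.filter (fun A => B ⊆ A), 2 := by simp [D, mul_comm]
    _ ≤ _ := sum_le_sum key

lemma N_sdiff (hr : 3 ≤ r) (hv : ValidPair r 3 𝒜 ℬ) {B B' : Finset ℕ} (hB : B ∈ ℬ)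
    (h : B' ∈ N 𝒜 ℬ B) : (B' \ B).card = 1 ∧ (B \ B').card = 1 := by
  obtain ⟨hA, hBc, hk⟩ := hv
  simp only [N, mem_filter] at h
  have h1 := hA _ h.2.2
  have h2 := hBc _ hB
  have h3 := hBc _ h.1
  have h4 := card_sdiff_add_card B' B
  have h5 := card_sdiff_add_card B B'
  rw [union_comm] at h4
  omega

lemma card_F_le (hr : 3 ≤ r) (hv : ValidPair r 3 𝒜 ℬ) {B : Finset ℕ} (hB : B ∈ ℬ) :
    Disjoint (F ℬ B) (insert B (N 𝒜 ℬ B)) ∧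
    (F ℬ B) ∪ (insert B (N 𝒜 ℬ B)) ⊆ ℬ ∧
    ((F ℬ B) ∪ (insert B (N 𝒜 ℬ B))).card = (F ℬ B).card + (N 𝒜 ℬ B).card + 1 := by
  have hd : Disjoint (F ℬ B) (insert B (N 𝒜 ℬ B)) := by
    rw [disjoint_left]
    intro X hX hX'
    simp only [F, mem_filter] at hX
    rw [mem_insert] at hX'
    rcases hX' with rfl | hX'
    · simp at hX
    · have := (N_sdiff hr hv hB hX').1
      omega
  refine ⟨hd, ?_, ?_⟩
  · intro X hX
    simp only [F, N, mem_union, mem_insert, mem_filter] at hX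
    rcases hX with h | rfl | h
    · exact h.1
    · exact hB
    · exact h.1
  · rw [card_union_of_disjoint hd, card_insert_of_notMem (by simp [N])]
    omega

lemma sum_D_le (hr : 3 ≤ r) (hv : ValidPair r 3 𝒜 ℬ) {B : Finset ℕ} (hB : B ∈ ℬ) :
    ∑ B' ∈ N 𝒜 ℬ B, D 𝒜 B' ≤ (W 𝒜 ℬ B).card + (N 𝒜 ℬ B).card := by
  have hmaps : ∀ p ∈ W 𝒜 ℬ B, p.1 ∈ N 𝒜 ℬ B := by
    intro p hp
    simp only [W, mem_filter, mem_product] at hp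
    exact hp.1.1
  rw [card_eq_sum_card_fiberwise hmaps, card_eq_sum_ones (N 𝒜 ℬ B), ← sum_add_distrib]
  apply sum_le_sum
  intro B' hB'
  have hsub : 𝒜.filter (fun A => B' ⊆ A) ⊆
      insert (B ∪ B') (((W 𝒜 ℬ B).filter (fun p => p.1 = B')).image Prod.snd) := by
    intro A hA
    rw [mem_filter] at hA
    rw [mem_insert]
    by_cases hBA : B ⊆ A
    · left
      have h2 := hB'
      simp only [N, mem_filter] at h2
      exact (union_eq hr (hv.1 A hA.1) (hv.2.1 B hB) (hv.2.1 B' h2.1) hBA hA.2 h2.2.1).symm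
    · right
      rw [mem_image]
      refine ⟨(B', A), ?_, rfl⟩
      simp only [W, mem_filter, mem_product]
      exact ⟨⟨⟨hB', hA.1⟩, hA.2, hBA⟩, trivial⟩
  calc D 𝒜 B' ≤ _ := card_le_card hsub
    _ ≤ _ := card_insert_le _ _
    _ ≤ _ := by
      gcongr
      exact card_image_le

lemma fiber_sub (hr : 3 ≤ r) (hv : ValidPair r 3 𝒜 ℬ) {B B'' : Finset ℕ} (hB : B ∈ ℬ)
    (hF : B'' ∈ F ℬ B) :
    (W 𝒜 ℬ B).filter (fun p => B'' ⊆ p.2) ⊆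
    ((B \ B'') ×ˢ (B'' \ B)).image
      (fun q => ((insert q.1 B'').erase q.2, insert q.1 B'')) := by
  rintro ⟨B', A⟩ hp
  simp only [W, mem_filter, mem_product] at hp
  obtain ⟨⟨⟨hN, hA⟩, hBA', hnB⟩, hB''A⟩ := hp
  have hs := N_sdiff hr hv hB hN
  have hB'm : B' ∈ ℬ := (mem_filter.1 hN).1
  obtain ⟨hB''m, hc2⟩ := mem_filter.1 hF
  have cA := hv.1 A hA
  have cB := hv.2.1 B hB
  have cB' := hv.2.1 B' hB'm
  have cB'' := hv.2.1 B'' hB''m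
  have e1 : (A \ B').card = 1 := by rw [card_sdiff_of_subset hBA']; omega
  have e2 : (A \ B'').card = 1 := by rw [card_sdiff_of_subset hB''A]; omega
  obtain ⟨w, hw⟩ := card_eq_one.1 e1
  obtain ⟨z, hz⟩ := card_eq_one.1 e2
  have e3 : (A \ B).card ≤ 2 := by
    have : A \ B ⊆ (A \ B') ∪ (B' \ B) := by
      intro t ht
      simp only [mem_union, mem_sdiff] at ht ⊢
      tauto
    have := card_le_card this
    have := card_union_le (A \ B') (B' \ B)
    omega
  have e4 : B'' \ B = A \ B := by
    apply eq_of_subset_of_card_le (sdiff_subset_sdiff hB''A (le_refl _))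
    omega
  have hzm : z ∈ A \ B'' := by rw [hz]; simp
  have hwm : w ∈ A \ B' := by rw [hw]; simp
  rw [mem_sdiff] at hzm hwm
  have hzB : z ∈ B := by
    by_contra hzB
    have : z ∈ B'' \ B := by rw [e4]; simp [hzm, hzB]
    exact hzm.2 (mem_sdiff.1 this).1
  have hwB : w ∉ B := by
    intro hwB
    have : A \ B ⊆ B' \ B := by
      intro t ht
      rw [mem_sdiff] at ht ⊢
      refine ⟨?_, ht.2⟩
      by_contra htB'
      have : t ∈ A \ B' := by simp [ht, htB']
      rw [hw, mem_singleton] at this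
      subst this
      exact ht.2 hwB
    have := card_le_card this
    rw [← e4] at this
    omega
  have hAz : insert z B'' = A := by
    rw [← sdiff_union_of_subset hB''A, hz, insert_eq]
  have hBw : A.erase w = B' := by
    rw [← sdiff_singleton_eq_erase, ← hw, Finset.sdiff_sdiff_eq_self hBA']
  rw [mem_image]
  refine ⟨(z, w), ?_, ?_⟩
  · simp only [mem_product, mem_sdiff]
    refine ⟨⟨hzB, hzm.2⟩, ?_⟩
    have : w ∈ B'' \ B := by rw [e4]; simp [hwm, hwB]
    exact mem_sdiff.1 this
  · simp only [hAz, hBw]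

lemma image_card (hv : ValidPair r 3 𝒜 ℬ) {B B'' : Finset ℕ} (hB : B ∈ ℬ)
    (hF : B'' ∈ F ℬ B) :
    (((B \ B'') ×ˢ (B'' \ B)).image
      (fun q => ((insert q.1 B'').erase q.2, insert q.1 B''))).card ≤ 4 := by
  obtain ⟨hB''m, hc2⟩ := mem_filter.1 hF
  have cB := hv.2.1 B hB
  have cB'' := hv.2.1 B'' hB''m
  refine card_image_le.trans ?_
  rw [card_product, hc2]
  have h4 := card_sdiff_add_card B'' B
  have h5 := card_sdiff_add_card B B''
  rw [union_comm] at h4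
  have : (B \ B'').card = 2 := by omega
  omega

lemma W_exists (hr : 3 ≤ r) (hv : ValidPair r 3 𝒜 ℬ) {B : Finset ℕ} (hB : B ∈ ℬ)
    {p : Finset ℕ × Finset ℕ} (hp : p ∈ W 𝒜 ℬ B) : ∃ B'' ∈ F ℬ B, B'' ⊆ p.2 := by
  obtain ⟨B', A⟩ := p
  simp only [W, mem_filter, mem_product] at hp
  obtain ⟨⟨hN, hA⟩, hBA', hnB⟩ := hp
  have hs := N_sdiff hr hv hB hN
  have hB'm : B' ∈ ℬ := (mem_filter.1 hN).1
  have cA := hv.1 A hA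
  have cB := hv.2.1 B hB
  have cB' := hv.2.1 B' hB'm
  have hk := hv.2.2 A hA
  have e3 : (A \ B).card ≤ 2 := by
    have h1 : A \ B ⊆ (A \ B') ∪ (B' \ B) := by
      intro t ht
      simp only [mem_union, mem_sdiff] at ht ⊢
      tauto
    have := card_le_card h1
    have := card_union_le (A \ B') (B' \ B)
    have e1 : (A \ B').card = 1 := by rw [card_sdiff_of_subset hBA']; omega
    omega
  by_contra hcon
  push Not at hcon
  have hsub : ℬ.filter (fun X => X ⊆ A) ⊆ (A \ B).image (fun w => A.erase w) := by
    intro X hX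
    rw [mem_filter] at hX
    have cX := hv.2.1 X hX.1
    have e1 : (A \ X).card = 1 := by rw [card_sdiff_of_subset hX.2]; omega
    obtain ⟨w, hw⟩ := card_eq_one.1 e1
    have hXw : A.erase w = X := by
      rw [← sdiff_singleton_eq_erase, ← hw, Finset.sdiff_sdiff_eq_self hX.2]
    rw [mem_image]
    refine ⟨w, ?_, hXw⟩
    have hwm : w ∈ A \ X := by rw [hw]; simp
    rw [mem_sdiff] at hwm ⊢
    refine ⟨hwm.1, fun hwB => ?_⟩
    have hXF : X ∉ F ℬ B := fun h => hcon X h hX.2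
    apply hXF
    simp only [F, mem_filter]
    refine ⟨hX.1, ?_⟩
    have e5 : X \ B = A \ B := by
      rw [← hXw]
      ext t
      simp only [mem_sdiff, mem_erase]
      constructor
      · tauto
      · rintro ⟨h1, h2⟩
        exact ⟨⟨fun h => h2 (h ▸ hwB), h1⟩, h2⟩
    rw [e5]
    have h6 : (A \ B).card ≠ 1 := by
      intro h6
      have h7 := card_sdiff_add_card A B
      have h8 : A = A ∪ B := eq_of_subset_of_card_le subset_union_left (by omega)
      exact hnB (h8 ▸ subset_union_right)
    have h9 : (A \ B).card ≠ 0 := by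
      intro h6
      have h7 := card_sdiff_add_card A B
      have := card_le_card (subset_union_left (s₁ := A) (s₂ := B))
      omega
    omega
  have := (card_le_card hsub).trans card_image_le
  omega

lemma W_le (hr : 3 ≤ r) (hv : ValidPair r 3 𝒜 ℬ) {B : Finset ℕ} (hB : B ∈ ℬ) :
    (W 𝒜 ℬ B).card ≤ ∑ B'' ∈ F ℬ B, ((W 𝒜 ℬ B).filter (fun p => B'' ⊆ p.2)).card := by
  have : W 𝒜 ℬ B ⊆ (F ℬ B).biUnion (fun B'' => (W 𝒜 ℬ B).filter (fun p => B'' ⊆ p.2)) := by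
    intro p hp
    obtain ⟨B'', h1, h2⟩ := W_exists hr hv hB hp
    rw [mem_biUnion]
    exact ⟨B'', h1, by simp [hp, h2]⟩
  exact (card_le_card this).trans card_biUnion_le

lemma fiber_le (hr : 3 ≤ r) (hv : ValidPair r 3 𝒜 ℬ) {B B'' : Finset ℕ} (hB : B ∈ ℬ)
    (hF : B'' ∈ F ℬ B) : ((W 𝒜 ℬ B).filter (fun p => B'' ⊆ p.2)).card ≤ 4 :=
  (card_le_card (fiber_sub hr hv hB hF)).trans (image_card hv hB hF)

lemma W_le4 (hr : 3 ≤ r) (hv : ValidPair r 3 𝒜 ℬ) {B : Finset ℕ} (hB : B ∈ ℬ) :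
    (W 𝒜 ℬ B).card ≤ 4 * (F ℬ B).card := by
  refine (W_le hr hv hB).trans ?_
  rw [mul_comm, ← smul_eq_mul]
  exact sum_le_card_nsmul _ _ _ (fun x hx => fiber_le hr hv hB hx)

lemma perB (hr : 3 ≤ r) (hv : ValidPair r 3 𝒜 ℬ) {B : Finset ℕ} (hB : B ∈ ℬ) :
    ∑ B' ∈ N 𝒜 ℬ B, D 𝒜 B' + 3 * (N 𝒜 ℬ B).card + 4 ≤ 4 * ℬ.card := by
  have h1 := sum_D_le hr hv hB
  have h2 := W_le4 hr hv hB
  obtain ⟨-, h3, h4⟩ := card_F_le hr hv hB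
  have := card_le_card h3
  omega

lemma N_symm {B B' : Finset ℕ} (hB : B ∈ ℬ) (h : B' ∈ N 𝒜 ℬ B) : B ∈ N 𝒜 ℬ B' := by
  simp only [N, mem_filter] at h ⊢
  exact ⟨hB, h.2.1.symm, by rw [union_comm]; exact h.2.2⟩

lemma swap_sum : ∑ B ∈ ℬ, ∑ B' ∈ N 𝒜 ℬ B, D 𝒜 B' = ∑ B ∈ ℬ, (N 𝒜 ℬ B).card * D 𝒜 B := by
  rw [sum_comm' (t' := ℬ) (s' := fun B => N 𝒜 ℬ B)]
  · simp
  · intro x y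
    constructor
    · rintro ⟨h1, h2⟩
      exact ⟨N_symm h1 h2, (mem_filter.1 h2).1⟩
    · rintro ⟨h1, h2⟩
      exact ⟨(mem_filter.1 h1).1, N_symm h2 h1⟩

lemma sum_D_eq : ∑ B ∈ ℬ, D 𝒜 B = ∑ A ∈ 𝒜, (ℬ.filter (fun B => B ⊆ A)).card := by
  simp only [D]
  exact sum_card_bipartiteAbove_eq_sum_card_bipartiteBelow (fun (B A : Finset ℕ) => B ⊆ A)

lemma choose_facts {c m t : ℕ} (hm : m = c.choose 2) (ht : t = c.choose 3) :
    3 * t = m * (c - 2) ∧ 2 * m = c * (c - 1) := by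
  constructor
  · have := Nat.choose_succ_right_eq c 2
    norm_num at this
    rw [hm, ht]
    omega
  · have := Nat.choose_succ_right_eq c 1
    norm_num at this
    rw [hm]
    omega

lemma all_D {c : ℕ} (hr : 3 ≤ r) (hc : 29 ≤ c) (hv : ValidPair r 3 𝒜 ℬ)
    (hb : ℬ.card = c.choose 2) (ha : 𝒜.card = c.choose 3) :
    ∀ B ∈ ℬ, D 𝒜 B = c - 2 := by
  obtain ⟨hf1, hf2⟩ := choose_facts hb ha
  have h1 : 3 * 𝒜.card ≤ ∑ B ∈ ℬ, D 𝒜 B := by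
    rw [sum_D_eq, mul_comm, ← smul_eq_mul]
    exact card_nsmul_le_sum _ _ _ (fun A hA => hv.2.2 A hA)
  have h2 : ∑ B ∈ ℬ, (2 * D 𝒜 B * D 𝒜 B + 3 * (2 * D 𝒜 B) + 4) ≤ ∑ B ∈ ℬ, 4 * ℬ.card := by
    calc _ ≤ ∑ B ∈ ℬ, ((N 𝒜 ℬ B).card * D 𝒜 B + 3 * (N 𝒜 ℬ B).card + 4) := by
          apply sum_le_sum
          intro B hB
          have := two_D_le hr hv hB
          gcongr
      _ = ∑ B ∈ ℬ, (∑ B' ∈ N 𝒜 ℬ B, D 𝒜 B' + 3 * (N 𝒜 ℬ B).card + 4) := by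
          simp only [sum_add_distrib, swap_sum]
      _ ≤ _ := sum_le_sum (fun B hB => perB hr hv hB)
  obtain ⟨e, rfl⟩ : ∃ e, c = e + 2 := ⟨c - 2, by omega⟩
  simp only [Nat.add_sub_cancel] at *
  rw [show e + 2 - 1 = e + 1 by omega] at hf2
  set m := ℬ.card with hm
  have h3 : ∑ B ∈ ℬ, ((D 𝒜 B : ℤ) - e) ^ 2 ≤ 0 := by
    have h1' : (m : ℤ) * e ≤ ∑ B ∈ ℬ, (D 𝒜 B : ℤ) := by
      rw [hf1] at h1
      exact_mod_cast h1
    have h2' : ∑ B ∈ ℬ, (2 * (D 𝒜 B : ℤ) * D 𝒜 B + 3 * (2 * D 𝒜 B) + 4) ≤ m * (4 * m) := by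
      have : (∑ B ∈ ℬ, 4 * m) = m * (4 * m) := by simp [hm]
      rw [this] at h2
      exact_mod_cast h2
    have hf2' : 2 * (m : ℤ) = (e + 2) * (e + 1) := by exact_mod_cast hf2
    have e1 : ∑ B ∈ ℬ, (2 * (D 𝒜 B : ℤ) * D 𝒜 B + 3 * (2 * D 𝒜 B) + 4)
        = 2 * ∑ B ∈ ℬ, ((D 𝒜 B : ℤ) - e) ^ 2 + (4 * e + 6) * ∑ B ∈ ℬ, (D 𝒜 B : ℤ)
          + m * (4 - 2 * e ^ 2) := by
      have : (m : ℤ) * (4 - 2 * e ^ 2) = ∑ B ∈ ℬ, (4 - 2 * (e : ℤ) ^ 2) := by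
        rw [sum_const, nsmul_eq_mul]
      rw [this, mul_sum, mul_sum, ← sum_add_distrib, ← sum_add_distrib]
      apply sum_congr rfl
      intros
      ring
    rw [e1] at h2'
    have h4 : (4 * (e : ℤ) + 6) * (m * e) ≤ (4 * e + 6) * ∑ B ∈ ℬ, (D 𝒜 B : ℤ) :=
      mul_le_mul_of_nonneg_left h1' (by positivity)
    have h5 : (m : ℤ) * (4 * m) = m * (2 * ((e + 2) * (e + 1))) := by rw [← hf2']; ring
    rw [h5] at h2'
    nlinarith
  intro B hB
  have h4 := (sum_eq_zero_iff_of_nonneg (fun B _ => sq_nonneg ((D 𝒜 B : ℤ) - e))).1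
    (le_antisymm h3 (sum_nonneg (fun B _ => sq_nonneg _))) B hB
  have : (D 𝒜 B : ℤ) = e := by
    have := pow_eq_zero_iff (two_ne_zero) |>.1 h4
    linarith
  exact_mod_cast this

lemma all_k {c : ℕ} (hr : 3 ≤ r) (hc : 29 ≤ c) (hv : ValidPair r 3 𝒜 ℬ)
    (hb : ℬ.card = c.choose 2) (ha : 𝒜.card = c.choose 3) :
    ∀ A ∈ 𝒜, (ℬ.filter (fun B => B ⊆ A)).card = 3 := by
  obtain ⟨hf1, hf2⟩ := choose_facts hb ha
  have hD := all_D hr hc hv hb ha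
  have h1 : ∑ A ∈ 𝒜, 3 = ∑ A ∈ 𝒜, (ℬ.filter (fun B => B ⊆ A)).card := by
    rw [← sum_D_eq, sum_congr rfl hD]
    simp only [sum_const, smul_eq_mul]
    omega
  intro A hA
  exact ((sum_eq_sum_iff_of_le (fun A hA => hv.2.2 A hA)).1 h1 A hA).symm

lemma tight_at {c : ℕ} (hr : 3 ≤ r) (hc : 29 ≤ c) (hv : ValidPair r 3 𝒜 ℬ)
    (hb : ℬ.card = c.choose 2) (ha : 𝒜.card = c.choose 3) {B : Finset ℕ} (hB : B ∈ ℬ) :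
    (F ℬ B).Nonempty ∧ (∀ X ∈ ℬ, X ≠ B → B ∪ X ∈ 𝒜 ∨ X ∈ F ℬ B) ∧
    ∀ X ∈ F ℬ B, ∀ z ∈ B \ X, ∀ w ∈ X \ B,
      (insert z X).erase w ∈ ℬ ∧ insert z X ∈ 𝒜 := by
  obtain ⟨hf1, hf2⟩ := choose_facts hb ha
  have hD := all_D hr hc hv hb ha
  have h1 := sum_D_le hr hv hB
  have h2 := W_le4 hr hv hB
  have h5 := two_D_le hr hv hB
  obtain ⟨-, h3, h4⟩ := card_F_le hr hv hB
  have h3' := card_le_card h3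
  rw [sum_congr (g := fun _ => c - 2) rfl (fun X (hX : X ∈ N 𝒜 ℬ B) => hD X (mem_filter.1 hX).1), sum_const, smul_eq_mul] at h1
  rw [hD B hB] at h5
  obtain ⟨e, rfl⟩ : ∃ e, c = e + 2 := ⟨c - 2, by omega⟩
  simp only [Nat.add_sub_cancel] at *
  rw [show e + 2 - 1 = e + 1 by omega] at hf2
  have hh : (N 𝒜 ℬ B).card = 2 * e := by
    apply le_antisymm _ h5
    by_contra hlt
    push Not at hlt
    nlinarith
  rw [hh] at h1 h4
  have hF : (F ℬ B).card + 2 * e + 1 = ℬ.card := by nlinarith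
  have hW : (W 𝒜 ℬ B).card = 4 * (F ℬ B).card := by nlinarith
  refine ⟨?_, ?_, ?_⟩
  · rw [← card_pos]
    nlinarith
  · have heq := eq_of_subset_of_card_le h3 (by omega)
    intro X hX hXB
    rw [← heq, mem_union, mem_insert] at hX
    rcases hX with h | h | h
    · right; exact h
    · exact absurd h hXB
    · left; exact (mem_filter.1 h).2.2
  · intro X hX z hz w hw
    have hsum : ∑ B'' ∈ F ℬ B, ((W 𝒜 ℬ B).filter (fun p => B'' ⊆ p.2)).card
        = ∑ B'' ∈ F ℬ B, 4 := by
      apply le_antisymm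
      · exact sum_le_sum (fun x hx => fiber_le hr hv hB hx)
      · have := W_le hr hv hB
        simp only [sum_const, smul_eq_mul]
        omega
    have hX4 := (sum_eq_sum_iff_of_le (fun x hx => fiber_le hr hv hB hx)).1 hsum X hX
    have heq := eq_of_subset_of_card_le (fiber_sub hr hv hB hX)
      (by rw [hX4]; exact image_card hv hB hX)
    have hm : ((insert z X).erase w, insert z X) ∈
        (W 𝒜 ℬ B).filter (fun p => X ⊆ p.2) := by
      rw [heq, mem_image]
      exact ⟨(z, w), by simp only [mem_product]; exact ⟨hz, hw⟩, rfl⟩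
    simp only [W, N, mem_filter, mem_product] at hm
    exact ⟨hm.1.1.1.1, hm.1.1.2⟩

lemma common {c : ℕ} (hr : 3 ≤ r) (hc : 29 ≤ c) (hv : ValidPair r 3 𝒜 ℬ)
    (hb : ℬ.card = c.choose 2) (ha : 𝒜.card = c.choose 3) :
    ∃ Q : Finset ℕ, Q.card = r - 3 ∧ ∀ B ∈ ℬ, Q ⊆ B := by
  have hk := all_k hr hc hv hb ha
  have hS := fun B (hB : B ∈ ℬ) => tight_at hr hc hv hb ha hB
  have hdist : ∀ X ∈ ℬ, ∀ Y ∈ ℬ, (X \ Y).card ≤ 2 := by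
    intro X hX Y hY
    by_cases hXY : X = Y
    · simp [hXY]
    · rcases (hS Y hY).2.1 X hX hXY with h | h
      · have h1 : X ∈ N 𝒜 ℬ Y := by simp [N, hX, hXY, h]
        have := (N_sdiff hr hv hY h1).1
        omega
      · exact (mem_filter.1 h).2.le
  have hne : ℬ.Nonempty := by
    rw [← card_pos, hb]
    exact Nat.choose_pos (by omega)
  obtain ⟨B0, hB0⟩ := hne
  obtain ⟨⟨B1, hF⟩, -, hsw⟩ := hS B0 hB0
  replace hsw := hsw B1 hF
  obtain ⟨hB1, hc10⟩ := mem_filter.1 hF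
  have c0 := hv.2.1 B0 hB0
  have c1 := hv.2.1 B1 hB1
  have hc01 : (B0 \ B1).card = 2 := by
    have h4 := card_sdiff_add_card B0 B1
    have h5 := card_sdiff_add_card B1 B0
    rw [union_comm] at h4
    omega
  obtain ⟨Q, hQ⟩ : ∃ Q, Q = B0 ∩ B1 := ⟨_, rfl⟩
  have hQc : Q.card = r - 3 := by
    have := card_sdiff_add_card_inter B0 B1
    rw [← hQ] at this
    omega
  obtain ⟨V, hV⟩ : ∃ V, V = (B0 \ B1) ∪ (B1 \ B0) := ⟨_, rfl⟩
  have hVc : V.card = 4 := by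
    rw [hV, card_union_of_disjoint, hc01, hc10]
    rw [disjoint_left]
    intro t h1 h2
    rw [mem_sdiff] at h1 h2
    exact h1.2 h2.1
  have hVQ : ∀ a ∈ V, a ∉ Q := by
    intro a ha1 ha2
    rw [hV, mem_union, mem_sdiff, mem_sdiff] at ha1
    rw [hQ, mem_inter] at ha2
    tauto
  have hQ0 : Q ⊆ B0 := hQ ▸ inter_subset_left
  have hQ1 : Q ⊆ B1 := hQ ▸ inter_subset_right
  have hins : ∀ a ∈ V, ∀ b ∈ V, a ≠ b → ∀ Y ∈ ℬ, Q ⊆ Y → a ∈ Y → b ∈ Y →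
      insert a (insert b Q) ∈ ℬ := by
    intro a haV b hbV hab Y hY hQY haY hbY
    have : insert a (insert b Q) = Y := by
      apply eq_of_subset_of_card_le
      · rw [insert_subset_iff, insert_subset_iff]
        exact ⟨haY, hbY, hQY⟩
      · rw [card_insert_of_notMem (by simp [hab, hVQ a haV]),
          card_insert_of_notMem (hVQ b hbV), hv.2.1 Y hY]
        omega
    rw [this]
    exact hY
  have hmix : ∀ a ∈ B0 \ B1, ∀ b ∈ B1 \ B0, insert a (insert b Q) ∈ ℬ := by
    intro a ha0 b hb1
    obtain ⟨w, hw, hwb⟩ : ∃ w ∈ B1 \ B0, w ≠ b := by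
      exact exists_mem_ne (by omega) b
    have haV : a ∈ V := by rw [hV]; exact mem_union_left _ ha0
    have hbV : b ∈ V := by rw [hV]; exact mem_union_right _ hb1
    have hwV : w ∈ V := by rw [hV]; exact mem_union_right _ hw
    have h1 := (hsw a ha0 w hw).1
    rw [mem_sdiff] at ha0 hb1 hw
    refine hins a haV b hbV (fun h => ha0.2 (h ▸ hb1.1)) _ h1 ?_ ?_ ?_
    · intro t ht
      rw [mem_erase, mem_insert]
      exact ⟨fun h => hVQ w hwV (h ▸ ht), Or.inr (hQ1 ht)⟩
    · rw [mem_erase, mem_insert]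
      exact ⟨fun h => hw.2 (h ▸ ha0.1), Or.inl rfl⟩
    · rw [mem_erase, mem_insert]
      exact ⟨hwb.symm, Or.inr hb1.1⟩
  have hpair : ∀ a ∈ V, ∀ b ∈ V, a ≠ b → insert a (insert b Q) ∈ ℬ := by
    intro a haV b hbV hab
    have ha' := haV
    have hb' := hbV
    rw [hV, mem_union] at ha' hb'
    rcases ha' with h1 | h1 <;> rcases hb' with h2 | h2
    · exact hins a haV b hbV hab B0 hB0 hQ0 (mem_sdiff.1 h1).1 (mem_sdiff.1 h2).1
    · exact hmix a h1 b h2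
    · rw [insert_comm]
      exact hmix b h2 a h1
    · exact hins a haV b hbV hab B1 hB1 hQ1 (mem_sdiff.1 h1).1 (mem_sdiff.1 h2).1
  have htri : ∀ a ∈ V, ∀ b ∈ V, ∀ d ∈ V, a ≠ b → a ≠ d → b ≠ d →
      insert a (insert b (insert d Q)) ∈ 𝒜 := by
    intro a haV b hbV d hdV hab had hbd
    have h1 := hpair a haV b hbV hab
    have h2 := hpair a haV d hdV had
    have hne : insert a (insert d Q) ≠ insert a (insert b Q) := by
      intro h
      have : b ∈ insert a (insert d Q) := by rw [h]; simp
      simp [hab.symm, hbd, hVQ b hbV] at this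
    rcases (hS _ h1).2.1 _ h2 hne with h | h
    · convert h using 1
      ext t
      simp only [mem_union, mem_insert]
      tauto
    · exfalso
      have h3 := (mem_filter.1 h).2
      have h4 : insert a (insert d Q) \ insert a (insert b Q) ⊆ {d} := by
        intro t
        simp only [mem_sdiff, mem_insert, mem_singleton]
        tauto
      have := card_le_card h4
      rw [card_singleton] at this
      omega
  have hfour : ∀ a ∈ V, ∀ b ∈ V, ∀ d ∈ V, a ≠ b → a ≠ d → b ≠ d → ∀ Z ∈ ℬ,
      Z ⊆ insert a (insert b (insert d Q)) → a ∈ Z → b ∈ Z → d ∈ Z → False := by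
    intro a haV b hbV d hdV hab had hbd Z hZ hZA haZ hbZ hdZ
    have h3 := hk _ (htri a haV b hbV d hdV hab had hbd)
    have n1 : d ∉ insert a (insert b Q) := by simp [had.symm, hbd.symm, hVQ d hdV]
    have n2 : b ∉ insert a (insert d Q) := by simp [hab.symm, hbd, hVQ b hbV]
    have n3 : a ∉ insert b (insert d Q) := by simp [hab, had, hVQ a haV]
    have hsub : ({insert a (insert b Q), insert a (insert d Q), insert b (insert d Q), Z} :
        Finset (Finset ℕ)) ⊆
        ℬ.filter (fun B => B ⊆ insert a (insert b (insert d Q))) := by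
      intro X hX
      simp only [mem_insert, mem_singleton] at hX
      rw [mem_filter]
      rcases hX with rfl | rfl | rfl | rfl
      · refine ⟨hpair a haV b hbV hab, ?_⟩
        intro t
        simp only [mem_insert]
        tauto
      · refine ⟨hpair a haV d hdV had, ?_⟩
        intro t
        simp only [mem_insert]
        tauto
      · refine ⟨hpair b hbV d hdV hbd, ?_⟩
        intro t
        simp only [mem_insert]
        tauto
      · exact ⟨hZ, hZA⟩
    have h5 := card_le_card hsub
    rw [h3] at h5
    have m1 : insert a (insert b Q) ≠ insert a (insert d Q) := by
      intro h; apply n1; rw [h]; simp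
    have m2 : insert a (insert b Q) ≠ insert b (insert d Q) := by
      intro h; apply n1; rw [h]; simp
    have m3 : insert a (insert b Q) ≠ Z := by
      intro h; apply n1; rw [h]; exact hdZ
    have m4 : insert a (insert d Q) ≠ insert b (insert d Q) := by
      intro h; apply n2; rw [h]; simp
    have m5 : insert a (insert d Q) ≠ Z := by
      intro h; apply n2; rw [h]; exact hbZ
    have m6 : insert b (insert d Q) ≠ Z := by
      intro h; apply n3; rw [h]; exact haZ
    rw [card_insert_of_notMem (by simp only [mem_insert, mem_singleton]; tauto),
      card_insert_of_notMem (by simp only [mem_insert, mem_singleton]; tauto),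
      card_insert_of_notMem (by simp only [mem_singleton]; tauto), card_singleton] at h5
    omega
  refine ⟨Q, hQc, ?_⟩
  intro B3 hB3 q hq
  by_contra hqB
  have hU : (V \ B3).card ≤ 1 := by
    by_contra hlt
    push Not at hlt
    obtain ⟨a, haU, b, hbU, hab⟩ := one_lt_card.1 hlt
    rw [mem_sdiff] at haU hbU
    have h1 := hdist _ (hpair a haU.1 b hbU.1 hab) B3 hB3
    have h2 : ({q, a, b} : Finset ℕ) ⊆ insert a (insert b Q) \ B3 := by
      intro t ht
      simp only [mem_insert, mem_singleton] at ht
      rw [mem_sdiff, mem_insert, mem_insert]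
      rcases ht with rfl | rfl | rfl
      · exact ⟨Or.inr (Or.inr hq), hqB⟩
      · exact ⟨Or.inl rfl, haU.2⟩
      · exact ⟨Or.inr (Or.inl rfl), hbU.2⟩
    have h3 := card_le_card h2
    have : ({q, a, b} : Finset ℕ).card = 3 :=
      card_eq_three.2 ⟨q, a, b, fun h => hVQ a haU.1 (h ▸ hq), fun h => hVQ b hbU.1 (h ▸ hq),
        hab, rfl⟩
    omega
  have hI : 2 < (V ∩ B3).card := by
    have := card_sdiff_add_card_inter V B3
    omega
  obtain ⟨a, haI, b, hbI, d, hdI, hab, had, hbd⟩ := two_lt_card.1 hI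
  rw [mem_inter] at haI hbI hdI
  by_cases hsub : B3 ⊆ insert a (insert b (insert d Q))
  · exact hfour a haI.1 b hbI.1 d hdI.1 hab had hbd B3 hB3 hsub haI.2 hbI.2 hdI.2
  · obtain ⟨t, htB, htA⟩ := not_subset.1 hsub
    simp only [mem_insert, not_or] at htA
    obtain ⟨hta, htb, htd, htQ⟩ := htA
    have hY := hpair a haI.1 b hbI.1 hab
    have h2 : ({d, t} : Finset ℕ) ⊆ B3 \ insert a (insert b Q) := by
      intro s hs
      simp only [mem_insert, mem_singleton] at hs
      rw [mem_sdiff, mem_insert, mem_insert]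
      rcases hs with rfl | rfl
      · exact ⟨hdI.2, by simp [had.symm, hbd.symm, hVQ _ hdI.1]⟩
      · exact ⟨htB, by simp [hta, htb, htQ]⟩
    have h3 : ({d, t} : Finset ℕ).card = 2 := card_pair (fun h => htd h.symm)
    have h4 := hdist B3 hB3 _ hY
    have h5 : ({d, t} : Finset ℕ) = B3 \ insert a (insert b Q) :=
      eq_of_subset_of_card_le h2 (by omega)
    have h6 : B3 ∈ F ℬ (insert a (insert b Q)) := by
      simp only [F, mem_filter]
      exact ⟨hB3, by rw [← h5, h3]⟩
    have h7 := ((hS _ hY).2.2 B3 h6 q (by simp [hq, hqB]) t (by rw [← h5]; simp)).1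
    refine hfour a haI.1 b hbI.1 d hdI.1 hab had hbd _ h7 ?_ ?_ ?_ ?_
    · intro s hs
      rw [mem_erase, mem_insert] at hs
      obtain ⟨hst, rfl | hs⟩ := hs
      · simp [hq]
      · by_cases hsY : s ∈ insert a (insert b Q)
        · simp only [mem_insert] at hsY ⊢
          tauto
        · have : s ∈ ({d, t} : Finset ℕ) := by rw [h5]; exact mem_sdiff.2 ⟨hs, hsY⟩
          simp only [mem_insert, mem_singleton] at this ⊢
          tauto
    · simp [haI.2, Ne.symm hta]
    · simp [hbI.2, Ne.symm htb]
    · simp [hdI.2, Ne.symm htd]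

end Stmt9Aux

open Stmt9Aux Finset in
theorem stmt_9 (r c : ℕ) (hr : 3 ≤ r) (hc : 29 ≤ c)
    (𝒜 ℬ : Finset (Finset ℕ)) (hvalid : ValidPair r 3 𝒜 ℬ)
    (hb : ℬ.card = c.choose 2) (ha : 𝒜.card = c.choose 3) :
    ∃ S T : Finset ℕ, S.card = r - 3 ∧ T.card = c ∧ Disjoint S T ∧
      ℬ = (T.powersetCard 2).image (fun X => S ∪ X) ∧
      𝒜 = (T.powersetCard 3).image (fun X => S ∪ X) := by
  have hS := fun B (hB : B ∈ ℬ) => tight_at hr hc hvalid hb ha hB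
  obtain ⟨Q, hQc, hQ⟩ := common hr hc hvalid hb ha
  have hAQ : ∀ A ∈ 𝒜, Q ⊆ A ∧ (A \ Q).card = 3 ∧ ∀ x ∈ A \ Q, A.erase x ∈ ℬ := by
    intro A hA
    have h3 := hvalid.2.2 A hA
    have cA := hvalid.1 A hA
    have hne : (ℬ.filter (fun B => B ⊆ A)).Nonempty := by
      rw [← card_pos]; omega
    obtain ⟨B, hB⟩ := hne
    rw [mem_filter] at hB
    have hQA : Q ⊆ A := (hQ B hB.1).trans hB.2
    have hc3 : (A \ Q).card = 3 := by
      rw [card_sdiff_of_subset hQA]; omega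
    refine ⟨hQA, hc3, ?_⟩
    have hsub : ℬ.filter (fun X => X ⊆ A) ⊆ (A \ Q).image (fun w => A.erase w) := by
      intro X hX
      rw [mem_filter] at hX
      have cX := hvalid.2.1 X hX.1
      have e1 : (A \ X).card = 1 := by rw [card_sdiff_of_subset hX.2]; omega
      obtain ⟨w, hw⟩ := card_eq_one.1 e1
      have hXw : A.erase w = X := by
        rw [← sdiff_singleton_eq_erase, ← hw, Finset.sdiff_sdiff_eq_self hX.2]
      rw [mem_image]
      refine ⟨w, ?_, hXw⟩
      have hwm : w ∈ A \ X := by rw [hw]; simp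
      rw [mem_sdiff] at hwm ⊢
      exact ⟨hwm.1, fun h => hwm.2 (hQ X hX.1 h)⟩
    have heq := eq_of_subset_of_card_le hsub (card_image_le.trans (by omega))
    intro x hx
    have : A.erase x ∈ ℬ.filter (fun X => X ⊆ A) := by
      rw [heq, mem_image]
      exact ⟨x, hx, rfl⟩
    exact (mem_filter.1 this).1
  have hBc : ∀ B ∈ ℬ, (B \ Q).card = 2 := by
    intro B hB
    have := hvalid.2.1 B hB
    rw [card_sdiff_of_subset (hQ B hB)]; omega
  obtain ⟨T, hT⟩ : ∃ T, T = ℬ.biUnion (fun B => B \ Q) := ⟨_, rfl⟩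
  have hdisj : Disjoint Q T := by
    rw [disjoint_left]
    intro t htQ htT
    rw [hT, mem_biUnion] at htT
    obtain ⟨B, -, h⟩ := htT
    exact (mem_sdiff.1 h).2 htQ
  have hBT : ∀ B ∈ ℬ, B \ Q ⊆ T := fun B hB => by
    rw [hT]; exact subset_biUnion_of_mem (fun B => B \ Q) hB
  have hget : ∀ u ∈ T, ∀ v ∈ T, u ≠ v → ∃ B ∈ ℬ, u ∈ B ∧ v ∈ B := by
    intro u hu v hv huv
    have huQ : u ∉ Q := fun h => disjoint_left.1 hdisj h hu
    have hvQ : v ∉ Q := fun h => disjoint_left.1 hdisj h hv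
    rw [hT, mem_biUnion] at hu hv
    obtain ⟨B1, hB1, hu1⟩ := hu
    obtain ⟨B2, hB2, hv2⟩ := hv
    rw [mem_sdiff] at hu1 hv2
    by_cases hv1 : v ∈ B1
    · exact ⟨B1, hB1, hu1.1, hv1⟩
    by_cases hu2 : u ∈ B2
    · exact ⟨B2, hB2, hu2, hv2.1⟩
    have hne : B2 ≠ B1 := fun h => hv1 (h ▸ hv2.1)
    rcases (hS B1 hB1).2.1 B2 hB2 hne with h | h
    · obtain ⟨h1, h2, h3⟩ := hAQ _ h
      obtain ⟨w, hw, hwu, hwv⟩ : ∃ w ∈ (B1 ∪ B2) \ Q, w ≠ u ∧ w ≠ v := by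
        by_contra hcon
        push Not at hcon
        have : (B1 ∪ B2) \ Q ⊆ {u, v} := by
          intro t ht
          have := hcon t ht
          simp only [mem_insert, mem_singleton]
          tauto
        have := card_le_card this
        have := card_le_two (a := u) (b := v)
        omega
      refine ⟨_, h3 w hw, ?_, ?_⟩
      · simp [hwu.symm, hu1.1]
      · simp [hwv.symm, hv2.1]
    · have hc2 := (mem_filter.1 h).2
      obtain ⟨w, hw, hwv⟩ : ∃ w ∈ B2 \ B1, w ≠ v := exists_mem_ne (by omega) v
      have h1 := ((hS B1 hB1).2.2 B2 h u (mem_sdiff.2 ⟨hu1.1, hu2⟩) w hw).1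
      refine ⟨_, h1, ?_, ?_⟩
      · simp only [mem_erase, mem_insert, true_or, and_true]
        exact fun h => (mem_sdiff.1 hw).2 (h ▸ hu1.1)
      · simp [hwv.symm, hv2.1]
  have hBeq : ℬ = (T.powersetCard 2).image (fun X => Q ∪ X) := by
    ext B
    rw [mem_image]
    constructor
    · intro hB
      exact ⟨B \ Q, mem_powersetCard.2 ⟨hBT B hB, hBc B hB⟩, union_sdiff_of_subset (hQ B hB)⟩
    · rintro ⟨X, hX, rfl⟩
      rw [mem_powersetCard] at hX
      obtain ⟨u, v, huv, rfl⟩ := card_eq_two.1 hX.2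
      obtain ⟨B, hB, huB, hvB⟩ := hget u (hX.1 (by simp)) v (hX.1 (by simp)) huv
      have huQ : u ∉ Q := fun h => disjoint_left.1 hdisj h (hX.1 (by simp))
      have hvQ : v ∉ Q := fun h => disjoint_left.1 hdisj h (hX.1 (by simp))
      have h1 : ({u, v} : Finset ℕ) = B \ Q := by
        apply eq_of_subset_of_card_le
        · intro t ht
          simp only [mem_insert, mem_singleton] at ht
          rw [mem_sdiff]
          rcases ht with rfl | rfl
          · exact ⟨huB, huQ⟩
          · exact ⟨hvB, hvQ⟩
        · rw [hX.2, hBc B hB]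
      simp only [h1, union_sdiff_of_subset (hQ B hB), hB]
  have hinj : ∀ k, Set.InjOn (fun X => Q ∪ X) (T.powersetCard k : Set (Finset ℕ)) := by
    intro k X hX Y hY hXY
    simp only [mem_coe, mem_powersetCard] at hX hY hXY
    have e1 : ∀ Z ⊆ T, (Q ∪ Z) \ Q = Z := by
      intro Z hZ
      exact union_sdiff_cancel_left (hdisj.mono_right hZ)
    rw [← e1 X hX.1, ← e1 Y hY.1, hXY]
  have hTc : T.card = c := by
    have h1 : T.card.choose 2 = c.choose 2 := by
      rw [← hb, hBeq, card_image_of_injOn (hinj 2), card_powersetCard]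
    have h2 := (choose_facts (c := T.card) rfl rfl).2
    have h3 := (choose_facts (c := c) rfl rfl).2
    rw [h1, h3] at h2
    have hT0 : 1 ≤ T.card := by
      by_contra h
      have : T.card = 0 := by omega
      rw [this] at h2
      have : 0 < c * (c - 1) := Nat.mul_pos (by omega) (by omega)
      omega
    obtain ⟨e, rfl⟩ : ∃ e, c = e + 1 := ⟨c - 1, by omega⟩
    obtain ⟨g, hg⟩ : ∃ g, T.card = g + 1 := ⟨T.card - 1, by omega⟩
    rw [hg] at h2 ⊢
    simp only [Nat.add_sub_cancel] at h2
    rcases lt_trichotomy g e with h | h | h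
    · nlinarith
    · rw [h]
    · nlinarith
  refine ⟨Q, T, hQc, hTc, hdisj, hBeq, ?_⟩
  apply eq_of_subset_of_card_le
  · intro A hA
    obtain ⟨h1, h2, h3⟩ := hAQ A hA
    rw [mem_image]
    refine ⟨A \ Q, mem_powersetCard.2 ⟨?_, h2⟩, union_sdiff_of_subset h1⟩
    intro t ht
    obtain ⟨w, hw, hwt⟩ : ∃ w ∈ A \ Q, w ≠ t := exists_mem_ne (by omega) t
    apply hBT _ (h3 w hw)
    rw [mem_sdiff] at ht ⊢
    exact ⟨mem_erase.2 ⟨hwt.symm, ht.1⟩, ht.2⟩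
  · rw [card_image_of_injOn (hinj 3), card_powersetCard, hTc, ha]
end

section
/- Let k ≥ 1 and let H be a k-uniform hypergraph with vertex set V of size b ≥ 1 and edge set E of size a ≥ 1 (each edge is a k-element subset of V). For i ≥ 1, a walk of length i in H is a sequence (v_0, e_1, v_1, e_2, v_2, ..., e_i, v_i) with each e_j ∈ E and v_{j-1}, v_j ∈ e_j (vertices and edges may repeat). Then the number of walks of length i in H is at least b·(a k² / b)^i. -/
/-- Walks of length `n` starting at `v`. -/
def walksFrom (E : Finset (Finset ℕ)) :
    (n : ℕ) → ℕ → Finset ((Fin (n + 1) → ℕ) × (Fin n → Finset ℕ))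
  | 0, v => {(fun _ => v, Fin.elim0)}
  | n + 1, v => (E.filter (fun e => v ∈ e)).biUnion fun e => e.biUnion fun u =>
      (walksFrom E n u).image (fun w => (Fin.cons v w.1, Fin.cons e w.2))

theorem mem_walksFrom (E : Finset (Finset ℕ)) (n : ℕ) : ∀ (v : ℕ)
    (w : (Fin (n + 1) → ℕ) × (Fin n → Finset ℕ)),
    w ∈ walksFrom E n v ↔ w.1 0 = v ∧
      ∀ j : Fin n, w.2 j ∈ E ∧ w.1 j.castSucc ∈ w.2 j ∧ w.1 j.succ ∈ w.2 j := by
  induction n with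
  | zero =>
    rintro v ⟨w, f⟩
    simp only [walksFrom, Finset.mem_singleton, Prod.mk.injEq]
    constructor
    · rintro ⟨rfl, -⟩
      exact ⟨rfl, fun j => j.elim0⟩
    · rintro ⟨h, -⟩
      refine ⟨?_, ?_⟩
      · funext x
        have hx : x = 0 := Fin.ext (by simp)
        rw [hx]; exact h
      · funext x
        exact x.elim0
  | succ n ih =>
    rintro v ⟨w, f⟩
    simp only [walksFrom, Finset.mem_biUnion, Finset.mem_filter, Finset.mem_image, ih]
    constructor
    · rintro ⟨e, ⟨he, hv⟩, u, hu, ⟨w', f'⟩, ⟨h0, h⟩, heq⟩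
      simp only [Prod.mk.injEq] at heq
      obtain ⟨rfl, rfl⟩ := heq
      refine ⟨rfl, ?_⟩
      intro j
      refine Fin.cases ?_ (fun j => ?_) j
      · refine ⟨he, hv, ?_⟩
        simp only [Fin.cons_succ, Fin.cons_zero]
        simp only at h0
        rw [h0]; exact hu
      · have := h j
        simpa [← Fin.succ_castSucc] using this
    · rintro ⟨h0, h⟩
      refine ⟨f 0, ⟨(h 0).1, ?_⟩, w (Fin.succ 0), (h 0).2.2, (Fin.tail w, Fin.tail f),
        ⟨rfl, ?_⟩, ?_⟩
      · rw [← h0]; exact (h 0).2.1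
      · intro j
        have := h j.succ
        simpa [Fin.tail, ← Fin.succ_castSucc] using this
      · rw [← h0]
        simp [Fin.cons_self_tail]

/-- Number of walks of length `n` starting at `v`. -/
def walkNum (E : Finset (Finset ℕ)) : ℕ → ℕ → ℕ
  | 0, _ => 1
  | n + 1, v => ∑ e ∈ E.filter (fun e => v ∈ e), ∑ u ∈ e, walkNum E n u

theorem card_walksFrom (E : Finset (Finset ℕ)) (n : ℕ) : ∀ v : ℕ,
    (walksFrom E n v).card = walkNum E n v := by
  induction n with
  | zero => intro v; simp [walksFrom, walkNum]
  | succ n ih =>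
    intro v
    rw [walksFrom, walkNum, Finset.card_biUnion]
    · refine Finset.sum_congr rfl fun e _ => ?_
      rw [Finset.card_biUnion]
      · refine Finset.sum_congr rfl fun u _ => ?_
        rw [← ih u]
        apply Finset.card_image_of_injective
        rintro ⟨w, f⟩ ⟨w', f'⟩ h
        simp only [Prod.mk.injEq] at h
        rw [(Fin.cons_right_injective (α := fun _ => ℕ) v h.1 : w = w'),
          (Fin.cons_right_injective (α := fun _ => Finset ℕ) e h.2 : f = f')]
      · intro u _ u' _ huu
        rw [Function.onFun, Finset.disjoint_left]
        intro x hx hx'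
        simp only [Finset.mem_image, mem_walksFrom] at hx hx'
        obtain ⟨y, ⟨hy, -⟩, rfl⟩ := hx
        obtain ⟨z, ⟨hz, -⟩, h⟩ := hx'
        simp only [Prod.mk.injEq] at h
        have : z.1 = y.1 := Fin.cons_right_injective (α := fun _ => ℕ) v h.1
        apply huu
        rw [← hy, ← hz, this]
    · intro e _ e' _ hee
      rw [Function.onFun, Finset.disjoint_left]
      intro x hx hx'
      simp only [Finset.mem_biUnion, Finset.mem_image] at hx hx'
      obtain ⟨u, -, y, -, rfl⟩ := hx
      obtain ⟨u', -, z, -, h⟩ := hx'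
      simp only [Prod.mk.injEq] at h
      have := congrFun h.2 0
      simp only [Fin.cons_zero] at this
      exact hee this.symm

theorem walk_inner (V : Finset ℕ) (E : Finset (Finset ℕ)) (hE : ∀ e ∈ E, e ⊆ V) (m n : ℕ) :
    ∑ v ∈ V, walkNum E m v * walkNum E (n + 1) v =
      ∑ e ∈ E, (∑ u ∈ e, walkNum E m u) * (∑ u ∈ e, walkNum E n u) := by
  simp only [walkNum, Finset.sum_filter, Finset.mul_sum]
  rw [Finset.sum_comm]
  refine Finset.sum_congr rfl fun e he => ?_
  simp only [mul_ite, mul_zero]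
  rw [← Finset.sum_filter, Finset.filter_mem_eq_inter, Finset.inter_eq_right.2 (hE e he)]
  simp only [← Finset.mul_sum, ← Finset.sum_mul]

theorem walk_shift (V : Finset ℕ) (E : Finset (Finset ℕ)) (hE : ∀ e ∈ E, e ⊆ V) (m : ℕ) :
    ∀ n, ∑ v ∈ V, walkNum E m v * walkNum E n v = ∑ v ∈ V, walkNum E (m + n) v := by
  induction m with
  | zero => intro n; simp [walkNum]
  | succ m ih =>
    intro n
    have h := ih (n + 1)
    rw [show m + 1 + n = m + (n + 1) by ring, ← h, walk_inner V E hE]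
    simp only [mul_comm (walkNum E (m + 1) _)]
    rw [walk_inner V E hE]
    simp only [mul_comm]

theorem walk_logconvex (V : Finset ℕ) (E : Finset (Finset ℕ)) (hE : ∀ e ∈ E, e ⊆ V) (n : ℕ) :
    (∑ v ∈ V, walkNum E (n + 1) v) ^ 2 ≤
      (∑ v ∈ V, walkNum E n v) * (∑ v ∈ V, walkNum E (n + 2) v) := by
  rcases Nat.even_or_odd' n with ⟨m, rfl | rfl⟩
  · have h := Finset.sum_mul_sq_le_sq_mul_sq V (walkNum E m) (walkNum E (m + 1))
    simp only [pow_two (walkNum E _ _)] at h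
    rw [walk_shift V E hE, walk_shift V E hE, walk_shift V E hE] at h
    rw [show m + (m + 1) = 2 * m + 1 by ring, show m + m = 2 * m by ring,
      show m + 1 + (m + 1) = 2 * m + 2 by ring] at h
    exact h
  · have h := Finset.sum_mul_sq_le_sq_mul_sq E (fun e => ∑ u ∈ e, walkNum E m u)
      (fun e => ∑ u ∈ e, walkNum E (m + 1) u)
    simp only [pow_two (Finset.sum _ (walkNum E _))] at h
    rw [← walk_inner V E hE, ← walk_inner V E hE, ← walk_inner V E hE,
      walk_shift V E hE, walk_shift V E hE, walk_shift V E hE] at h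
    rw [show m + (m + 1 + 1) = 2 * m + 1 + 1 by ring, show m + (m + 1) = 2 * m + 1 by ring,
      show m + 1 + (m + 1 + 1) = 2 * m + 1 + 2 by ring] at h
    exact h

theorem stmt_11 (k b a i : ℕ) (hk : 1 ≤ k) (hi : 1 ≤ i)
    (V : Finset ℕ) (E : Finset (Finset ℕ))
    (hV : V.card = b) (hE : E.card = a) (hb : 1 ≤ b) (ha : 1 ≤ a)
    (hedge : ∀ e ∈ E, e ⊆ V ∧ e.card = k) :
    (b : ℝ) * ((a * k ^ 2 : ℝ) / b) ^ i ≤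
      Set.ncard {w : (Fin (i + 1) → ℕ) × (Fin i → Finset ℕ) |
        ∀ j : Fin i, w.2 j ∈ E ∧ w.1 j.castSucc ∈ w.2 j ∧ w.1 j.succ ∈ w.2 j} := by
  have hsub : ∀ e ∈ E, e ⊆ V := fun e he => (hedge e he).1
  have hset : {w : (Fin (i + 1) → ℕ) × (Fin i → Finset ℕ) |
        ∀ j : Fin i, w.2 j ∈ E ∧ w.1 j.castSucc ∈ w.2 j ∧ w.1 j.succ ∈ w.2 j} =
      ((V.biUnion (walksFrom E i) : Finset _) : Set _) := by
    ext w
    simp only [Set.mem_ofPred_eq, Finset.coe_biUnion, Set.mem_iUnion, Finset.mem_coe,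
      mem_walksFrom]
    constructor
    · intro h
      have h0 := h ⟨0, hi⟩
      exact ⟨w.1 0, hsub _ h0.1 h0.2.1, rfl, h⟩
    · rintro ⟨v, -, -, h⟩
      exact h
  have hcard : (V.biUnion (walksFrom E i)).card = ∑ v ∈ V, walkNum E i v := by
    rw [Finset.card_biUnion]
    · exact Finset.sum_congr rfl fun v _ => card_walksFrom E i v
    · intro u _ u' _ huu
      rw [Function.onFun, Finset.disjoint_left]
      intro x hx hx'
      rw [mem_walksFrom] at hx hx'
      exact huu (hx.1.symm.trans hx'.1)
  rw [hset, Set.ncard_coe_finset, hcard]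
  clear hset hcard hi
  set W : ℕ → ℝ := fun n => ((∑ v ∈ V, walkNum E n v : ℕ) : ℝ) with hW
  have hb' : (0 : ℝ) < b := by exact_mod_cast hb
  have hc : (0 : ℝ) < (a * k ^ 2 : ℝ) / b := by
    have : (0 : ℝ) < a := by exact_mod_cast ha
    have : (0 : ℝ) < k := by exact_mod_cast hk
    positivity
  set c : ℝ := (a * k ^ 2 : ℝ) / b with hcdef
  have h0 : W 0 = b := by simp [hW, walkNum, hV]
  have h1 : W 1 = c * W 0 := by
    have h := walk_inner V E hsub 0 0
    simp only [walkNum, one_mul, Finset.sum_const, smul_eq_mul, mul_one] at h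
    have h2 : ∑ e ∈ E, e.card * e.card = a * k ^ 2 := by
      rw [Finset.sum_congr rfl (fun e he => by rw [(hedge e he).2]), Finset.sum_const, hE,
        smul_eq_mul, pow_two]
    rw [h0, hcdef, div_mul_cancel₀ _ hb'.ne']
    simp only [hW, walkNum, Finset.sum_const, smul_eq_mul, mul_one]
    rw [h, h2]
    push_cast
    rfl
  have hlc : ∀ n, W (n + 1) ^ 2 ≤ W n * W (n + 2) := fun n => by
    simp only [hW]
    exact_mod_cast walk_logconvex V E hsub n
  have key : ∀ n, 0 < W n ∧ c * W n ≤ W (n + 1) := by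
    intro n
    induction n with
    | zero => exact ⟨by rw [h0]; exact hb', h1.ge⟩
    | succ n ih =>
      obtain ⟨hp, hle⟩ := ih
      have hp' : 0 < W (n + 1) := lt_of_lt_of_le (mul_pos hc hp) hle
      refine ⟨hp', ?_⟩
      have h3 := hlc n
      have h4 : W n * (c * W (n + 1)) ≤ W n * W (n + 2) := by
        nlinarith [mul_le_mul_of_nonneg_right hle hp'.le]
      exact le_of_mul_le_mul_left h4 hp
  have fin : ∀ n, (b : ℝ) * c ^ n ≤ W n := by
    intro n
    induction n with
    | zero => simp [h0]
    | succ n ih =>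
      calc (b : ℝ) * c ^ (n + 1) = c * (b * c ^ n) := by ring
        _ ≤ c * W n := mul_le_mul_of_nonneg_left ih hc.le
        _ ≤ _ := (key n).2
  exact fin i
end

section
/- For every integer k ≥ 2 there exists a constant D > 0 (depending only on k) such that for all integers r ≥ k, every k-valid pair (𝒜, ℬ) with |ℬ| = b ≥ 2 and |𝒜| = a satisfies a ≤ b^{k/(k-1)}·((k−1)!)^{1/(k-1)}/k + D·b·ln b. -/
open Finset in
/-- Weighted partition function of a chain of class-resampling steps. -/
noncomputable def chainZ {α : Type} (cls : ℕ → α → Finset α) (m : ℕ → α → ℝ) (start0 : α → ℝ) :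
    ℕ → α → ℝ
  | 0 => start0
  | p + 1 => fun w' => (∑ w ∈ cls p w', chainZ cls m start0 p w) / m p w'

section chain
open Finset

variable {α : Type} [DecidableEq α]

lemma chainZ_nonneg (cls : ℕ → α → Finset α) (m : ℕ → α → ℝ) (start0 : α → ℝ)
    (hm : ∀ p w, 1 ≤ m p w) (hi : ∀ w, 0 ≤ start0 w) (p : ℕ) (w : α) :
    0 ≤ chainZ cls m start0 p w := by
  induction p generalizing w with
  | zero => exact hi w
  | succ p ih =>
    have := hm p w
    exact div_nonneg (sum_nonneg fun _ _ => ih _) (by linarith)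

lemma chainZ_sum (cls : ℕ → α → Finset α) (m : ℕ → α → ℝ) (Ω : Finset α)
    (sub : ∀ p, ∀ w ∈ Ω, cls p w ⊆ Ω) (p : ℕ) :
    ∀ w ∈ Ω, chainZ cls m (fun _ => 1) p w
      = ∑ s ∈ Ω, chainZ cls m (fun w => if w = s then 1 else 0) p w := by
  induction p with
  | zero => intro w hw; simp [chainZ, hw]
  | succ p ih =>
    intro w hw
    simp only [chainZ]
    rw [← sum_div, sum_comm]
    congr 1
    exact sum_congr rfl fun x hx => ih x (sub p w hw hx)

lemma chainZ_lower (cls : ℕ → α → Finset α) (m : ℕ → α → ℝ) (Ω : Finset α)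
    (sub : ∀ p, ∀ w ∈ Ω, cls p w ⊆ Ω)
    (hrefl : ∀ p, ∀ w ∈ Ω, w ∈ cls p w)
    (hsymm : ∀ p, ∀ w ∈ Ω, ∀ w' ∈ Ω, w' ∈ cls p w → w ∈ cls p w')
    (hcard : ∀ p, ∀ w ∈ Ω, ∀ w' ∈ Ω, w' ∈ cls p w → (cls p w).card = (cls p w').card)
    (hm : ∀ p w, 1 ≤ m p w) (p : ℕ) :
    (∀ w ∈ Ω, 0 < chainZ cls m (fun _ => 1) p w) ∧
    ∑ q ∈ range p, ∑ w ∈ Ω, (Real.log (cls q w).card - Real.log (m q w))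
      ≤ ∑ w ∈ Ω, Real.log (chainZ cls m (fun _ => 1) p w) := by
  induction p with
  | zero => simp [chainZ]
  | succ p ih =>
    obtain ⟨hpos, ih⟩ := ih
    have hsumpos : ∀ w ∈ Ω, 0 < ∑ x ∈ cls p w, chainZ cls m (fun _ => 1) p x := by
      intro w hw
      exact sum_pos (fun x hx => hpos x (sub p w hw hx)) ⟨w, hrefl p w hw⟩
    have hcpos : ∀ w ∈ Ω, (0:ℝ) < (cls p w).card := by
      intro w hw
      exact_mod_cast card_pos.2 ⟨w, hrefl p w hw⟩
    refine ⟨fun w hw => div_pos (hsumpos w hw) (by linarith [hm p w]), ?_⟩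
    rw [sum_range_succ]
    set Z := chainZ cls m (fun _ => 1) p with hZ
    have key : ∀ w ∈ Ω, (Real.log (cls p w).card - Real.log (m p w)) +
        ∑ x ∈ cls p w, (1 / ((cls p w).card : ℝ)) * Real.log (Z x)
        ≤ Real.log (chainZ cls m (fun _ => 1) (p+1) w) := by
      intro w hw
      have hc := hcpos w hw
      have J := (strictConcaveOn_log_Ioi.concaveOn).le_map_sum (t := cls p w)
        (w := fun _ => 1 / ((cls p w).card : ℝ)) (p := Z)
        (fun _ _ => by positivity) (by simp [hc.ne'])
        (fun x hx => hpos x (sub p w hw hx))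
      simp only [smul_eq_mul] at J
      rw [← mul_sum, ← mul_sum, one_div_mul_eq_div, one_div_mul_eq_div] at J
      rw [Real.log_div (hsumpos w hw).ne' hc.ne'] at J
      have e : chainZ cls m (fun _ => 1) (p+1) w = (∑ x ∈ cls p w, Z x) / m p w := rfl
      rw [e, Real.log_div (hsumpos w hw).ne' (by linarith [hm p w]), ← mul_sum,
        one_div_mul_eq_div]
      linarith
    have swap : ∑ w ∈ Ω, ∑ x ∈ cls p w, (1 / ((cls p w).card : ℝ)) * Real.log (Z x)
        = ∑ x ∈ Ω, Real.log (Z x) := by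
      rw [sum_comm' (t' := Ω) (s' := fun x => cls p x)]
      · refine sum_congr rfl fun x hx => ?_
        have : ∀ w ∈ cls p x, 1 / ((cls p w).card : ℝ) * Real.log (Z x)
            = 1 / ((cls p x).card : ℝ) * Real.log (Z x) := by
          intro w hw
          rw [hcard p x hx w (sub p x hx hw) hw]
        rw [sum_congr rfl this, sum_const, nsmul_eq_mul]
        have := hcpos x hx
        field_simp
      · intro w x
        constructor
        · rintro ⟨hw, hx⟩
          exact ⟨hsymm p w hw x (sub p w hw hx) hx, sub p w hw hx⟩
        · rintro ⟨hw, hx⟩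
          exact ⟨sub p x hx hw, hsymm p x hx w (sub p x hx hw) hw⟩
    have := sum_le_sum key
    rw [sum_add_distrib, swap] at this
    linarith

lemma sum_log_le (Ω : Finset α) (hne : Ω.Nonempty) (Z : α → ℝ) (hpos : ∀ w ∈ Ω, 0 < Z w)
    (a : ℝ) (hZ : ∑ w ∈ Ω, Z w ≤ a * Ω.card) :
    ∑ w ∈ Ω, Real.log (Z w) ≤ Ω.card * Real.log a := by
  have hc : (0:ℝ) < Ω.card := by exact_mod_cast card_pos.2 hne
  have hs := sum_pos hpos hne
  have J := (strictConcaveOn_log_Ioi.concaveOn).le_map_sum (t := Ω)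
    (w := fun _ => 1 / (Ω.card : ℝ)) (p := Z)
    (fun _ _ => by positivity) (by simp [hc.ne']) hpos
  simp only [smul_eq_mul] at J
  rw [← mul_sum, ← mul_sum, one_div_mul_eq_div, one_div_mul_eq_div] at J
  have h2 : Real.log ((∑ w ∈ Ω, Z w) / Ω.card) ≤ Real.log a :=
    Real.log_le_log (by positivity) (by rwa [div_le_iff₀ hc])
  rw [div_le_iff₀ hc] at J
  nlinarith

end chain

section perms
open Finset

lemma prod_rank {r : ℕ} (T : Finset (Fin r)) :
    ∏ q ∈ T, (T.filter (· ≤ q)).card = T.card.factorial := by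
  induction T using Finset.induction_on_max with
  | empty => simp
  | insert x T hx ih =>
    have hxT : x ∉ T := fun h => lt_irrefl _ (hx x h)
    rw [prod_insert hxT, card_insert_of_notMem hxT, Nat.factorial_succ, ← ih]
    congr 1
    · rw [filter_true_of_mem, card_insert_of_notMem hxT]
      intro y hy
      rcases mem_insert.1 hy with rfl | h
      · exact le_rfl
      · exact (hx y h).le
    · refine prod_congr rfl fun q hq => ?_
      rw [filter_insert, if_neg (not_le.2 (hx q hq))]

/-- The image of a sequence. -/
def imS {r : ℕ} (w : Fin r → ℕ) : Finset ℕ := univ.image w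

/-- All orderings of members of `𝒜`. -/
def OmS (r : ℕ) (𝒜 : Finset (Finset ℕ)) : Finset (Fin r → ℕ) :=
  (𝒜.biUnion (fun A => Fintype.piFinset fun _ : Fin r => A)).filter
    (fun w => Function.Injective w ∧ imS w ∈ 𝒜)

lemma mem_OmS {r : ℕ} {𝒜 : Finset (Finset ℕ)} {w : Fin r → ℕ} :
    w ∈ OmS r 𝒜 ↔ Function.Injective w ∧ imS w ∈ 𝒜 := by
  unfold OmS
  rw [mem_filter]
  constructor
  · exact fun h => h.2
  · intro h
    refine ⟨mem_biUnion.2 ⟨_, h.2, ?_⟩, h⟩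
    rw [Fintype.mem_piFinset]
    intro i
    exact mem_image_of_mem _ (mem_univ i)

lemma card_fiber {r : ℕ} {𝒜 : Finset (Finset ℕ)} {A : Finset ℕ} (hA : A ∈ 𝒜) (hr : A.card = r) :
    ((OmS r 𝒜).filter (fun w => imS w = A)).card = r.factorial := by
  have : Fintype.card (Fin r ↪ A) = r.factorial := by
    rw [Fintype.card_embedding_eq]; simp [hr, Nat.descFactorial_self]
  rw [← this, ← card_univ]
  symm
  refine card_bij (fun g _ => fun i => (g i : ℕ)) ?_ ?_ ?_
  · intro g _
    have hinj : Function.Injective (fun i => (g i : ℕ)) :=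
      fun i j h => g.injective (Subtype.ext h)
    have him : imS (fun i => (g i : ℕ)) = A := by
      apply eq_of_subset_of_card_le
      · intro x hx
        obtain ⟨i, _, rfl⟩ := mem_image.1 hx
        exact (g i).2
      · unfold imS
        rw [card_image_of_injective _ hinj]; simp [hr]
    rw [mem_filter, mem_OmS, him]
    exact ⟨⟨hinj, hA⟩, rfl⟩
  · intro g _ g' _ h
    ext i
    exact congrFun h i
  · intro w hw
    rw [mem_filter, mem_OmS] at hw
    obtain ⟨⟨hinj, _⟩, him⟩ := hw
    refine ⟨⟨fun i => ⟨w i, ?_⟩, ?_⟩, mem_univ _, rfl⟩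
    · rw [← him]; exact mem_image_of_mem _ (mem_univ i)
    · intro i j h
      exact hinj (Subtype.ext_iff.1 h)

/-- Positions of marked elements. -/
def TS {r : ℕ} (S : Finset ℕ → Finset ℕ) (w : Fin r → ℕ) : Finset (Fin r) :=
  univ.filter (fun q => w q ∈ S (imS w))

lemma image_TS {r : ℕ} (S : Finset ℕ → Finset ℕ) (w : Fin r → ℕ) (hS : S (imS w) ⊆ imS w) :
    (TS S w).image w = S (imS w) := by
  ext x
  simp only [TS, mem_image, mem_filter, mem_univ, true_and]
  constructor
  · rintro ⟨q, hq, rfl⟩; exact hq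
  · intro hx
    obtain ⟨q, _, rfl⟩ := mem_image.1 (hS hx)
    exact ⟨q, hx, rfl⟩

/-- The step relation. -/
def relS {r : ℕ} (S : Finset ℕ → Finset ℕ) (p : ℕ) (w w' : Fin r → ℕ) : Prop :=
  (∀ q : Fin r, q.val ≠ p → w q = w' q) ∧
    (w = w' ∨ ∃ q : Fin r, q.val = p ∧ q ∈ TS S w ∧ q ∈ TS S w')

lemma relS_refl {r : ℕ} (S : Finset ℕ → Finset ℕ) (p : ℕ) (w : Fin r → ℕ) : relS S p w w :=
  ⟨fun _ _ => rfl, Or.inl rfl⟩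

lemma relS_symm {r : ℕ} {S : Finset ℕ → Finset ℕ} {p : ℕ} {w w' : Fin r → ℕ}
    (h : relS S p w w') : relS S p w' w := by
  refine ⟨fun q hq => (h.1 q hq).symm, ?_⟩
  rcases h.2 with h | ⟨q, h1, h2, h3⟩
  · exact Or.inl h.symm
  · exact Or.inr ⟨q, h1, h3, h2⟩

lemma relS_trans {r : ℕ} {S : Finset ℕ → Finset ℕ} {p : ℕ} {w w' w'' : Fin r → ℕ}
    (h : relS S p w w') (h' : relS S p w' w'') : relS S p w w'' := by
  refine ⟨fun q hq => (h.1 q hq).trans (h'.1 q hq), ?_⟩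
  rcases h.2 with h | ⟨q, h1, h2, h3⟩
  · rw [h]; exact h'.2
  · rcases h'.2 with h | ⟨q', h1', h2', h3'⟩
    · rw [← h]; exact Or.inr ⟨q, h1, h2, h3⟩
    · have : q = q' := Fin.ext (by omega)
      subst this
      exact Or.inr ⟨q, h1, h2, h3'⟩

open Classical in
/-- The class of the step relation. -/
noncomputable def clsS (r : ℕ) (𝒜 : Finset (Finset ℕ)) (S : Finset ℕ → Finset ℕ) (p : ℕ)
    (w : Fin r → ℕ) : Finset (Fin r → ℕ) :=
  (OmS r 𝒜).filter (relS S p w)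

open Classical in
/-- The weights. -/
noncomputable def mS {r : ℕ} (S : Finset ℕ → Finset ℕ) (p : ℕ) (w : Fin r → ℕ) : ℝ :=
  if h : p < r then
    (if (⟨p, h⟩ : Fin r) ∈ TS S w then (((TS S w).filter (· ≤ ⟨p, h⟩)).card : ℝ) else 1)
  else 1

lemma mS_ge {r : ℕ} (S : Finset ℕ → Finset ℕ) (p : ℕ) (w : Fin r → ℕ) : 1 ≤ mS S p w := by
  unfold mS
  split_ifs with h h2
  · have : 0 < ((TS S w).filter (· ≤ (⟨p, h⟩ : Fin r))).card :=
      card_pos.2 ⟨⟨p, h⟩, mem_filter.2 ⟨h2, le_rfl⟩⟩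
    exact_mod_cast this
  · exact le_rfl
  · exact le_rfl

lemma sum_log_mS {r k : ℕ} (S : Finset ℕ → Finset ℕ) (w : Fin r → ℕ) (hk : (TS S w).card = k) :
    ∑ p ∈ range r, Real.log (mS S p w) = Real.log (k.factorial) := by
  rw [sum_range]
  have : ∀ i : Fin r, Real.log (mS S i w) =
      if i ∈ TS S w then Real.log (((TS S w).filter (· ≤ i)).card : ℝ) else 0 := by
    intro i
    unfold mS
    rw [dif_pos i.2]
    split_ifs <;> simp
  rw [sum_congr rfl fun i _ => this i, ← sum_filter, filter_mem_eq_inter, univ_inter,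
    ← Real.log_prod, ← hk, ← prod_rank]
  · push_cast; rfl
  · intro q hq
    have : 0 < ((TS S w).filter (· ≤ q)).card :=
      card_pos.2 ⟨q, mem_filter.2 ⟨hq, le_rfl⟩⟩
    positivity

/-- The indicator chain started from `s`. -/
noncomputable def zS (r : ℕ) (𝒜 : Finset (Finset ℕ)) (S : Finset ℕ → Finset ℕ)
    (s : Fin r → ℕ) (p : ℕ) (w : Fin r → ℕ) : ℝ :=
  chainZ (clsS r 𝒜 S) (mS S) (fun w => if w = s then 1 else 0) p w

lemma zS_nonneg (r : ℕ) (𝒜 : Finset (Finset ℕ)) (S : Finset ℕ → Finset ℕ)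
    (s : Fin r → ℕ) (p : ℕ) (w : Fin r → ℕ) : 0 ≤ zS r 𝒜 S s p w :=
  chainZ_nonneg _ _ _ (mS_ge S) (fun w => by positivity) p w

lemma zS_succ (r : ℕ) (𝒜 : Finset (Finset ℕ)) (S : Finset ℕ → Finset ℕ)
    (s : Fin r → ℕ) (p : ℕ) (w : Fin r → ℕ) :
    zS r 𝒜 S s (p+1) w = (∑ x ∈ clsS r 𝒜 S p w, zS r 𝒜 S s p x) / mS S p w := rfl

open Classical in
lemma zS_supp (r : ℕ) (𝒜 : Finset (Finset ℕ)) (S : Finset ℕ → Finset ℕ)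
    (s : Fin r → ℕ) (p : ℕ) : ∀ w, zS r 𝒜 S s p w ≠ 0 → ∀ q : Fin r, p ≤ q.val → w q = s q := by
  induction p with
  | zero =>
    intro w hw q _
    by_cases h : w = s
    · rw [h]
    · simp [zS, chainZ, h] at hw
  | succ p ih =>
    intro w hw q hq
    rw [zS_succ] at hw
    have : ∑ x ∈ clsS r 𝒜 S p w, zS r 𝒜 S s p x ≠ 0 := fun h => hw (by rw [h]; simp)
    obtain ⟨x, hx, hx0⟩ := exists_ne_zero_of_sum_ne_zero this
    unfold clsS at hx
    rw [mem_filter] at hx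
    rw [hx.2.1 q (by omega)]
    exact ih x hx0 q (by omega)

open Classical in
lemma zS_step (r : ℕ) (𝒜 : Finset (Finset ℕ)) (S : Finset ℕ → Finset ℕ)
    (s : Fin r → ℕ) (p : ℕ) (hp : p < r) (w : Fin r → ℕ) :
    ∑ x ∈ clsS r 𝒜 S p w, zS r 𝒜 S s p x =
      if Function.update w ⟨p, hp⟩ (s ⟨p, hp⟩) ∈ clsS r 𝒜 S p w
        then zS r 𝒜 S s p (Function.update w ⟨p, hp⟩ (s ⟨p, hp⟩)) else 0 := by
  rw [← sum_ite_eq' (clsS r 𝒜 S p w) _ (fun x => zS r 𝒜 S s p x)]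
  refine sum_congr rfl fun x hx => ?_
  split_ifs with h
  · rfl
  · by_contra h0
    apply h
    have h1 := zS_supp r 𝒜 S s p x h0
    unfold clsS at hx
    rw [mem_filter] at hx
    ext q
    by_cases hq : q = ⟨p, hp⟩
    · subst hq; rw [Function.update_self]; exact h1 _ le_rfl
    · rw [Function.update_of_ne hq]
      exact (hx.2.1 q (fun h => hq (Fin.ext h))).symm

open Classical in
lemma zS_upper (r : ℕ) (𝒜 : Finset (Finset ℕ)) (S : Finset ℕ → Finset ℕ)
    (hS : ∀ A ∈ 𝒜, S A ⊆ A) (s : Fin r → ℕ) (p : ℕ) (hp : p ≤ r) :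
    ∀ A, ∑ w ∈ (OmS r 𝒜).filter (fun w => imS w = A), zS r 𝒜 S s p w ≤ 1 := by
  induction p with
  | zero =>
    intro A
    simp only [zS, chainZ]
    rw [sum_ite_eq']
    split_ifs <;> norm_num
  | succ p ih =>
    intro A
    have hp' : p < r := hp
    specialize ih (by omega)
    set q0 : Fin r := ⟨p, hp'⟩ with hq0
    simp only [zS_succ, zS_step r 𝒜 S s p hp']
    rw [← hq0]
    by_cases hc : s q0 ∈ A
    · refine le_trans (sum_le_sum fun w hw => ?_) (ih A)
      have hm := mS_ge S p w
      have hz := zS_nonneg r 𝒜 S s p w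
      rw [div_le_iff₀ (by linarith)]
      split_ifs with h
      · have : Function.update w q0 (s q0) = w := by
          rw [mem_filter] at hw
          obtain ⟨hw, him⟩ := hw
          unfold clsS at h
          rw [mem_filter, mem_OmS] at h
          rw [← him] at hc
          obtain ⟨j, _, hj⟩ := mem_image.1 hc
          by_cases hjq : j = q0
          · rw [← hj, hjq, Function.update_eq_self]
          · exfalso
            apply hjq
            apply h.1.1
            rw [Function.update_of_ne hjq, Function.update_self, hj]
        rw [this]; nlinarith
      · positivity
    · set O := (S A).filter (fun e => ∀ q, q0 < q → s q ≠ e) with hO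
      have bound : ∀ w ∈ (OmS r 𝒜).filter (fun w => imS w = A),
          (if Function.update w q0 (s q0) ∈ clsS r 𝒜 S p w
            then zS r 𝒜 S s p (Function.update w q0 (s q0)) else 0) / mS S p w
          ≤ ∑ e ∈ O, if w q0 = e ∧ Function.update w q0 (s q0) ∈ OmS r 𝒜 then
              zS r 𝒜 S s p (Function.update w q0 (s q0)) / O.card else 0 := by
        intro w hw
        rw [mem_filter] at hw
        obtain ⟨hw, him⟩ := hw
        have hwO := mem_OmS.1 hw
        have hrhs : 0 ≤ ∑ e ∈ O, if w q0 = e ∧ Function.update w q0 (s q0) ∈ OmS r 𝒜 then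
              zS r 𝒜 S s p (Function.update w q0 (s q0)) / O.card else 0 := by
          refine sum_nonneg fun e _ => ?_
          have := zS_nonneg r 𝒜 S s p (Function.update w q0 (s q0))
          split_ifs
          · positivity
          · exact le_rfl
        split_ifs with h
        · by_cases hz : zS r 𝒜 S s p (Function.update w q0 (s q0)) = 0
          · rw [hz, zero_div]
            simp
          · unfold clsS at h
            rw [mem_filter] at h
            have hsupp := zS_supp r 𝒜 S s p _ hz
            have hsw : ∀ q, q0 < q → s q = w q := by
              intro q hq
              rw [← hsupp q (le_of_lt hq), Function.update_of_ne (ne_of_gt hq)]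
            have hT : q0 ∈ TS S w := by
              rcases h.2.2 with h' | ⟨q, hq, hq1, _⟩
              · exfalso
                apply hc
                have : w q0 = s q0 := by
                  conv_lhs => rw [h']
                  rw [Function.update_self]
                rw [← this, ← him]
                exact mem_image_of_mem _ (mem_univ _)
              · have : q = q0 := Fin.ext hq
                rwa [← this]
            have hwS : w q0 ∈ S A := by
              rw [← him]; exact (mem_filter.1 hT).2
            have hmem : w q0 ∈ O := by
              rw [hO, mem_filter]
              refine ⟨hwS, fun q hq he => ?_⟩
              rw [hsw q hq] at he
              exact (ne_of_gt hq) (hwO.1 he)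
            have hmO : mS S p w = O.card := by
              unfold mS
              rw [dif_pos hp', if_pos hT]
              congr 1
              rw [← card_image_of_injective _ hwO.1]
              congr 1
              ext x
              simp only [mem_image, mem_filter, hO, TS, mem_univ, true_and]
              constructor
              · rintro ⟨q, ⟨hq1, hq2⟩, rfl⟩
                refine ⟨by rwa [← him], fun q' hq' he => ?_⟩
                rw [hsw q' hq'] at he
                have := hwO.1 he
                subst this
                exact absurd hq2 (not_le.2 hq')
              · rintro ⟨hx, hx2⟩
                have hxA : x ∈ imS w := hS _ hwO.2 (by rwa [him])
                obtain ⟨q, _, rfl⟩ := mem_image.1 hxA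
                refine ⟨q, ⟨by rwa [him], ?_⟩, rfl⟩
                by_contra hlt
                exact hx2 q (not_le.1 hlt) (hsw q (not_le.1 hlt))
            rw [hmO]
            refine le_trans (le_of_eq ?_) (single_le_sum (f := fun e =>
              if w q0 = e ∧ Function.update w q0 (s q0) ∈ OmS r 𝒜 then
              zS r 𝒜 S s p (Function.update w q0 (s q0)) / (O.card : ℝ) else 0) ?_ hmem)
            · rw [if_pos ⟨rfl, h.1⟩]
            · intro e _
              have := zS_nonneg r 𝒜 S s p (Function.update w q0 (s q0))
              split_ifs
              · positivity
              · exact le_rfl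
        · rw [zero_div]; exact hrhs
      refine le_trans (sum_le_sum bound) ?_
      rw [sum_comm]
      have each : ∀ e ∈ O, ∑ w ∈ (OmS r 𝒜).filter (fun w => imS w = A),
          (if w q0 = e ∧ Function.update w q0 (s q0) ∈ OmS r 𝒜 then
              zS r 𝒜 S s p (Function.update w q0 (s q0)) / (O.card : ℝ) else 0)
          ≤ 1 / (O.card : ℝ) := by
        intro e _
        rw [← sum_filter, ← sum_div]
        refine div_le_div_of_nonneg_right ?_ (by positivity)
        refine le_trans ?_ (ih (insert (s q0) (A.erase e)))
        rw [← sum_image (s := filter (fun w => w q0 = e ∧ Function.update w q0 (s q0) ∈ OmS r 𝒜)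
            ((OmS r 𝒜).filter (fun w => imS w = A)))
            (g := fun w => Function.update w q0 (s q0)) (f := fun u => zS r 𝒜 S s p u)]
        · refine sum_le_sum_of_subset_of_nonneg ?_ (fun u _ _ => zS_nonneg r 𝒜 S s p u)
          intro u hu
          obtain ⟨w, hw, rfl⟩ := mem_image.1 hu
          simp only [mem_filter] at hw
          obtain ⟨⟨hw, him⟩, he, hu⟩ := hw
          rw [mem_filter]
          refine ⟨hu, ?_⟩
          have hinj := (mem_OmS.1 hw).1
          ext x
          rw [← him, mem_insert, mem_erase]
          simp only [imS, mem_image, mem_univ, true_and]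
          constructor
          · rintro ⟨q, rfl⟩
            by_cases hq : q = q0
            · left; rw [hq, Function.update_self]
            · right
              rw [Function.update_of_ne hq]
              refine ⟨fun h => hq (hinj (h.trans he.symm)), q, rfl⟩
          · rintro (rfl | ⟨hx, q, rfl⟩)
            · exact ⟨q0, Function.update_self _ _ _⟩
            · refine ⟨q, Function.update_of_ne ?_ _ _⟩
              rintro rfl
              exact hx he
        · intro w hw w' hw' h
          have hw1 := mem_filter.1 hw
          have hw2 := mem_filter.1 hw'
          ext q
          by_cases hq : q = q0
          · rw [hq, hw1.2.1, hw2.2.1]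
          · have := congrFun h q
            simpa [Function.update_of_ne hq] using this
      refine le_trans (sum_le_sum each) ?_
      rw [sum_const, nsmul_eq_mul]
      by_cases h0 : (O.card : ℝ) = 0
      · rw [h0]; norm_num
      · rw [mul_one_div_cancel h0]

end perms

section main
open Finset

/-- Marked extensions of `B`. -/
def DS (𝒜 : Finset (Finset ℕ)) (S : Finset ℕ → Finset ℕ) (B : Finset ℕ) : Finset ℕ :=
  (𝒜.biUnion id).filter (fun x => x ∉ B ∧ insert x B ∈ 𝒜 ∧ x ∈ S (insert x B))

lemma mem_DS {𝒜 : Finset (Finset ℕ)} {S : Finset ℕ → Finset ℕ} {B : Finset ℕ} {x : ℕ} :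
    x ∈ DS 𝒜 S B ↔ x ∉ B ∧ insert x B ∈ 𝒜 ∧ x ∈ S (insert x B) := by
  unfold DS
  rw [mem_filter]
  refine ⟨fun h => h.2, fun h => ⟨mem_biUnion.2 ⟨_, h.2.1, mem_insert_self _ _⟩, h⟩⟩

lemma mem_DS_erase {𝒜 : Finset (Finset ℕ)} {S : Finset ℕ → Finset ℕ}
    (hS : ∀ A ∈ 𝒜, S A ⊆ A) {A : Finset ℕ} (hA : A ∈ 𝒜) {t : ℕ} (ht : t ∈ S A) :
    t ∈ DS 𝒜 S (A.erase t) := by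
  rw [mem_DS, insert_erase (hS A hA ht)]
  exact ⟨notMem_erase _ _, hA, ht⟩

open Classical in
lemma DS_le_cls {r : ℕ} {𝒜 : Finset (Finset ℕ)} {S : Finset ℕ → Finset ℕ}
    (w : Fin r → ℕ) (hw : w ∈ OmS r 𝒜) (q : Fin r) (hq : q ∈ TS S w) :
    (DS 𝒜 S ((imS w).erase (w q))).card ≤ (clsS r 𝒜 S q w).card := by
  have hinj := (mem_OmS.1 hw).1
  refine card_le_card_of_injOn (fun x => Function.update w q x) ?_ ?_
  · intro x hx
    have hx := mem_DS.1 (mem_coe.1 hx)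
    have him : imS (Function.update w q x) = insert x ((imS w).erase (w q)) := by
      ext y
      rw [mem_insert, mem_erase]
      simp only [imS, mem_image, mem_univ, true_and]
      constructor
      · rintro ⟨j, rfl⟩
        by_cases hj : j = q
        · left; rw [hj, Function.update_self]
        · right
          rw [Function.update_of_ne hj]
          exact ⟨fun h => hj (hinj h), j, rfl⟩
      · rintro (rfl | ⟨hy, j, rfl⟩)
        · exact ⟨q, Function.update_self _ _ _⟩
        · refine ⟨j, Function.update_of_ne ?_ _ _⟩
          rintro rfl
          exact hy rfl
    have hnot : ∀ j, j ≠ q → w j ≠ x := by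
      intro j hj h
      apply hx.1
      rw [← h, mem_erase]
      exact ⟨fun h => hj (hinj h), mem_image_of_mem _ (mem_univ _)⟩
    rw [mem_coe]
    show Function.update w q x ∈ _
    unfold clsS
    rw [mem_filter, mem_OmS]
    refine ⟨⟨?_, by rw [him]; exact hx.2.1⟩, ?_, Or.inr ⟨q, rfl, hq, ?_⟩⟩
    · intro i j h
      by_cases hi : i = q <;> by_cases hj : j = q
      · rw [hi, hj]
      · rw [hi, Function.update_self, Function.update_of_ne hj] at h
        exact absurd h.symm (hnot j hj)
      · rw [hj, Function.update_self, Function.update_of_ne hi] at h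
        exact absurd h (hnot i hi)
      · rw [Function.update_of_ne hi, Function.update_of_ne hj] at h
        exact hinj h
    · intro j hj
      rw [Function.update_of_ne (fun h : j = q => hj (by rw [h]))]
    · simp only [TS, mem_filter, mem_univ, true_and, Function.update_self]
      rw [him]; exact hx.2.2
  · intro x _ y _ h
    have := congrFun h q
    simpa using this

lemma sum_inv_DS {𝒜 ℬ : Finset (Finset ℕ)} {S : Finset ℕ → Finset ℕ}
    (hS : ∀ A ∈ 𝒜, S A ⊆ A) (hB : ∀ A ∈ 𝒜, ∀ t ∈ S A, A.erase t ∈ ℬ) :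
    ∑ A ∈ 𝒜, ∑ t ∈ S A, 1 / ((DS 𝒜 S (A.erase t)).card : ℝ) ≤ ℬ.card := by
  have : ∑ A ∈ 𝒜, ∑ t ∈ S A, 1 / ((DS 𝒜 S (A.erase t)).card : ℝ)
      ≤ ∑ B ∈ ℬ, ∑ x ∈ DS 𝒜 S B, 1 / ((DS 𝒜 S B).card : ℝ) := by
    rw [sum_sigma', sum_sigma']
    refine le_of_eq (sum_bij' (fun a _ => ⟨a.1.erase a.2, a.2⟩) (fun b _ => ⟨insert b.2 b.1, b.2⟩)
      ?_ ?_ ?_ ?_ ?_)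
    · rintro ⟨A, t⟩ h
      rw [mem_sigma] at h ⊢
      exact ⟨hB A h.1 t h.2, mem_DS_erase hS h.1 h.2⟩
    · rintro ⟨B, x⟩ h
      rw [mem_sigma] at h ⊢
      have := mem_DS.1 h.2
      exact ⟨this.2.1, this.2.2⟩
    · rintro ⟨A, t⟩ h
      rw [mem_sigma] at h
      simp only []
      rw [insert_erase (hS A h.1 h.2)]
    · rintro ⟨B, x⟩ h
      rw [mem_sigma] at h
      have := mem_DS.1 h.2
      simp only []
      rw [erase_insert this.1]
    · rintro ⟨A, t⟩ h
      rfl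
  refine this.trans ?_
  rw [card_eq_sum_ones, Nat.cast_sum]
  refine sum_le_sum fun B _ => ?_
  rw [sum_const, nsmul_eq_mul]
  by_cases h0 : ((DS 𝒜 S B).card : ℝ) = 0
  · rw [h0]; norm_num
  · rw [mul_one_div_cancel h0]; norm_num

lemma sum_fiber {r : ℕ} {𝒜 : Finset (Finset ℕ)} (hA : ∀ A ∈ 𝒜, A.card = r)
    (g : Finset ℕ → ℝ) :
    ∑ w ∈ OmS r 𝒜, g (imS w) = r.factorial * ∑ A ∈ 𝒜, g A := by
  rw [← sum_fiberwise_of_maps_to (t := 𝒜) (g := imS) (fun w hw => (mem_OmS.1 hw).2), mul_sum]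
  refine sum_congr rfl fun A hAm => ?_
  rw [← card_fiber hAm (hA A hAm), ← nsmul_eq_mul, ← sum_const]
  exact sum_congr rfl fun w hw => by rw [(mem_filter.1 hw).2]

open Classical in
lemma main_log {r k : ℕ} {𝒜 ℬ : Finset (Finset ℕ)} {S : Finset ℕ → Finset ℕ}
    (hk : 0 < k) (hne : 𝒜.Nonempty)
    (hA : ∀ A ∈ 𝒜, A.card = r) (hS : ∀ A ∈ 𝒜, S A ⊆ A) (hSk : ∀ A ∈ 𝒜, (S A).card = k)
    (hB : ∀ A ∈ 𝒜, ∀ t ∈ S A, A.erase t ∈ ℬ) :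
    k * Real.log (k * 𝒜.card / ℬ.card) ≤ Real.log 𝒜.card + Real.log k.factorial := by
  set Ω := OmS r 𝒜 with hΩ
  have hapos : (0:ℝ) < 𝒜.card := by exact_mod_cast card_pos.2 hne
  have hbpos : (0:ℝ) < ℬ.card := by
    obtain ⟨A, hAm⟩ := hne
    obtain ⟨t, ht⟩ : (S A).Nonempty := card_pos.1 (by rw [hSk A hAm]; exact hk)
    exact_mod_cast card_pos.2 ⟨_, hB A hAm t ht⟩
  have hΩc : (Ω.card : ℝ) = r.factorial * 𝒜.card := by
    have := sum_fiber hA (fun _ => (1:ℝ))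
    simpa using this
  have hΩpos : (0:ℝ) < Ω.card := by rw [hΩc]; positivity
  have hΩne : Ω.Nonempty := card_pos.1 (by exact_mod_cast hΩpos)
  have hsub : ∀ p, ∀ w ∈ Ω, clsS r 𝒜 S p w ⊆ Ω := fun p w _ => filter_subset _ _
  have hlow := chainZ_lower (clsS r 𝒜 S) (mS S) Ω hsub
    (fun p w hw => mem_filter.2 ⟨hw, relS_refl S p w⟩)
    (fun p w hw w' _ h => mem_filter.2 ⟨hw, relS_symm (mem_filter.1 h).2⟩)
    (fun p w _ w' _ h => by
      congr 1
      have h1 := (mem_filter.1 h).2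
      ext x
      unfold clsS
      rw [mem_filter, mem_filter]
      exact and_congr_right fun _ => ⟨fun h2 => relS_trans (relS_symm h1) h2,
        fun h2 => relS_trans h1 h2⟩)
    (mS_ge S) r
  have hup : ∑ w ∈ Ω, chainZ (clsS r 𝒜 S) (mS S) (fun _ => 1) r w ≤ 𝒜.card * Ω.card := by
    rw [sum_congr rfl (chainZ_sum (clsS r 𝒜 S) (mS S) Ω hsub r), sum_comm]
    have : ∀ s ∈ Ω, ∑ w ∈ Ω, chainZ (clsS r 𝒜 S) (mS S) (fun w => if w = s then 1 else 0) r w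
        ≤ 𝒜.card := by
      intro s _
      rw [← sum_fiberwise_of_maps_to (t := 𝒜) (g := imS) (fun w hw => (mem_OmS.1 hw).2)]
      refine le_trans (sum_le_sum (g := fun _ => (1:ℝ)) fun A _ => ?_) (by simp)
      exact zS_upper r 𝒜 S hS s r le_rfl A
    refine le_trans (sum_le_sum this) ?_
    rw [sum_const, nsmul_eq_mul, mul_comm]
  have h1 := hlow.2.trans (sum_log_le Ω hΩne _ hlow.1 _ hup)
  rw [sum_comm] at h1
  set lam : ℝ := k * 𝒜.card / ℬ.card with hlam
  have hlampos : 0 < lam := by positivity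
  have h2 : ∀ w ∈ Ω, ∑ t ∈ S (imS w), (Real.log lam + 1
        - lam * (1 / ((DS 𝒜 S ((imS w).erase t)).card : ℝ))) - Real.log k.factorial ≤
      ∑ p ∈ range r, (Real.log (clsS r 𝒜 S p w).card - Real.log (mS S p w)) := by
    intro w hw
    have hwm := mem_OmS.1 hw
    have hTk : (TS S w).card = k := by
      rw [← hSk _ hwm.2, ← image_TS S w (hS _ hwm.2), card_image_of_injective _ hwm.1]
    rw [sum_sub_distrib (s := range r), sum_log_mS S w hTk]
    refine sub_le_sub_right ?_ _
    rw [sum_range]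
    rw [← image_TS S w (hS _ hwm.2), sum_image (fun a _ b _ h => hwm.1 h)]
    refine le_trans (sum_le_sum (g := fun q : Fin r =>
      Real.log ((clsS r 𝒜 S q w).card : ℝ)) ?_) ?_
    · intro q hq
      have hd : 0 < (DS 𝒜 S ((imS w).erase (w q))).card :=
        card_pos.2 ⟨w q, mem_DS_erase hS hwm.2 (mem_filter.1 hq).2⟩
      have hd' : (0:ℝ) < (DS 𝒜 S ((imS w).erase (w q))).card := by exact_mod_cast hd
      have hle : ((DS 𝒜 S ((imS w).erase (w q))).card : ℝ) ≤ (clsS r 𝒜 S q w).card := by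
        exact_mod_cast DS_le_cls w hw q hq
      have hl := Real.log_le_log hd' hle
      have h3 := Real.log_le_sub_one_of_pos (div_pos hlampos hd')
      rw [Real.log_div hlampos.ne' hd'.ne'] at h3
      rw [mul_one_div]
      linarith
    · refine sum_le_sum_of_subset_of_nonneg (subset_univ _) (fun q _ _ => ?_)
      exact Real.log_natCast_nonneg _
  have h3 := (sum_le_sum h2).trans h1
  rw [sum_fiber hA (fun A => ∑ t ∈ S A, (Real.log lam + 1
        - lam * (1 / ((DS 𝒜 S (A.erase t)).card : ℝ))) - Real.log k.factorial)] at h3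
  have h4 : ∑ A ∈ 𝒜, (∑ t ∈ S A, (Real.log lam + 1
        - lam * (1 / ((DS 𝒜 S (A.erase t)).card : ℝ))) - Real.log k.factorial)
      = 𝒜.card * (k * (Real.log lam + 1)) - 
        lam * ∑ A ∈ 𝒜, ∑ t ∈ S A, (1 / ((DS 𝒜 S (A.erase t)).card : ℝ))
        - 𝒜.card * Real.log k.factorial := by
    rw [sum_sub_distrib, sum_const, nsmul_eq_mul]
    congr 1
    rw [mul_sum, ← nsmul_eq_mul, ← sum_const, ← sum_sub_distrib]
    refine sum_congr rfl fun A hAm => ?_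
    rw [sum_sub_distrib, sum_const, hSk A hAm, nsmul_eq_mul, mul_sum]
  rw [h4, hΩc, mul_assoc] at h3
  have hrpos : (0:ℝ) < r.factorial := by positivity
  have h5 := le_of_mul_le_mul_left h3 hrpos
  have h6 := mul_le_mul_of_nonneg_left (sum_inv_DS hS hB) hlampos.le
  have h7 : lam * ℬ.card = k * 𝒜.card := by rw [hlam]; field_simp
  rw [h7] at h6
  refine le_of_mul_le_mul_left (?_ : (𝒜.card : ℝ) * _ ≤ 𝒜.card * _) hapos
  nlinarith

lemma exists_marks {r k : ℕ} (hr : 1 ≤ r) {𝒜 ℬ : Finset (Finset ℕ)} (h : ValidPair r k 𝒜 ℬ) :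
    ∃ S : Finset ℕ → Finset ℕ, ∀ A ∈ 𝒜, S A ⊆ A ∧ (S A).card = k ∧ ∀ t ∈ S A, A.erase t ∈ ℬ := by
  obtain ⟨h1, h2, h3⟩ := h
  have : ∀ A, ∃ T : Finset ℕ, A ∈ 𝒜 → T ⊆ A ∧ T.card = k ∧ ∀ t ∈ T, A.erase t ∈ ℬ := by
    intro A
    by_cases hA : A ∈ 𝒜
    · have hle : k ≤ (A.filter (fun t => A.erase t ∈ ℬ)).card := by
        refine (h3 A hA).trans ?_
        refine le_trans (card_le_card ?_) (card_image_le (f := fun t => A.erase t))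
        intro B hB
        rw [mem_filter] at hB
        have hc := card_sdiff_of_subset hB.2
        rw [h1 A hA, h2 B hB.1] at hc
        obtain ⟨t, ht⟩ := card_eq_one.1 (show (A \ B).card = 1 by omega)
        have htA : t ∈ A \ B := by rw [ht]; exact mem_singleton_self t
        have he : A.erase t = B := by
          rw [erase_eq, ← ht, Finset.sdiff_sdiff_eq_self hB.2]
        rw [mem_image]
        exact ⟨t, mem_filter.2 ⟨(mem_sdiff.1 htA).1, by rw [he]; exact hB.1⟩, he⟩
      obtain ⟨T, hT, hTk⟩ := exists_subset_card_eq hle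
      exact ⟨T, fun _ => ⟨hT.trans (filter_subset _ _), hTk, fun t ht => (mem_filter.1 (hT ht)).2⟩⟩
    · exact ⟨∅, fun h => absurd h hA⟩
  choose S hS using this
  exact ⟨S, hS⟩

end main

theorem stmt_12 (k : ℕ) (hk : 2 ≤ k) :
    ∃ D : ℝ, 0 < D ∧ ∀ r : ℕ, k ≤ r → ∀ 𝒜 ℬ : Finset (Finset ℕ),
      ValidPair r k 𝒜 ℬ → 2 ≤ ℬ.card →
      (𝒜.card : ℝ) ≤
        (ℬ.card : ℝ) ^ ((k : ℝ) / ((k : ℝ) - 1)) *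
            (((k - 1).factorial : ℝ)) ^ (1 / ((k : ℝ) - 1)) / k +
          D * ℬ.card * Real.log ℬ.card := by
  refine ⟨1, one_pos, fun r hr 𝒜 ℬ hv hb => ?_⟩
  have hb' : (2:ℝ) ≤ ℬ.card := by exact_mod_cast hb
  have hk' : (2:ℝ) ≤ k := by exact_mod_cast hk
  have hlog : 0 ≤ (1:ℝ) * ℬ.card * Real.log ℬ.card := by
    have := Real.log_nonneg (show (1:ℝ) ≤ ℬ.card by linarith)
    positivity
  refine le_trans ?_ (le_add_of_nonneg_right hlog)
  rcases 𝒜.eq_empty_or_nonempty with rfl | hne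
  · simp only [Finset.card_empty, Nat.cast_zero]; positivity
  obtain ⟨S, hS⟩ := exists_marks (by omega) hv
  have key := main_log (k := k) (r := r) (ℬ := ℬ) (S := S) (by omega) hne hv.1
    (fun A hA => (hS A hA).1) (fun A hA => (hS A hA).2.1) (fun A hA => (hS A hA).2.2)
  have ha : (0:ℝ) < 𝒜.card := by exact_mod_cast Finset.card_pos.2 hne
  have hfac : (k.factorial : ℝ) = k * (k-1).factorial := by
    rw [← Nat.mul_factorial_pred (by omega : k ≠ 0)]; push_cast; rfl
  have hf1 : (0:ℝ) < (k-1).factorial := by positivity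
  have hk0 : (0:ℝ) < k := by linarith
  have hb0 : (0:ℝ) < ℬ.card := by linarith
  rw [hfac, Real.log_div (by positivity) hb0.ne', Real.log_mul hk0.ne' ha.ne',
    Real.log_mul hk0.ne' hf1.ne'] at key
  rw [← Real.log_le_log_iff ha (by positivity), Real.log_div (by positivity) hk0.ne',
    Real.log_mul (by positivity) (by positivity), Real.log_rpow hb0, Real.log_rpow hf1]
  have hk1 : (0:ℝ) < k - 1 := by linarith
  rw [← sub_nonneg]
  have : (k:ℝ) / (k - 1) * Real.log ℬ.card + 1 / ((k:ℝ) - 1) * Real.log ((k-1).factorial)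
      - Real.log k - Real.log 𝒜.card
      = (Real.log 𝒜.card + (Real.log k + Real.log ((k-1).factorial)) -
        k * (Real.log k + Real.log 𝒜.card - Real.log ℬ.card)) / (k - 1) := by
    field_simp
    ring
  rw [this]
  exact div_nonneg (by linarith) hk1.le
end

section
/- For every integer k ≥ 2 and every real C > 0 and ε > 0, there exists b_0 (depending only on k, C, ε) such that the following holds for all integers r ≥ k: if (𝒜, ℬ) is a k-valid pair with |ℬ| = b ≥ b_0 and |𝒜| ≥ b^{k/(k-1)}·((k−1)!)^{1/(k-1)}/k − C·b·ln b, then there exists a set S ⊆ ℕ with |S| = r − k such that S is a subset of at least (1−ε)·b of the elements of ℬ. -/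
/-- Kruskal–Katona (Lovász-type bound), power form. -/
lemma kk_pow (m : ℕ) : ∀ 𝒢 𝒮 : Finset (Finset ℕ), 𝒢.Nonempty →
    (∀ G ∈ 𝒢, G.card = m + 1) → (∀ T ∈ 𝒮, T.card = m) →
    (∀ G ∈ 𝒢, ∀ x ∈ G, G.erase x ∈ 𝒮) →
    ((m + 1 : ℝ) * 𝒢.card) ^ m ≤ (m.factorial : ℝ) * (𝒮.card : ℝ) ^ (m + 1) := by
  induction m with
  | zero =>
    intro 𝒢 𝒮 hne hG hT hs
    obtain ⟨G, hG1⟩ := hne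
    have h1 := hG G hG1
    obtain ⟨x, hx⟩ : G.Nonempty := by
      rw [← Finset.card_pos]; omega
    have : 0 < 𝒮.card := Finset.card_pos.mpr ⟨_, hs G hG1 x hx⟩
    simp only [pow_zero, Nat.factorial_zero, Nat.cast_one, one_mul, zero_add, pow_one]
    exact_mod_cast this
  | succ m ih =>
    intro 𝒢 𝒮 hne hG hT hs
    obtain ⟨θ, hθ0, hθ⟩ : ∃ θ : ℝ, 0 ≤ θ ∧ θ ^ (m + 1) = ((m + 1).factorial : ℝ) * 𝒮.card := by
      refine ⟨(((m + 1).factorial : ℝ) * 𝒮.card) ^ (((m + 1 : ℕ) : ℝ)⁻¹), by positivity, ?_⟩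
      rw [Real.rpow_inv_natCast_pow (by positivity) (by omega)]
    -- ground set
    set V : Finset ℕ := 𝒢.biUnion id ∪ 𝒮.biUnion id with hV
    have link : ∀ v : ℕ, ((m + 1 : ℝ)) * ((𝒢.filter (fun G => v ∈ G)).card : ℝ) ≤
        θ * ((𝒮.filter (fun T => v ∈ T)).card : ℝ) := by
      intro v
      rcases (𝒢.filter (fun G => v ∈ G)).eq_empty_or_nonempty with h0 | h0
      · rw [h0]; simp; positivity
      have hinj : ∀ ℱ : Finset (Finset ℕ), ((ℱ.filter (fun G => v ∈ G)).image (fun G => G.erase v)).card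
          = (ℱ.filter (fun G => v ∈ G)).card := by
        intro ℱ
        apply Finset.card_image_of_injOn
        intro G hG G' hG' h
        simp only [Finset.coe_filter, Set.mem_ofPred_eq] at hG hG'
        have h' : G.erase v = G'.erase v := h
        rw [← Finset.insert_erase hG.2, h', Finset.insert_erase hG'.2]
      have := ih ((𝒢.filter (fun G => v ∈ G)).image (fun G => G.erase v))
        ((𝒮.filter (fun G => v ∈ G)).image (fun G => G.erase v)) (h0.image _)
        (by
          intro G hG'
          simp only [Finset.mem_image, Finset.mem_filter] at hG'
          obtain ⟨G', ⟨h1, h2⟩, rfl⟩ := hG'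
          rw [Finset.card_erase_of_mem h2, hG _ h1]; omega)
        (by
          intro G hG'
          simp only [Finset.mem_image, Finset.mem_filter] at hG'
          obtain ⟨G', ⟨h1, h2⟩, rfl⟩ := hG'
          rw [Finset.card_erase_of_mem h2, hT _ h1]; omega)
        (by
          intro G hG' x hx
          simp only [Finset.mem_image, Finset.mem_filter] at hG' ⊢
          obtain ⟨G', ⟨h1, h2⟩, rfl⟩ := hG'
          rw [Finset.mem_erase] at hx
          refine ⟨G'.erase x, ⟨hs _ h1 x hx.2, Finset.mem_erase.2 ⟨hx.1.symm, h2⟩⟩, ?_⟩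
          exact Finset.erase_right_comm)
      rw [hinj, hinj] at this
      have hle : ((𝒢.filter (fun G => v ∈ G)).card : ℝ) ≤ 𝒮.card := by
        rw [← hinj]
        norm_cast
        apply Finset.card_le_card
        intro G hG'
        simp only [Finset.mem_image, Finset.mem_filter] at hG'
        obtain ⟨G', ⟨h1, h2⟩, rfl⟩ := hG'
        exact hs _ h1 v h2
      apply le_of_pow_le_pow_left₀ (n := m + 1) (by omega) (by positivity)
      rw [mul_pow θ, hθ, pow_succ]
      calc _ ≤ ((m.factorial : ℝ) * ((𝒮.filter (fun T => v ∈ T)).card : ℝ) ^ (m + 1)) *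
            ((m + 1 : ℝ) * 𝒮.card) := by gcongr
        _ = _ := by rw [Nat.factorial_succ]; push_cast; ring
    have sumdeg : ∀ ℱ : Finset (Finset ℕ), ∀ c : ℕ, (∀ F ∈ ℱ, F ⊆ V ∧ F.card = c) →
        ∑ v ∈ V, ((ℱ.filter (fun G => v ∈ G)).card : ℝ) = c * ℱ.card := by
      intro ℱ c h
      have := Finset.sum_card_bipartiteAbove_eq_sum_card_bipartiteBelow (s := V) (t := ℱ)
        (fun (v : ℕ) (F : Finset ℕ) => v ∈ F)
      unfold Finset.bipartiteAbove Finset.bipartiteBelow at this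
      norm_cast
      rw [this, Finset.sum_congr rfl (g := fun _ => c), Finset.sum_const, smul_eq_mul, mul_comm]
      intro F hF
      rw [Finset.filter_mem_eq_inter, Finset.inter_eq_right.2 (h F hF).1, (h F hF).2]
    have s1 := sumdeg 𝒢 (m + 2) (fun F hF => ⟨fun x hx => by
      rw [hV]; simp only [Finset.mem_union, Finset.mem_biUnion, id]; exact Or.inl ⟨F, hF, hx⟩, hG F hF⟩)
    have s2 := sumdeg 𝒮 (m + 1) (fun F hF => ⟨fun x hx => by
      rw [hV]; simp only [Finset.mem_union, Finset.mem_biUnion, id]; exact Or.inr ⟨F, hF, hx⟩, hT F hF⟩)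
    have h3 := Finset.sum_le_sum (s := V) (fun v _ => link v)
    rw [← Finset.mul_sum, ← Finset.mul_sum, s1, s2] at h3
    push_cast at h3
    have h4 : ((m : ℝ) + 2) * 𝒢.card ≤ θ * 𝒮.card := by
      have : (0 : ℝ) < m + 1 := by positivity
      refine le_of_mul_le_mul_left ?_ this
      linarith
    have h5 : (((m + 1 : ℕ) : ℝ) + 1) * 𝒢.card ≤ θ * 𝒮.card := by
      refine le_trans (le_of_eq ?_) h4
      push_cast; ring
    refine (pow_le_pow_left₀ (by positivity) h5 (m + 1)).trans (le_of_eq ?_)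
    rw [mul_pow, hθ]; ring

/-- Kruskal–Katona, linear form with an explicit root. -/
lemma kk_lin (m : ℕ) (hm : 1 ≤ m) (𝒢 𝒮 : Finset (Finset ℕ))
    (hG : ∀ G ∈ 𝒢, G.card = m + 1) (hT : ∀ T ∈ 𝒮, T.card = m)
    (hs : ∀ G ∈ 𝒢, ∀ x ∈ G, G.erase x ∈ 𝒮) (θ : ℝ) (hθ0 : 0 ≤ θ)
    (hθ : (m.factorial : ℝ) * 𝒮.card ≤ θ ^ m) :
    (m + 1 : ℝ) * 𝒢.card ≤ θ * 𝒮.card := by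
  rcases 𝒢.eq_empty_or_nonempty with h0 | h0
  · rw [h0]; simp; positivity
  have := kk_pow m 𝒢 𝒮 h0 hG hT hs
  apply le_of_pow_le_pow_left₀ (n := m) (by omega) (by positivity)
  refine this.trans ?_
  rw [mul_pow, pow_succ' _ m, ← mul_assoc]
  gcongr

/-- The structure we work with: every `A ∈ 𝒜` comes with an `(m+1)`-set `K A ⊆ A` of elements
whose deletion leads into `ℬ`. -/
structure PS (r m : ℕ) (K : Finset ℕ → Finset ℕ) (𝒜 ℬ : Finset (Finset ℕ)) : Prop where
  cardB : ∀ B ∈ ℬ, B.card = r - 1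
  subK : ∀ A ∈ 𝒜, K A ⊆ A
  cardK : ∀ A ∈ 𝒜, (K A).card = m + 1
  del : ∀ A ∈ 𝒜, ∀ x ∈ K A, A.erase x ∈ ℬ

/-- extensions of `B`. -/
def exts (K : Finset ℕ → Finset ℕ) (𝒜 : Finset (Finset ℕ)) (B : Finset ℕ) : Finset ℕ :=
  (𝒜.biUnion id).filter (fun x => x ∉ B ∧ insert x B ∈ 𝒜 ∧ x ∈ K (insert x B))

lemma mem_exts {K : Finset ℕ → Finset ℕ} {𝒜 : Finset (Finset ℕ)} {B : Finset ℕ} {x : ℕ} :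
    x ∈ exts K 𝒜 B ↔ x ∉ B ∧ insert x B ∈ 𝒜 ∧ x ∈ K (insert x B) := by
  unfold exts
  rw [Finset.mem_filter]
  constructor
  · exact fun h => h.2
  · intro h
    exact ⟨Finset.mem_biUnion.2 ⟨_, h.2.1, Finset.mem_insert_self _ _⟩, h⟩

/-- Cleaning: pass to a subpair with all degrees at least `d`. -/
lemma clean {r m : ℕ} {K : Finset ℕ → Finset ℕ} {𝒜 ℬ : Finset (Finset ℕ)} (h : PS r m K 𝒜 ℬ)
    (d : ℝ) : ∃ 𝒜' ℬ', 𝒜' ⊆ 𝒜 ∧ ℬ' ⊆ ℬ ∧ PS r m K 𝒜' ℬ' ∧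
      (∀ B ∈ ℬ', d ≤ (exts K 𝒜' B).card) ∧
      (𝒜.card : ℝ) - d * ℬ.card ≤ 𝒜'.card - d * ℬ'.card := by
  classical
  let F : Finset (Finset ℕ) → Finset (Finset ℕ) :=
    fun ℬ' => 𝒜.filter (fun A => ∀ x ∈ K A, A.erase x ∈ ℬ')
  obtain ⟨ℬ', hB', hmax⟩ := Finset.exists_max_image ℬ.powerset
    (fun ℬ' => ((F ℬ').card : ℝ) - d * ℬ'.card) ⟨ℬ, Finset.mem_powerset_self _⟩
  rw [Finset.mem_powerset] at hB'
  refine ⟨F ℬ', ℬ', Finset.filter_subset _ _, hB', ⟨fun B hB => h.cardB B (hB' hB),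
    fun A hA => h.subK A (Finset.mem_filter.1 hA).1,
    fun A hA => h.cardK A (Finset.mem_filter.1 hA).1,
    fun A hA => (Finset.mem_filter.1 hA).2⟩, ?_, ?_⟩
  · intro B hB
    have h1 := hmax (ℬ'.erase B) (Finset.mem_powerset.2 ((Finset.erase_subset _ _).trans hB'))
    have h2 : (F ℬ').card ≤ (F (ℬ'.erase B)).card + (exts K (F ℬ') B).card := by
      have : F ℬ' ⊆ F (ℬ'.erase B) ∪ (exts K (F ℬ') B).image (fun x => insert x B) := by
        intro A hA
        by_cases hc : A ∈ F (ℬ'.erase B)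
        · exact Finset.mem_union_left _ hc
        · apply Finset.mem_union_right
          have hA' := Finset.mem_filter.1 hA
          have : ∃ x ∈ K A, A.erase x = B := by
            by_contra hcon
            push Not at hcon
            exact hc (Finset.mem_filter.2 ⟨hA'.1, fun x hx =>
              Finset.mem_erase.2 ⟨hcon x hx, hA'.2 x hx⟩⟩)
          obtain ⟨x, hx, rfl⟩ := this
          have hxA := h.subK A hA'.1 hx
          refine Finset.mem_image.2 ⟨x, mem_exts.2 ?_, Finset.insert_erase hxA⟩
          rw [Finset.insert_erase hxA]
          exact ⟨Finset.notMem_erase _ _, hA, hx⟩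
      exact (Finset.card_le_card this).trans ((Finset.card_union_le _ _).trans
        (Nat.add_le_add_left Finset.card_image_le _))
    have h3 : ((ℬ'.erase B).card : ℝ) = ℬ'.card - 1 := by
      rw [Finset.card_erase_of_mem hB, Nat.cast_sub (Finset.card_pos.2 ⟨B, hB⟩)]; simp
    have h2' : ((F ℬ').card : ℝ) ≤ (F (ℬ'.erase B)).card + (exts K (F ℬ') B).card := by
      exact_mod_cast h2
    simp only [h3] at h1
    linarith
  · have h1 := hmax ℬ (Finset.mem_powerset_self _)
    have : F ℬ = 𝒜 := Finset.filter_true_of_mem (fun A hA => h.del A hA)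
    simp only [this] at h1
    exact h1

/-- Sets of `ℬ` at distance `j` from `B₀`. -/
def nb (ℬ : Finset (Finset ℕ)) (B₀ : Finset ℕ) (j : ℕ) : Finset (Finset ℕ) :=
  ℬ.filter (fun B => (B₀ \ B).card = j)

/-- One step further away from `B₀`. -/
def Stp (B₀ B B' : Finset ℕ) : Prop :=
  ∃ x ∈ B' \ B₀, ∃ y ∈ B₀ \ B', B = insert y (B'.erase x)

open Classical in
lemma step_up {r m : ℕ} {K : Finset ℕ → Finset ℕ} {𝒜 ℬ : Finset (Finset ℕ)} (h : PS r m K 𝒜 ℬ)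
    {B₀ B : Finset ℕ} {j : ℕ} (hB : B ∈ nb ℬ B₀ j) :
    ((exts K 𝒜 B).filter (fun x => ¬ K (insert x B) ⊆ insert x (B \ B₀))).card ≤
      ((nb ℬ B₀ (j + 1)).filter (fun B' => Stp B₀ B B')).card + j := by
  have hBm := (Finset.mem_filter.1 hB).1
  have hBj : (B₀ \ B).card = j := (Finset.mem_filter.1 hB).2
  set E := (exts K 𝒜 B).filter (fun x => ¬ K (insert x B) ⊆ insert x (B \ B₀)) with hE
  have key : ∀ x ∈ E, ∃ y, y ∈ K (insert x B) ∧ y ≠ x ∧ y ∈ B ∧ y ∈ B₀ := by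
    intro x hx
    have hx' := Finset.mem_filter.1 hx
    obtain ⟨y, hy1, hy2⟩ := Finset.not_subset.1 hx'.2
    have hxe := mem_exts.1 hx'.1
    rw [Finset.mem_insert, Finset.mem_sdiff] at hy2
    push Not at hy2
    have := h.subK _ hxe.2.1 hy1
    rw [Finset.mem_insert] at this
    have hyB := this.resolve_left hy2.1
    exact ⟨y, hy1, hy2.1, hyB, hy2.2 hyB⟩
  choose! Y hY using key
  have h1 : (E \ (B₀ \ B)).card ≤ ((nb ℬ B₀ (j + 1)).filter (fun B' => Stp B₀ B B')).card := by
    apply Finset.card_le_card_of_injOn (fun x => (insert x B).erase (Y x))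
    · intro x hx
      rw [Finset.mem_coe, Finset.mem_sdiff] at hx
      obtain ⟨hxE, hx0⟩ := hx
      have hxe := mem_exts.1 (Finset.mem_filter.1 hxE).1
      obtain ⟨y1, y2, y3, y4⟩ := hY x hxE
      have hx00 : x ∉ B₀ := fun hc => hx0 (Finset.mem_sdiff.2 ⟨hc, hxe.1⟩)
      rw [Finset.mem_coe, Finset.mem_filter]
      refine ⟨Finset.mem_filter.2 ⟨h.del _ hxe.2.1 _ y1, ?_⟩, ?_⟩
      · have : B₀ \ (insert x B).erase (Y x) = insert (Y x) (B₀ \ B) := by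
          ext z
          simp only [Finset.mem_sdiff, Finset.mem_erase, Finset.mem_insert]
          by_cases hz : z = Y x
          · subst hz; simp [y4]
          · by_cases hzx : z = x
            · subst hzx; simp [hx00, hz]
            · simp [hz, hzx]
        rw [this, Finset.card_insert_of_notMem (by simp [y3]), hBj]
      · refine ⟨x, ?_, Y x, ?_, ?_⟩
        · simp [hx00, y2.symm]
        · simp [y4]
        · ext z
          have := hxe.1
          simp only [Finset.mem_erase, Finset.mem_insert]
          by_cases hz : z = Y x
          · subst hz; simp [y3]
          · by_cases hzx : z = x
            · subst hzx; simp [this, hz]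
            · simp [hz, hzx]
    · intro x hx x' hx' heq
      rw [Finset.mem_coe, Finset.mem_sdiff] at hx hx'
      have hxe := mem_exts.1 (Finset.mem_filter.1 hx.1).1
      obtain ⟨y1, y2, y3, y4⟩ := hY x hx.1
      have heq' : (insert x B).erase (Y x) = (insert x' B).erase (Y x') := heq
      have : x ∈ (insert x' B).erase (Y x') := by
        rw [← heq']; simp [y2.symm]
      rw [Finset.mem_erase, Finset.mem_insert] at this
      exact this.2.resolve_right hxe.1
  have h2 : E.card ≤ (E \ (B₀ \ B)).card + (B₀ \ B).card := by
    have := Finset.le_card_sdiff (B₀ \ B) E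
    omega
  omega

open Classical in
lemma step_down {ℬ : Finset (Finset ℕ)} {r : ℕ} (hc : ∀ B ∈ ℬ, B.card = r - 1)
    {B₀ B' : Finset ℕ} (hB₀ : B₀ ∈ ℬ) {j : ℕ} (hB : B' ∈ nb ℬ B₀ (j + 1)) (𝒟 : Finset (Finset ℕ)) :
    (𝒟.filter (fun B => Stp B₀ B B')).card ≤ (j + 1) ^ 2 := by
  have hBm := (Finset.mem_filter.1 hB).1
  have hBj : (B₀ \ B').card = j + 1 := (Finset.mem_filter.1 hB).2
  have hBj' : (B' \ B₀).card = j + 1 := by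
    rw [← hBj]
    exact Finset.card_sdiff_comm (by rw [hc _ hBm, hc _ hB₀])
  have : 𝒟.filter (fun B => Stp B₀ B B') ⊆
      ((B' \ B₀) ×ˢ (B₀ \ B')).image (fun p => insert p.2 (B'.erase p.1)) := by
    intro B hB
    obtain ⟨x, hx, y, hy, rfl⟩ := (Finset.mem_filter.1 hB).2
    exact Finset.mem_image.2 ⟨(x, y), Finset.mem_product.2 ⟨hx, hy⟩, rfl⟩
  refine (Finset.card_le_card this).trans (Finset.card_image_le.trans ?_)
  rw [Finset.card_product, hBj', hBj, sq]

/-- Number of sets at distance `j`. -/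
lemma nb_lower {r m : ℕ} {K : Finset ℕ → Finset ℕ} {𝒜 ℬ : Finset (Finset ℕ)} (h : PS r m K 𝒜 ℬ)
    (d : ℝ) (hd : (m : ℝ) ≤ d) (hdeg : ∀ B ∈ ℬ, d ≤ (exts K 𝒜 B).card)
    {B₀ : Finset ℕ} (hB₀ : B₀ ∈ ℬ) : ∀ j, j ≤ m →
    ((d - m) / (m + 1) ^ 2) ^ j ≤ ((nb ℬ B₀ j).card : ℝ) := by
  classical
  intro j
  induction j with
  | zero =>
    intro _
    have : 0 < (nb ℬ B₀ 0).card := Finset.card_pos.2 ⟨B₀, Finset.mem_filter.2 ⟨hB₀, by simp⟩⟩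
    rw [pow_zero]
    exact_mod_cast this
  | succ j ih =>
    intro hj
    have ih := ih (by omega)
    have h1 : ∀ B ∈ nb ℬ B₀ j, (d - m) ≤
        (((nb ℬ B₀ (j + 1)).filter (fun B' => Stp B₀ B B')).card : ℝ) := by
      intro B hB
      have h2 := step_up h hB
      have hBm := (Finset.mem_filter.1 hB).1
      have hBj : (B₀ \ B).card = j := (Finset.mem_filter.1 hB).2
      rw [Finset.filter_true_of_mem] at h2
      · have := hdeg B hBm
        have h2' : ((exts K 𝒜 B).card : ℝ) ≤
          (((nb ℬ B₀ (j + 1)).filter (fun B' => Stp B₀ B B')).card : ℝ) + j := by exact_mod_cast h2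
        have : (j : ℝ) ≤ m := by exact_mod_cast (by omega : j ≤ m)
        linarith
      · intro x hx hsub
        have hxe := mem_exts.1 hx
        have h3 := (Finset.card_le_card hsub).trans (Finset.card_insert_le _ _)
        rw [h.cardK _ hxe.2.1] at h3
        have : (B \ B₀).card = j := by
          rw [← hBj]
          exact Finset.card_sdiff_comm (by rw [h.cardB _ hBm, h.cardB _ hB₀])
        omega
    have h2 := Finset.sum_card_bipartiteAbove_eq_sum_card_bipartiteBelow (s := nb ℬ B₀ j)
      (t := nb ℬ B₀ (j + 1)) (fun B B' => Stp B₀ B B')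
    unfold Finset.bipartiteAbove Finset.bipartiteBelow at h2
    have h3 : ((nb ℬ B₀ j).card : ℝ) * (d - m) ≤
        ∑ B ∈ nb ℬ B₀ j, (((nb ℬ B₀ (j + 1)).filter (fun B' => Stp B₀ B B')).card : ℝ) := by
      have := Finset.card_nsmul_le_sum _ _ _ h1
      rwa [nsmul_eq_mul] at this
    have h4 : ∑ B' ∈ nb ℬ B₀ (j + 1), ((nb ℬ B₀ j).filter (fun B => Stp B₀ B B')).card ≤
        (nb ℬ B₀ (j + 1)).card * (j + 1) ^ 2 := by
      have := Finset.sum_le_card_nsmul (nb ℬ B₀ (j + 1))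
        (fun B' => ((nb ℬ B₀ j).filter (fun B => Stp B₀ B B')).card) ((j + 1) ^ 2)
        (fun B' hB' => step_down h.cardB hB₀ hB' _)
      simpa using this
    have h5 : ((nb ℬ B₀ j).card : ℝ) * (d - m) ≤ (nb ℬ B₀ (j + 1)).card * ((j : ℝ) + 1) ^ 2 := by
      refine h3.trans ?_
      have h6 := h2.le.trans h4
      exact_mod_cast h6
    have h7 : ((nb ℬ B₀ j).card : ℝ) * (d - m) ≤ (nb ℬ B₀ (j + 1)).card * ((m : ℝ) + 1) ^ 2 := by
      refine h5.trans ?_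
      have : (j : ℝ) ≤ m := by exact_mod_cast (by omega : j ≤ m)
      gcongr
    rw [pow_succ, ← mul_div_assoc, div_le_iff₀ (by positivity)]
    refine le_trans ?_ h7
    have : 0 ≤ d - m := by linarith
    gcongr

lemma bad_sum {r m : ℕ} {K : Finset ℕ → Finset ℕ} {𝒜 ℬ : Finset (Finset ℕ)} (h : PS r m K 𝒜 ℬ)
    (hr : m + 1 ≤ r) (N : ℝ) (hN : ∀ B ∈ ℬ, N ≤ (nb ℬ B m).card) :
    ∃ T : Finset ℕ → Finset ℕ, (∀ B ∈ ℬ, T B ⊆ B ∧ (T B).card = m) ∧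
      N * ∑ B ∈ ℬ, (((exts K 𝒜 B).filter (fun x => ¬ K (insert x B) ⊆ insert x (T B))).card : ℝ) ≤
        (((m : ℝ) + 1) ^ 2 + m) * (ℬ.card : ℝ) ^ 2 := by
  classical
  have hex : ∀ B ∈ ℬ, ∃ T ∈ Finset.powersetCard m B, ∀ T' ∈ Finset.powersetCard m B,
      ((exts K 𝒜 B).filter (fun x => ¬ K (insert x B) ⊆ insert x T)).card ≤
      ((exts K 𝒜 B).filter (fun x => ¬ K (insert x B) ⊆ insert x T')).card := by
    intro B hB
    apply Finset.exists_min_image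
    apply Finset.powersetCard_nonempty.2
    rw [h.cardB B hB]; omega
  choose! T hT hTmin using hex
  refine ⟨T, fun B hB => Finset.mem_powersetCard.1 (hT B hB), ?_⟩
  set g : Finset ℕ → Finset ℕ → ℝ := fun B₀ B =>
    (((nb ℬ B₀ (m + 1)).filter (fun B' => Stp B₀ B B')).card : ℝ) + m with hg
  have symm : ∀ B ∈ ℬ, ∀ B₀ ∈ ℬ, (B \ B₀).card = (B₀ \ B).card := fun B hB B₀ hB₀ =>
    Finset.card_sdiff_comm (by rw [h.cardB _ hB, h.cardB _ hB₀])
  have h1 : ∀ B ∈ ℬ,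
      N * (((exts K 𝒜 B).filter (fun x => ¬ K (insert x B) ⊆ insert x (T B))).card : ℝ) ≤
      ∑ B₀ ∈ nb ℬ B m, g B₀ B := by
    intro B hB
    have h2 : ∀ B₀ ∈ nb ℬ B m,
        (((exts K 𝒜 B).filter (fun x => ¬ K (insert x B) ⊆ insert x (T B))).card : ℝ) ≤ g B₀ B := by
      intro B₀ hB₀
      obtain ⟨hB₀m, hc⟩ := Finset.mem_filter.1 hB₀
      have h3 := hTmin B hB (B \ B₀) (Finset.mem_powersetCard.2 ⟨Finset.sdiff_subset, hc⟩)
      have h4 := step_up h (B₀ := B₀) (B := B) (j := m)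
        (Finset.mem_filter.2 ⟨hB, by rw [← symm B hB B₀ hB₀m]; exact hc⟩)
      have h5 := h3.trans h4
      simp only [hg]
      exact_mod_cast h5
    have h3 := Finset.card_nsmul_le_sum _ _ _ h2
    rw [nsmul_eq_mul] at h3
    refine le_trans ?_ h3
    gcongr
    exact hN B hB
  rw [Finset.mul_sum]
  refine (Finset.sum_le_sum h1).trans ?_
  rw [Finset.sum_comm' (t' := ℬ) (s' := fun B₀ => nb ℬ B₀ m) (by
    intro B B₀
    unfold nb
    simp only [Finset.mem_filter]
    constructor
    · rintro ⟨h1, h2, h3⟩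
      exact ⟨⟨h1, by rw [← symm B h1 B₀ h2]; exact h3⟩, h2⟩
    · rintro ⟨⟨h1, h3⟩, h2⟩
      exact ⟨h1, h2, by rw [symm B h1 B₀ h2]; exact h3⟩)]
  have h5 : ∀ B₀ ∈ ℬ, ∑ B ∈ nb ℬ B₀ m, g B₀ B ≤ (((m : ℝ) + 1) ^ 2 + m) * ℬ.card := by
    intro B₀ hB₀
    have hle : ∀ j, ((nb ℬ B₀ j).card : ℝ) ≤ ℬ.card := fun j => by
      exact_mod_cast Finset.card_le_card (Finset.filter_subset _ _)
    rw [hg, Finset.sum_add_distrib, Finset.sum_const, nsmul_eq_mul]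
    have h2 := Finset.sum_card_bipartiteAbove_eq_sum_card_bipartiteBelow (s := nb ℬ B₀ m)
      (t := nb ℬ B₀ (m + 1)) (fun B B' => Stp B₀ B B')
    unfold Finset.bipartiteAbove Finset.bipartiteBelow at h2
    have h4 : ∑ B' ∈ nb ℬ B₀ (m + 1), ((nb ℬ B₀ m).filter (fun B => Stp B₀ B B')).card ≤
        (nb ℬ B₀ (m + 1)).card * (m + 1) ^ 2 := by
      have := Finset.sum_le_card_nsmul (nb ℬ B₀ (m + 1))
        (fun B' => ((nb ℬ B₀ m).filter (fun B => Stp B₀ B B')).card) ((m + 1) ^ 2)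
        (fun B' hB' => step_down h.cardB hB₀ hB' _)
      simpa using this
    have h6 : ∑ B ∈ nb ℬ B₀ m, (((nb ℬ B₀ (m + 1)).filter (fun B' => Stp B₀ B B')).card : ℝ) ≤
        (nb ℬ B₀ (m + 1)).card * ((m : ℝ) + 1) ^ 2 := by
      exact_mod_cast h2.le.trans h4
    calc _ ≤ (ℬ.card : ℝ) * ((m : ℝ) + 1) ^ 2 + ℬ.card * m := by
          refine add_le_add (h6.trans ?_) ?_
          · exact mul_le_mul_of_nonneg_right (hle _) (by positivity)
          · exact mul_le_mul_of_nonneg_right (hle _) (by positivity)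
      _ = _ := by ring
  have h6 := Finset.sum_le_card_nsmul _ _ _ h5
  rw [nsmul_eq_mul] at h6
  refine h6.trans (le_of_eq (by ring))

lemma good_bound {r m : ℕ} {K : Finset ℕ → Finset ℕ} {𝒜 ℬ : Finset (Finset ℕ)} (h : PS r m K 𝒜 ℬ)
    (hr : m + 1 ≤ r) (hm : 1 ≤ m) (hA : ∀ A ∈ 𝒜, A.card = r) (T : Finset ℕ → Finset ℕ)
    (hT : ∀ B ∈ ℬ, T B ⊆ B ∧ (T B).card = m)
    (hgood : ∀ A ∈ 𝒜, ∀ x ∈ K A, K A ⊆ insert x (T (A.erase x)))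
    (M θ : ℝ) (hM : ∀ S : Finset ℕ, S.card = r - (m + 1) →
      ((ℬ.filter (fun B => S ⊆ B)).card : ℝ) ≤ M)
    (hθ0 : 0 ≤ θ) (hθ : (m.factorial : ℝ) * M ≤ θ ^ m) :
    ((m : ℝ) + 1) * 𝒜.card ≤ θ * ℬ.card := by
  classical
  have hTe : ∀ A ∈ 𝒜, ∀ x ∈ K A, T (A.erase x) = (K A).erase x := by
    intro A hA' x hx
    have h1 := hT _ (h.del A hA' x hx)
    have h2 : (K A).erase x ⊆ T (A.erase x) := by
      intro z hz
      rw [Finset.mem_erase] at hz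
      have := hgood A hA' x hx hz.2
      rw [Finset.mem_insert] at this
      exact this.resolve_left hz.1
    symm
    apply Finset.eq_of_subset_of_card_le h2
    rw [h1.2, Finset.card_erase_of_mem hx, h.cardK A hA']; omega
  set 𝒯 : Finset (Finset ℕ) := 𝒜.image (fun A => A \ K A) with h𝒯
  have hfib : ∀ S ∈ 𝒯, ((m : ℝ) + 1) * ((𝒜.filter (fun A => A \ K A = S)).card : ℝ) ≤
      θ * ((ℬ.filter (fun B => B \ T B = S)).card : ℝ) := by
    intro S hS
    obtain ⟨A₀, hA₀, rfl⟩ := Finset.mem_image.1 hS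
    set S := A₀ \ K A₀ with hSdef
    have hScard : S.card = r - (m + 1) := by
      rw [hSdef, Finset.card_sdiff_of_subset (h.subK _ hA₀), hA _ hA₀, h.cardK _ hA₀]
    have hBS : ∀ B ∈ ℬ.filter (fun B => B \ T B = S), B \ S = T B := by
      intro B hB
      obtain ⟨h1, h2⟩ := Finset.mem_filter.1 hB
      rw [← h2, Finset.sdiff_sdiff_eq_self (hT B h1).1]
    have h1 : ((𝒜.filter (fun A => A \ K A = S)).image K).card =
        (𝒜.filter (fun A => A \ K A = S)).card := by
      apply Finset.card_image_of_injOn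
      intro A hA1 A' hA2 heq
      rw [Finset.mem_coe, Finset.mem_filter] at hA1 hA2
      rw [← Finset.sdiff_union_of_subset (h.subK A hA1.1),
        ← Finset.sdiff_union_of_subset (h.subK A' hA2.1), hA1.2, hA2.2, heq]
    have hcard : (((ℬ.filter (fun B => B \ T B = S)).image (fun B => B \ S)).card : ℝ) ≤
        (ℬ.filter (fun B => B \ T B = S)).card := by
      exact_mod_cast Finset.card_image_le
    have hcardM : ((ℬ.filter (fun B => B \ T B = S)).card : ℝ) ≤ M := by
      refine le_trans ?_ (hM S hScard)
      norm_cast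
      apply Finset.card_le_card
      intro B hB
      obtain ⟨h1, h2⟩ := Finset.mem_filter.1 hB
      exact Finset.mem_filter.2 ⟨h1, by rw [← h2]; exact Finset.sdiff_subset⟩
    have h2 := kk_lin m hm ((𝒜.filter (fun A => A \ K A = S)).image K)
      ((ℬ.filter (fun B => B \ T B = S)).image (fun B => B \ S))
      (by
        intro G hG
        obtain ⟨A, hA1, rfl⟩ := Finset.mem_image.1 hG
        exact h.cardK A (Finset.mem_filter.1 hA1).1)
      (by
        intro G hG
        obtain ⟨B, hB1, rfl⟩ := Finset.mem_image.1 hG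
        rw [hBS B hB1]
        exact (hT B (Finset.mem_filter.1 hB1).1).2)
      (by
        intro G hG x hx
        obtain ⟨A, hA1, rfl⟩ := Finset.mem_image.1 hG
        obtain ⟨hA2, hA3⟩ := Finset.mem_filter.1 hA1
        have hmem : A.erase x ∈ ℬ.filter (fun B => B \ T B = S) := by
          refine Finset.mem_filter.2 ⟨h.del A hA2 x hx, ?_⟩
          rw [hTe A hA2 x hx, ← hA3]
          ext z
          simp only [Finset.mem_sdiff, Finset.mem_erase]
          by_cases hz : z = x
          · subst hz; simp [hx]
          · simp [hz]
        refine Finset.mem_image.2 ⟨A.erase x, hmem, ?_⟩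
        rw [hBS _ hmem, hTe A hA2 x hx])
      θ hθ0 (le_trans (by gcongr; exact hcard.trans hcardM) hθ)
    rw [h1] at h2
    exact h2.trans (by gcongr)
  have hs := Finset.sum_le_sum hfib
  rw [← Finset.mul_sum, ← Finset.mul_sum] at hs
  have e1 : (𝒜.card : ℝ) = ∑ S ∈ 𝒯, ((𝒜.filter (fun A => A \ K A = S)).card : ℝ) := by
    exact_mod_cast Finset.card_eq_sum_card_image (fun A => A \ K A) 𝒜
  have e2 : ∑ S ∈ 𝒯, ((ℬ.filter (fun B => B \ T B = S)).card : ℝ) ≤ ℬ.card := by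
    have h1 := Finset.sum_card_fiberwise_eq_card_filter ℬ 𝒯 (fun B => B \ T B)
    have h2 := h1.le.trans (Finset.card_le_card (Finset.filter_subset _ _))
    exact_mod_cast h2
  rw [e1]
  exact hs.trans (by gcongr)

lemma total_bound {r m : ℕ} {K : Finset ℕ → Finset ℕ} {𝒜 ℬ : Finset (Finset ℕ)} (h : PS r m K 𝒜 ℬ)
    (hr : m + 1 ≤ r) (hm : 1 ≤ m) (hA : ∀ A ∈ 𝒜, A.card = r)
    (M θ d : ℝ) (hM : ∀ S : Finset ℕ, S.card = r - (m + 1) →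
      ((ℬ.filter (fun B => S ⊆ B)).card : ℝ) ≤ M)
    (hθ0 : 0 ≤ θ) (hθ : (m.factorial : ℝ) * M ≤ θ ^ m) (hd : (m : ℝ) < d) :
    (𝒜.card : ℝ) ≤ d * ℬ.card + θ * ℬ.card / (m + 1) +
      (((m : ℝ) + 1) ^ 2 + m) * (ℬ.card : ℝ) ^ 2 / ((d - m) / (m + 1) ^ 2) ^ m := by
  classical
  obtain ⟨𝒜', ℬ', hA', hB', h', hdeg, hcl⟩ := clean h d
  have hNpos : 0 < ((d - m) / ((m : ℝ) + 1) ^ 2) ^ m := by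
    have : 0 < d - m := by linarith
    positivity
  obtain ⟨T, hT, hbad⟩ := bad_sum h' hr (((d - m) / ((m : ℝ) + 1) ^ 2) ^ m)
    (fun B hB => nb_lower h' d hd.le hdeg hB m le_rfl)
  set 𝒢 := 𝒜'.filter (fun A => ∀ x ∈ K A, K A ⊆ insert x (T (A.erase x))) with h𝒢
  have hBc : (ℬ'.card : ℝ) ≤ ℬ.card := by exact_mod_cast Finset.card_le_card hB'
  have hG : ((m : ℝ) + 1) * 𝒢.card ≤ θ * ℬ'.card := by
    apply good_bound (K := K) (r := r) (T := T) (M := M) (θ := θ) ⟨h'.cardB,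
      fun A hA => h'.subK A (Finset.mem_filter.1 hA).1,
      fun A hA => h'.cardK A (Finset.mem_filter.1 hA).1,
      fun A hA => h'.del A (Finset.mem_filter.1 hA).1⟩ hr hm
      (fun A hA1 => hA A (hA' (Finset.mem_filter.1 hA1).1)) hT
      (hgood := fun A hA => (Finset.mem_filter.1 hA).2) (hM := ?_) (hθ0 := hθ0) (hθ := hθ)
    intro S hS
    refine le_trans ?_ (hM S hS)
    exact_mod_cast Finset.card_le_card (Finset.filter_subset_filter _ hB')
  have hsplit : 𝒜'.card ≤ 𝒢.card +
      ∑ B ∈ ℬ', ((exts K 𝒜' B).filter (fun x => ¬ K (insert x B) ⊆ insert x (T B))).card := by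
    have : 𝒜' ⊆ 𝒢 ∪ ℬ'.biUnion (fun B =>
        ((exts K 𝒜' B).filter (fun x => ¬ K (insert x B) ⊆ insert x (T B))).image
          (fun x => insert x B)) := by
      intro A hA
      by_cases hc : A ∈ 𝒢
      · exact Finset.mem_union_left _ hc
      · apply Finset.mem_union_right
        have : ∃ x ∈ K A, ¬ K A ⊆ insert x (T (A.erase x)) := by
          by_contra hcon
          push Not at hcon
          exact hc (Finset.mem_filter.2 ⟨hA, hcon⟩)
        obtain ⟨x, hx, hx2⟩ := this
        have hxA := Finset.insert_erase (h'.subK A hA hx)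
        refine Finset.mem_biUnion.2 ⟨A.erase x, h'.del A hA x hx, Finset.mem_image.2 ⟨x,
          Finset.mem_filter.2 ⟨mem_exts.2 ?_, ?_⟩, hxA⟩⟩
        · rw [hxA]; exact ⟨Finset.notMem_erase _ _, hA, hx⟩
        · rw [hxA]; exact hx2
    refine (Finset.card_le_card this).trans ((Finset.card_union_le _ _).trans ?_)
    refine Nat.add_le_add_left (Finset.card_biUnion_le.trans ?_) _
    exact Finset.sum_le_sum (fun B _ => Finset.card_image_le)
  have hsplit' : (𝒜'.card : ℝ) ≤ 𝒢.card + ∑ B ∈ ℬ',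
      (((exts K 𝒜' B).filter (fun x => ¬ K (insert x B) ⊆ insert x (T B))).card : ℝ) := by
    exact_mod_cast hsplit
  have hbad2 : ∑ B ∈ ℬ',
      (((exts K 𝒜' B).filter (fun x => ¬ K (insert x B) ⊆ insert x (T B))).card : ℝ) ≤
      (((m : ℝ) + 1) ^ 2 + m) * (ℬ.card : ℝ) ^ 2 / ((d - m) / (m + 1) ^ 2) ^ m := by
    rw [le_div_iff₀ hNpos, mul_comm]
    exact hbad.trans (by gcongr)
  have hG2 : (𝒢.card : ℝ) ≤ θ * ℬ.card / (m + 1) := by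
    rw [le_div_iff₀ (by positivity), mul_comm]
    exact hG.trans (by gcongr)
  have hd0 : 0 ≤ d * ℬ'.card := by
    have : (0 : ℝ) ≤ m := by positivity
    have : 0 ≤ d := by linarith
    positivity
  linarith

lemma exists_K {r k : ℕ} {𝒜 ℬ : Finset (Finset ℕ)} (hk : 1 ≤ k) (hr : k ≤ r)
    (h : ValidPair r k 𝒜 ℬ) :
    ∃ K : Finset ℕ → Finset ℕ, ∀ A ∈ 𝒜, K A ⊆ A ∧ (K A).card = k ∧ ∀ x ∈ K A, A.erase x ∈ ℬ := by
  classical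
  have : ∀ A ∈ 𝒜, ∃ D : Finset ℕ, D ⊆ A ∧ D.card = k ∧ ∀ x ∈ D, A.erase x ∈ ℬ := by
    intro A hA
    have h1 := h.2.2 A hA
    have h2 : ℬ.filter (fun B => B ⊆ A) ⊆
        (A.filter (fun x => A.erase x ∈ ℬ)).image (fun x => A.erase x) := by
      intro B hB
      obtain ⟨hB1, hB2⟩ := Finset.mem_filter.1 hB
      have hc : (A \ B).card = 1 := by
        rw [Finset.card_sdiff_of_subset hB2, h.1 A hA, h.2.1 B hB1]; omega
      obtain ⟨x, hx⟩ := Finset.card_eq_one.1 hc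
      have hxA : x ∈ A := (Finset.mem_sdiff.1 (hx ▸ Finset.mem_singleton_self x)).1
      have hE : A.erase x = B := by
        rw [← Finset.sdiff_singleton_eq_erase, ← hx, Finset.sdiff_sdiff_eq_self hB2]
      exact Finset.mem_image.2 ⟨x, Finset.mem_filter.2 ⟨hxA, by rw [hE]; exact hB1⟩, hE⟩
    have h3 : k ≤ (A.filter (fun x => A.erase x ∈ ℬ)).card :=
      h1.trans ((Finset.card_le_card h2).trans Finset.card_image_le)
    obtain ⟨D, hD1, hD2⟩ := Finset.exists_subset_card_eq h3
    exact ⟨D, hD1.trans (Finset.filter_subset _ _), hD2,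
      fun x hx => (Finset.mem_filter.1 (hD1 hx)).2⟩
  choose! K hK using this
  exact ⟨K, hK⟩

theorem stmt_13 (k : ℕ) (hk : 2 ≤ k) (C ε : ℝ) (hC : 0 < C) (hε : 0 < ε) :
    ∃ b₀ : ℕ, ∀ r : ℕ, k ≤ r → ∀ 𝒜 ℬ : Finset (Finset ℕ),
      ValidPair r k 𝒜 ℬ → b₀ ≤ ℬ.card →
      (ℬ.card : ℝ) ^ ((k : ℝ) / ((k : ℝ) - 1)) *
            (((k - 1).factorial : ℝ)) ^ (1 / ((k : ℝ) - 1)) / k -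
          C * ℬ.card * Real.log ℬ.card ≤ (𝒜.card : ℝ) →
      ∃ S : Finset ℕ, S.card = r - k ∧
        (1 - ε) * ℬ.card ≤ ((ℬ.filter (fun B => S ⊆ B)).card : ℝ) := by
  classical
  rcases le_or_gt 1 ε with hε1 | hε1
  · refine ⟨0, fun r _ 𝒜 ℬ _ _ _ => ⟨Finset.range (r - k), Finset.card_range _, ?_⟩⟩
    refine le_trans (mul_nonpos_of_nonpos_of_nonneg (by linarith) (by positivity)) (by positivity)
  obtain ⟨m, rfl⟩ : ∃ m, k = m + 1 := ⟨k - 1, by omega⟩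
  have hm : 1 ≤ m := by omega
  have hmR : (1 : ℝ) ≤ m := by exact_mod_cast hm
  have hm0 : m ≠ 0 := by omega
  simp only [Nat.add_sub_cancel]
  push_cast
  simp only [add_sub_cancel_right]
  set q : ℝ := (m.factorial : ℝ) ^ (1 / (m : ℝ)) with hq
  have hqpos : 0 < q := by
    have : (0 : ℝ) < m.factorial := by exact_mod_cast m.factorial_pos
    positivity
  have hqm : q ^ m = m.factorial := by
    rw [hq, one_div, Real.rpow_inv_natCast_pow (by positivity) hm0]
  set ρ : ℝ := (1 - ε) ^ (1 / (m : ℝ)) with hρ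
  have hρpos : 0 ≤ ρ := Real.rpow_nonneg (by linarith) _
  have hρm : ρ ^ m = 1 - ε := by
    rw [hρ, one_div, Real.rpow_inv_natCast_pow (by linarith) hm0]
  have hρ1 : ρ < 1 := by
    by_contra hc
    have := one_le_pow₀ (not_lt.1 hc) (n := m)
    linarith
  set c : ℝ := q / (m + 1) with hc
  have hcpos : 0 < c := by positivity
  set γ : ℝ := c * (1 - ρ) / 2 with hγ
  have hγpos : 0 < γ := by
    have : 0 < 1 - ρ := by linarith
    positivity
  set E : ℝ := ((m : ℝ) + 1) ^ 2 + m with hE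
  have hEpos : 0 < E := by positivity
  set δ : ℝ := (γ / (2 * ((m : ℝ) + 1) ^ 2)) ^ m with hδ
  have hδpos : 0 < δ := by positivity
  have hpos : (0 : ℝ) < 1 / (m : ℝ) := by positivity
  have ev1 : ∀ᶠ x : ℝ in Filter.atTop, C * Real.log x ≤ γ / 2 * x ^ (1 / (m : ℝ)) := by
    have := (isLittleO_log_rpow_atTop hpos).def (c := γ / (2 * C)) (by positivity)
    filter_upwards [this, Filter.eventually_gt_atTop 0] with x hx hx0
    rw [Real.norm_eq_abs, Real.norm_eq_abs, abs_of_nonneg (Real.rpow_nonneg hx0.le _)] at hx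
    have h1 := (le_abs_self _).trans hx
    calc C * Real.log x ≤ C * (γ / (2 * C) * x ^ (1 / (m : ℝ))) := by gcongr
      _ = _ := by field_simp
  have ev2 : ∀ᶠ x : ℝ in Filter.atTop,
      2 * E / (δ * γ) + 2 * m / γ + 1 < x ^ (1 / (m : ℝ)) :=
    (tendsto_rpow_atTop hpos).eventually_gt_atTop _
  obtain ⟨b₀, hb₀⟩ := Filter.eventually_atTop.1
    (tendsto_natCast_atTop_atTop (R := ℝ) |>.eventually
      (ev1.and (ev2.and (Filter.eventually_gt_atTop 0))))
  refine ⟨b₀, fun r hr 𝒜 ℬ hv hb hlow => ?_⟩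
  obtain ⟨e1, e2, hbpos⟩ := hb₀ _ hb
  by_contra hcon
  push Not at hcon
  obtain ⟨K, hK⟩ := exists_K (by omega) hr hv
  have hPS : PS r m K 𝒜 ℬ := ⟨hv.2.1, fun A hA => (hK A hA).1, fun A hA => (hK A hA).2.1,
    fun A hA => (hK A hA).2.2⟩
  set b : ℝ := (ℬ.card : ℝ) with hbdef
  set t : ℝ := b ^ (1 / (m : ℝ)) with ht
  have htm : t ^ m = b := by
    rw [ht, one_div, Real.rpow_inv_natCast_pow hbpos.le hm0]
  have hbt : b ^ (((m : ℝ) + 1) / m) = b * t := by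
    rw [ht, add_div, div_self (by positivity), Real.rpow_add hbpos, Real.rpow_one]
  have hx1 : 0 < 2 * E / (δ * γ) := by positivity
  have hx2 : 0 < 2 * (m : ℝ) / γ := by positivity
  have htpos : 0 < t := by linarith
  have ht2 : 2 * (m : ℝ) < γ * t := by
    have : 2 * (m : ℝ) / γ < t := by linarith
    rw [div_lt_iff₀ hγpos] at this
    linarith
  have ht1 : E / δ < γ / 2 * t := by
    have : 2 * E / (δ * γ) < t := by linarith
    rw [div_lt_iff₀ (by positivity)] at this
    rw [div_lt_iff₀ hδpos]
    linarith
  have hmain := total_bound hPS hr hm hv.1 ((1 - ε) * b) (q * ρ * t) (γ * t)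
    (fun S hS => (hcon S hS).le) (by positivity)
    (by rw [mul_pow, mul_pow, hqm, hρm, htm, mul_assoc]) (by linarith)
  rw [← hbdef, ← hE] at hmain
  have hden : δ * b ≤ ((γ * t - m) / ((m : ℝ) + 1) ^ 2) ^ m := by
    rw [hδ, ← htm, ← mul_pow]
    apply pow_le_pow_left₀ (by positivity)
    rw [le_div_iff₀ (by positivity)]
    have : γ / (2 * ((m : ℝ) + 1) ^ 2) * t * ((m : ℝ) + 1) ^ 2 = γ * t / 2 := by
      field_simp
    rw [this]
    linarith
  have h3 : E * b ^ 2 / ((γ * t - m) / ((m : ℝ) + 1) ^ 2) ^ m ≤ E / δ * b := by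
    calc _ ≤ E * b ^ 2 / (δ * b) := by gcongr
      _ = _ := by field_simp
  have h4 : q * ρ * t * b / (m + 1) = c * ρ * t * b := by rw [hc]; ring
  have h5 : b ^ (((m : ℝ) + 1) / m) * q / (m + 1) = c * t * b := by rw [hbt, hc]; ring
  rw [h5] at hlow
  rw [h4] at hmain
  have h6 : c * t * b - C * b * Real.log b ≤ γ * t * b + c * ρ * t * b + E / δ * b := by linarith
  have h7 : (c * t - C * Real.log b) * b ≤ (γ * t + c * ρ * t + E / δ) * b := by linarith
  have h8 := le_of_mul_le_mul_right h7 hbpos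
  have h9 : c * t - c * ρ * t = 2 * (γ * t) := by rw [hγ]; ring
  linarith
end
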